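/- There exist constants C > 0 and 0 < c ≤ 1 such that the following holds for all n, d and λ > 0. If G is an (n,d,λ)-graph with d/λ ≥ C·(log n)^3, then G contains a spanning nearly-balanced subdivision of the complete graph K_t for every integer t with 2 ≤ t ≤ min{cd, c·√(n/(log n)^3)}. -/

import Mathlib

open SimpleGraph

/-- `G` is an `(n,d,λ)`-graph: `n` vertices, `d`-regular, and all adjacency-matrix
eigenvalues except the largest one `d` are at most `λ` in absolute value. -/
def IsNDLGraph (n d : ℕ) (lam : ℝ) {V : Type*} [Fintype V] [DecidableEq V]
    (G : SimpleGraph V) [DecidableRel G.Adj] : Prop :=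
  Fintype.card V = n ∧ G.IsRegularOfDegree d ∧
    ∀ hA : (G.adjMatrix ℝ).IsHermitian,
      ∃ i₀ : V, hA.eigenvalues i₀ = (d : ℝ) ∧
        ∀ i : V, i ≠ i₀ → |hA.eigenvalues i| ≤ lam

/-- `G` contains a spanning nearly-balanced subdivision of the complete graph `K_t`:
there are `t` (distinct) branch vertices, pairwise internally disjoint paths
joining every pair of branch vertices, every vertex of `G` lies on one of these
paths, and there is a positive integer `ℓ` such that every branching path has
length between `ℓ - 1` and `ℓ + 1`. -/
def HasSpanningNearlyBalancedKSubdivision {V : Type*} (G : SimpleGraph V) (t : ℕ) : Prop :=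
  ∃ (b : Fin t ↪ V) (P : ∀ i j : Fin t, i < j → G.Walk (b i) (b j)),
    (∀ i j (h : i < j), (P i j h).IsPath) ∧
    (∀ i j (h : i < j) (k : Fin t), k ≠ i → k ≠ j → b k ∉ (P i j h).support) ∧
    (∀ i j (h : i < j) (i' j' : Fin t) (h' : i' < j'), ¬(i = i' ∧ j = j') →
      ∀ v : V, v ∈ (P i j h).support → v ∈ (P i' j' h').support →
        ∃ k : Fin t, v = b k) ∧
    (∀ v : V, ∃ (i j : Fin t) (h : i < j), v ∈ (P i j h).support) ∧
    (∃ ℓ : ℕ, 1 ≤ ℓ ∧ ∀ i j (h : i < j),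
      ℓ - 1 ≤ (P i j h).length ∧ (P i j h).length ≤ ℓ + 1)

/-- Edge counts between vertex sets deviate from density `p` by at most `lam * √(|S||T|)`. -/
def Jumbled {V : Type*} (G : SimpleGraph V) [DecidableRel G.Adj] (p lam : ℝ) : Prop :=
  ∀ S T : Finset V,
    |∑ u ∈ S, ((T.filter (G.Adj u)).card : ℝ) - p * S.card * T.card| ≤
      lam * √(S.card * T.card)

section Mixing

variable {V : Type*} [Fintype V] [DecidableEq V]

lemma dotProduct_eq_sum_eigenvectorBasis {A : Matrix V V ℝ} (hA : A.IsHermitian) (x y : V → ℝ) :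
    ∑ i, (x ⬝ᵥ (hA.eigenvectorBasis i).ofLp) * (y ⬝ᵥ (hA.eigenvectorBasis i).ofLp) = x ⬝ᵥ y := by
  have h := hA.eigenvectorBasis.sum_inner_mul_inner (WithLp.toLp 2 x) (WithLp.toLp 2 y)
  simp only [EuclideanSpace.inner_eq_star_dotProduct, star_trivial] at h
  rw [dotProduct_comm x y, ← h]
  refine Finset.sum_congr rfl fun i _ => ?_
  rw [dotProduct_comm x]

lemma dotProduct_mulVec_eq_sum_eigenvalues {A : Matrix V V ℝ} (hA : A.IsHermitian) (x y : V → ℝ) :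
    x ⬝ᵥ A.mulVec y = ∑ i, hA.eigenvalues i *
      ((x ⬝ᵥ (hA.eigenvectorBasis i).ofLp) * (y ⬝ᵥ (hA.eigenvectorBasis i).ofLp)) := by
  rw [← dotProduct_eq_sum_eigenvectorBasis hA]
  refine Finset.sum_congr rfl fun i _ => ?_
  have h : A.mulVec y ⬝ᵥ (hA.eigenvectorBasis i).ofLp =
      hA.eigenvalues i * (y ⬝ᵥ (hA.eigenvectorBasis i).ofLp) := by
    have hT : A.transpose = A := by simpa using hA.eq
    rw [dotProduct_comm, Matrix.dotProduct_mulVec, ← Matrix.mulVec_transpose, hT,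
      hA.mulVec_eigenvectorBasis, smul_dotProduct, smul_eq_mul, dotProduct_comm]
  rw [h]; ring

/-- The expander mixing lemma. -/
theorem IsNDLGraph.jumbled {n d : ℕ} {lam : ℝ} {G : SimpleGraph V} [DecidableRel G.Adj]
    (hG : IsNDLGraph n d lam G) (hlam : lam < d) (hlam0 : 0 < lam) :
    Jumbled G ((d : ℝ) / n) lam := by
  obtain ⟨hn, hreg, hspec⟩ := hG
  have hA : (G.adjMatrix ℝ).IsHermitian := by
    simp [Matrix.IsHermitian]
  obtain ⟨i₀, hi₀, hlt⟩ := hspec hA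
  intro S T
  set f : V → V → ℝ := fun i => (hA.eigenvectorBasis i).ofLp with hf
  set one : V → ℝ := fun _ => 1 with hone
  set x : V → ℝ := fun v => if v ∈ S then 1 else 0 with hx
  set y : V → ℝ := fun v => if v ∈ T then 1 else 0 with hy
  have hparse : ∀ u w : V → ℝ, ∑ i, (u ⬝ᵥ f i) * (w ⬝ᵥ f i) = u ⬝ᵥ w :=
    dotProduct_eq_sum_eigenvectorBasis hA
  have hAone : (G.adjMatrix ℝ).mulVec one = (d : ℝ) • one := by
    ext v
    have := adjMatrix_mulVec_const_apply_of_regular (α := ℝ) (a := 1) hreg (v := v)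
    simpa [hone, Function.const_def] using this
  have hAsymm : (G.adjMatrix ℝ).transpose = G.adjMatrix ℝ := G.isSymm_adjMatrix
  have horth : ∀ i, i ≠ i₀ → one ⬝ᵥ f i = 0 := by
    intro i hi
    have h1 : one ⬝ᵥ (G.adjMatrix ℝ).mulVec (f i) = hA.eigenvalues i * (one ⬝ᵥ f i) := by
      rw [hA.mulVec_eigenvectorBasis, dotProduct_smul, smul_eq_mul]
    have h2 : one ⬝ᵥ (G.adjMatrix ℝ).mulVec (f i) = d * (one ⬝ᵥ f i) := by
      rw [Matrix.dotProduct_mulVec, ← Matrix.mulVec_transpose, hAsymm, hAone, smul_dotProduct,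
        smul_eq_mul]
    have h3 : hA.eigenvalues i < d := lt_of_le_of_lt ((le_abs_self _).trans (hlt i hi)) hlam
    have h4 : (hA.eigenvalues i - d) * (one ⬝ᵥ f i) = 0 := by rw [sub_mul, ← h1, ← h2, sub_self]
    rcases mul_eq_zero.1 h4 with h | h
    · linarith
    · exact h
  have hone_dot : ∀ u : V → ℝ, (u ⬝ᵥ f i₀) * (one ⬝ᵥ f i₀) = u ⬝ᵥ one := by
    intro u
    rw [← hparse u one, Finset.sum_eq_single i₀]
    · intro i _ hi; rw [horth i hi, mul_zero]
    · simp
  have hxone : x ⬝ᵥ one = S.card := by simp [hx, hone, dotProduct]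
  have hyone : y ⬝ᵥ one = T.card := by simp [hy, hone, dotProduct]
  have honeone : one ⬝ᵥ one = (n : ℝ) := by simp [hone, dotProduct, hn]
  have hxx : x ⬝ᵥ x = S.card := by simp [hx, dotProduct]
  have hyy : y ⬝ᵥ y = T.card := by simp [hy, dotProduct]
  have hn0 : (0 : ℝ) < n := by
    rw [← hn]; exact_mod_cast Fintype.card_pos_iff.2 ⟨i₀⟩
  have hmain : (x ⬝ᵥ f i₀) * (y ⬝ᵥ f i₀) = S.card * T.card / n := by
    rw [eq_div_iff hn0.ne', ← hxone, ← hyone, ← honeone, ← hone_dot x, ← hone_dot y, ← hone_dot one]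
    ring
  have hedges : ∑ u ∈ S, ((T.filter (G.Adj u)).card : ℝ) = x ⬝ᵥ (G.adjMatrix ℝ).mulVec y := by
    have h1 : ∀ u, (G.adjMatrix ℝ).mulVec y u = ((T.filter (G.Adj u)).card : ℝ) := by
      intro u
      simp only [Matrix.mulVec, dotProduct, adjMatrix_apply, hy, mul_ite, mul_one, mul_zero,
        Finset.sum_ite_mem, Finset.univ_inter]
      simp
    simp [dotProduct, h1, hx]
  rw [hedges, dotProduct_mulVec_eq_sum_eigenvalues hA, ← Finset.add_sum_erase _ _ (Finset.mem_univ i₀)]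
  have hcs : |∑ i ∈ Finset.univ.erase i₀, hA.eigenvalues i * ((x ⬝ᵥ f i) * (y ⬝ᵥ f i))| ≤
      lam * √(S.card * T.card) := by
    calc _ ≤ ∑ i ∈ Finset.univ.erase i₀, lam * (|x ⬝ᵥ f i| * |y ⬝ᵥ f i|) := by
          refine (Finset.abs_sum_le_sum_abs _ _).trans (Finset.sum_le_sum fun i hi => ?_)
          rw [abs_mul, abs_mul]
          exact mul_le_mul_of_nonneg_right (hlt i (Finset.ne_of_mem_erase hi)) (by positivity)
      _ ≤ ∑ i, lam * (|x ⬝ᵥ f i| * |y ⬝ᵥ f i|) :=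
          Finset.sum_le_sum_of_subset_of_nonneg (Finset.erase_subset _ _)
            fun i _ _ => by positivity
      _ = lam * ∑ i, (|x ⬝ᵥ f i| * |y ⬝ᵥ f i|) := by rw [Finset.mul_sum]
      _ ≤ lam * √(S.card * T.card) := by
          refine mul_le_mul_of_nonneg_left (Real.le_sqrt_of_sq_le ?_) hlam0.le
          refine (Finset.sum_mul_sq_le_sq_mul_sq _ _ _).trans (le_of_eq ?_)
          simp only [sq_abs, ← hxx, ← hyy, ← hparse x x, ← hparse y y]
          simp only [sq]
  have heq : (hA.eigenvalues i₀ * ((x ⬝ᵥ (hA.eigenvectorBasis i₀).ofLp) *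
      (y ⬝ᵥ (hA.eigenvectorBasis i₀).ofLp))) = (d : ℝ) / n * S.card * T.card := by
    rw [hi₀]
    have : (x ⬝ᵥ (hA.eigenvectorBasis i₀).ofLp) * (y ⬝ᵥ (hA.eigenvectorBasis i₀).ofLp) =
      S.card * T.card / n := hmain
    rw [this]; ring
  rw [heq, add_sub_cancel_left]
  exact hcs

end Mixing

section Partition

/-- A random-shift averaging argument: if `Ω = ∏ Fin (m b)`, few shifts see few marked elements. -/
lemma card_few_hits_le {N : ℕ} (m : Fin N → ℕ) [∀ b, NeZero (m b)] (s : ℕ)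
    (hm : ∀ b, m b ≤ s + 1) (mark : ∀ b, Fin (m b) → Prop) [∀ b a, Decidable (mark b a)]
    (shift : ∀ b, Fin (m b)) (δ : ℝ)
    (hδ : δ ≤ ∑ b, ((Finset.univ.filter (mark b)).card : ℝ)) :
    ((Finset.univ.filter fun ω : ∀ b, Fin (m b) =>
      ((Finset.univ.filter fun b => mark b (ω b + shift b)).card : ℝ) < δ / (4 * (s + 1))).card : ℝ)
      ≤ Fintype.card (∀ b, Fin (m b)) * Real.exp (-(δ / (4 * (s + 1)))) := by
  classical
  set τ := δ / (4 * (s + 1)) with hτ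
  set X : (∀ b, Fin (m b)) → ℕ := fun ω =>
    (Finset.univ.filter fun b => mark b (ω b + shift b)).card with hX
  have hs1 : (0 : ℝ) < s + 1 := by positivity
  have hexp1 : Real.exp (-1) ≤ 1 / 2 := by
    rw [Real.exp_neg, one_div]
    exact inv_anti₀ (by norm_num) (by linarith [Real.add_one_le_exp (1 : ℝ)])
  have hsum : ∑ ω, Real.exp (-(X ω : ℝ)) ≤
      Fintype.card (∀ b, Fin (m b)) * Real.exp (-(2 * τ)) := by
    have h1 : ∀ ω, Real.exp (-(X ω : ℝ)) =
        ∏ b, (if mark b (ω b + shift b) then Real.exp (-1) else 1) := by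
      intro ω
      rw [Finset.prod_ite, Finset.prod_const, Finset.prod_const_one, mul_one, ← Real.exp_nat_mul]
      congr 1; simp [hX]
    have h2 : ∑ ω, Real.exp (-(X ω : ℝ)) =
        ∏ b, ∑ a : Fin (m b), (if mark b (a + shift b) then Real.exp (-1) else 1) := by
      rw [Finset.prod_univ_sum]
      simp only [h1, Fintype.piFinset_univ]
    have h3 : ∀ b, ∑ a : Fin (m b), (if mark b (a + shift b) then Real.exp (-1) else 1) ≤
        m b * Real.exp (-(((Finset.univ.filter (mark b)).card : ℝ) / (2 * (s + 1)))) := by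
      intro b
      have h4 : ∑ a : Fin (m b), (if mark b (a + shift b) then Real.exp (-1) else 1) =
          ∑ a : Fin (m b), (if mark b a then Real.exp (-1) else 1) :=
        Equiv.sum_comp (Equiv.addRight (shift b)) (fun a => if mark b a then Real.exp (-1) else 1)
      set k := ((Finset.univ.filter (mark b)).card : ℝ) with hk
      have hk0 : 0 ≤ k := by positivity
      have hmpos : (0 : ℝ) < m b := by exact_mod_cast (NeZero.pos (m b))
      have hms : (m b : ℝ) ≤ s + 1 := by exact_mod_cast hm b
      rw [h4]
      calc ∑ a : Fin (m b), (if mark b a then Real.exp (-1) else 1)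
          ≤ ∑ a : Fin (m b), (1 - (if mark b a then (1 / 2 : ℝ) else 0)) := by
            refine Finset.sum_le_sum fun a _ => ?_
            split_ifs <;> linarith
        _ = m b - k / 2 := by
            rw [Finset.sum_sub_distrib, ← Finset.sum_filter, Finset.sum_const, Finset.sum_const]
            simp [hk]; ring
        _ = m b * (1 - k / (2 * m b)) := by field_simp
        _ ≤ m b * (1 - k / (2 * (s + 1))) := by gcongr
        _ ≤ m b * Real.exp (-(k / (2 * (s + 1)))) := by
            gcongr
            linarith [Real.add_one_le_exp (-(k / (2 * ((s : ℝ) + 1))))]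
    rw [h2]
    refine (Finset.prod_le_prod (fun b _ => Finset.sum_nonneg fun a _ => by
      split_ifs <;> positivity) fun b _ => h3 b).trans ?_
    rw [Finset.prod_mul_distrib, ← Real.exp_sum]
    have hcard : (∏ b, (m b : ℝ)) = Fintype.card (∀ b, Fin (m b)) := by
      simp [Fintype.card_pi]
    rw [hcard]
    gcongr
    rw [Finset.sum_neg_distrib, ← Finset.sum_div, neg_le_neg_iff, hτ]
    rw [show 2 * (δ / (4 * ((s : ℝ) + 1))) = δ / (2 * (s + 1)) by field_simp; ring]
    gcongr
  have hbad : ((Finset.univ.filter fun ω => (X ω : ℝ) < τ).card : ℝ) * Real.exp (-τ) ≤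
      ∑ ω, Real.exp (-(X ω : ℝ)) := by
    rw [← nsmul_eq_mul]
    refine (Finset.card_nsmul_le_sum _ _ _ fun ω hω => ?_).trans
      (Finset.sum_le_sum_of_subset_of_nonneg (Finset.filter_subset _ _) fun _ _ _ => by positivity)
    have := (Finset.mem_filter.1 hω).2
    exact Real.exp_le_exp.2 (by linarith)
  have h5 := hbad.trans hsum
  rw [show -(2 * τ) = -τ + -τ by ring, Real.exp_add, ← mul_assoc] at h5
  exact le_of_mul_le_mul_right h5 (Real.exp_pos _)

variable {V : Type*} [Fintype V] [DecidableEq V]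

/-- A vertex set can be cut into parts of equal size so that every vertex keeps its share of
neighbours in each part. -/
theorem exists_degree_preserving_parts (G : SimpleGraph V) [DecidableRel G.Adj] (R : Finset V)
    {N s : ℕ} (hlo : N * s ≤ R.card) (hhi : R.card ≤ N * (s + 1)) (δ : ℝ)
    (hδ : ∀ v, δ ≤ ((R.filter (G.Adj v)).card : ℝ))
    (hbig : (Fintype.card V : ℝ) * s < Real.exp (δ / (4 * (s + 1)))) :
    ∃ P : Fin s → Finset V, (∀ j, P j ⊆ R) ∧ (∀ j, (P j).card = N) ∧
      (∀ i j, i ≠ j → Disjoint (P i) (P j)) ∧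
      ∀ v j, δ / (4 * (s + 1)) ≤ (((P j).filter (G.Adj v)).card : ℝ) := by
  classical
  rcases Nat.eq_zero_or_pos s with rfl | hs
  · exact ⟨fun _ => ∅, fun j => j.elim0, fun j => j.elim0, fun j => j.elim0, fun _ j => j.elim0⟩
  set ex := R.card - N * s with hex
  set m : Fin N → ℕ := fun b => s + if (b : ℕ) < ex then 1 else 0 with hm
  have hms : ∀ b, s ≤ m b := fun b => by simp [hm]
  have hms1 : ∀ b, m b ≤ s + 1 := fun b => by simp only [hm]; split_ifs <;> omega
  have : ∀ b, NeZero (m b) := fun b => ⟨by have := hms b; omega⟩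
  have hexN : ex ≤ N := by rw [mul_add, mul_one] at hhi; omega
  have hcard : Fintype.card (Σ b, Fin (m b)) = Fintype.card R := by
    rw [Fintype.card_sigma, Fintype.card_coe]
    simp only [Fintype.card_fin, hm, Finset.sum_add_distrib, Finset.sum_const, Finset.card_univ,
      smul_eq_mul, Finset.sum_boole]
    have : (Finset.univ.filter fun b : Fin N => (b : ℕ) < ex).card = ex := by
      rw [Fin.card_filter_val_lt]; omega
    simp only [this, Nat.cast_id]
    omega
  let e : (Σ b, Fin (m b)) ≃ R := Fintype.equivOfCardEq hcard
  let el : ∀ b, Fin (m b) → V := fun b a => e ⟨b, a⟩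
  have hel : ∀ b a b' a', el b a = el b' a' → (⟨b, a⟩ : Σ b, Fin (m b)) = ⟨b', a'⟩ :=
    fun b a b' a' h => e.injective (Subtype.ext h)
  let sh : Fin s → ∀ b, Fin (m b) := fun j b => ⟨j, lt_of_lt_of_le j.2 (hms b)⟩
  set τ := δ / (4 * ((s : ℝ) + 1)) with hτ
  let bad : V → Fin s → Finset (∀ b, Fin (m b)) := fun v j => Finset.univ.filter fun ω =>
    ((Finset.univ.filter fun b => G.Adj v (el b (ω b + sh j b))).card : ℝ) < τ
  have hbadcard : ∀ v j, ((bad v j).card : ℝ) ≤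
      Fintype.card (∀ b, Fin (m b)) * Real.exp (-τ) := by
    intro v j
    refine card_few_hits_le m s hms1 (fun b a => G.Adj v (el b a)) (sh j) δ ((hδ v).trans ?_)
    have : R.filter (G.Adj v) ⊆ Finset.univ.biUnion fun b =>
        (Finset.univ.filter fun a => G.Adj v (el b a)).image (el b) := by
      intro w hw
      obtain ⟨hwR, hvw⟩ := Finset.mem_filter.1 hw
      have hwe : el (e.symm ⟨w, hwR⟩).1 (e.symm ⟨w, hwR⟩).2 = w := by simp [el]
      refine Finset.mem_biUnion.2 ⟨(e.symm ⟨w, hwR⟩).1, Finset.mem_univ _,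
        Finset.mem_image.2 ⟨(e.symm ⟨w, hwR⟩).2, ?_, hwe⟩⟩
      exact Finset.mem_filter.2 ⟨Finset.mem_univ _, by rw [hwe]; exact hvw⟩
    have h2 := (Finset.card_le_card this).trans (Finset.card_biUnion_le.trans
      (Finset.sum_le_sum fun b _ => Finset.card_image_le))
    exact_mod_cast h2
  have hΩ : (0 : ℝ) < Fintype.card (∀ b, Fin (m b)) := by
    exact_mod_cast Fintype.card_pos
  obtain ⟨ω, hω⟩ : ∃ ω, ∀ v j, ω ∉ bad v j := by
    by_contra! hcon
    have hcov : (Finset.univ : Finset (∀ b, Fin (m b))) ⊆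
        (Finset.univ : Finset (V × Fin s)).biUnion fun p => bad p.1 p.2 := by
      intro ω _
      obtain ⟨v, j, h⟩ := hcon ω
      exact Finset.mem_biUnion.2 ⟨(v, j), Finset.mem_univ _, h⟩
    have h1 := (Finset.card_le_card hcov).trans Finset.card_biUnion_le
    have h2 : (Fintype.card (∀ b, Fin (m b)) : ℝ) ≤
        ∑ p : V × Fin s, ((bad p.1 p.2).card : ℝ) := by
      rw [← Finset.card_univ]; exact_mod_cast h1
    have h3 : ∑ p : V × Fin s, ((bad p.1 p.2).card : ℝ) ≤
        (Fintype.card V * s : ℝ) * (Fintype.card (∀ b, Fin (m b)) * Real.exp (-τ)) := by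
      refine (Finset.sum_le_sum fun p _ => hbadcard p.1 p.2).trans (le_of_eq ?_)
      simp [Finset.sum_const, Fintype.card_prod]
    have h4 : (Fintype.card V * s : ℝ) * Real.exp (-τ) < 1 := by
      rw [Real.exp_neg, ← div_eq_mul_inv, div_lt_one (Real.exp_pos _)]
      exact hbig
    nlinarith
  have hinj : ∀ j, Function.Injective fun b => el b (ω b + sh j b) := by
    intro j b b' h
    exact congrArg Sigma.fst (hel _ _ _ _ h)
  refine ⟨fun j => Finset.univ.image fun b => el b (ω b + sh j b), ?_, ?_, ?_, ?_⟩
  · intro j w hw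
    obtain ⟨b, _, rfl⟩ := Finset.mem_image.1 hw
    exact (e _).2
  · intro j
    rw [Finset.card_image_of_injective _ (hinj j)]; simp
  · intro i j hij
    rw [Finset.disjoint_left]
    intro w hw hw'
    obtain ⟨b, _, rfl⟩ := Finset.mem_image.1 hw
    obtain ⟨b', _, h⟩ := Finset.mem_image.1 hw'
    have h1 := hel _ _ _ _ h
    obtain rfl : b' = b := congrArg Sigma.fst h1
    have h2 := add_left_cancel (eq_of_heq (Sigma.mk.inj h1).2)
    exact hij (Fin.ext (Fin.mk.inj h2).symm)
  · intro v j
    have h := hω v j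
    simp only [bad, Finset.mem_filter, Finset.mem_univ, true_and, not_lt] at h
    refine h.trans ?_
    rw [Finset.filter_image, Finset.card_image_of_injective _ (hinj j)]

end Partition

section Expansion

variable {V : Type*}

/-- The vertices of `Q` adjacent to some vertex of `U`. -/
def nbrsIn (G : SimpleGraph V) [DecidableRel G.Adj] (Q U : Finset V) : Finset V :=
  Q.filter fun w => ∃ u ∈ U, G.Adj u w

variable {G : SimpleGraph V} [DecidableRel G.Adj]

@[simp] lemma mem_nbrsIn {Q U : Finset V} {w : V} :
    w ∈ nbrsIn G Q U ↔ w ∈ Q ∧ ∃ u ∈ U, G.Adj u w := by simp [nbrsIn]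

lemma nbrsIn_subset (Q U : Finset V) : nbrsIn G Q U ⊆ Q := Finset.filter_subset _ _

lemma Jumbled.exists_adj {p lam : ℝ} (hJ : Jumbled G p lam) {S T : Finset V}
    (h : lam * √(S.card * T.card) < p * S.card * T.card) : ∃ u ∈ S, ∃ w ∈ T, G.Adj u w := by
  by_contra! hcon
  have h0 : ∑ u ∈ S, ((T.filter (G.Adj u)).card : ℝ) = 0 := by
    refine Finset.sum_eq_zero fun u hu => ?_
    rw [Finset.filter_false_of_mem fun w hw => hcon u hu w hw]; simp
  have := hJ S T
  rw [h0, zero_sub, abs_neg] at this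
  linarith [le_abs_self (p * S.card * T.card)]

/-- Any two sets with more than `a` vertices each are joined by an edge. -/
lemma Jumbled.exists_adj_of_lt_card {p lam a : ℝ} (hJ : Jumbled G p lam) (ha : 0 ≤ a) (hp : 0 < p)
    (hlam : lam ≤ p * a) {S T : Finset V} (hS : a < S.card) (hT : a < T.card) :
    ∃ u ∈ S, ∃ w ∈ T, G.Adj u w := by
  refine hJ.exists_adj ?_
  have hS0 : (0 : ℝ) < S.card := ha.trans_lt hS
  have hT0 : (0 : ℝ) < T.card := ha.trans_lt hT
  set r := √((S.card : ℝ) * T.card) with hr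
  have hrr : r * r = S.card * T.card := Real.mul_self_sqrt (by positivity)
  have har : a < r := Real.lt_sqrt_of_sq_lt (by nlinarith)
  have hr0 : 0 < r := ha.trans_lt har
  calc lam * r ≤ p * a * r := by gcongr
    _ < p * r * r := by gcongr
    _ = p * S.card * T.card := by rw [mul_assoc, hrr, mul_assoc]

lemma Jumbled.mul_card_le_card_nbrsIn {p lam δ : ℝ} (hJ : Jumbled G p lam) (hp : 0 ≤ p)
    (hlam : 0 ≤ lam) {K : ℕ} {S X : Finset V}
    (hδ : ∀ u ∈ S, δ ≤ ((X.filter (G.Adj u)).card : ℝ))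
    (h : p * (K * S.card) + lam * √K < δ) : K * S.card ≤ (nbrsIn G X S).card := by
  by_contra! hcon
  set T := nbrsIn G X S with hT
  have hS0 : 0 < S.card := by
    rcases Nat.eq_zero_or_pos S.card with h0 | h0
    · rw [h0] at hcon; omega
    · exact h0
  have hS0' : (0 : ℝ) < S.card := by exact_mod_cast hS0
  have hlow : δ * S.card ≤ ∑ u ∈ S, ((T.filter (G.Adj u)).card : ℝ) := by
    rw [mul_comm, ← nsmul_eq_mul]
    refine Finset.card_nsmul_le_sum _ _ _ fun u hu => (hδ u hu).trans ?_
    exact_mod_cast Finset.card_le_card fun w hw => by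
      obtain ⟨h1, h2⟩ := Finset.mem_filter.1 hw
      exact Finset.mem_filter.2 ⟨mem_nbrsIn.2 ⟨h1, u, hu, h2⟩, h2⟩
  have hup := (abs_le.1 (hJ S T)).2
  have hTle : (T.card : ℝ) ≤ K * S.card := by exact_mod_cast hcon.le
  have hsq : √((S.card : ℝ) * T.card) ≤ √K * S.card := by
    rw [show √(K : ℝ) * S.card = √(K * (S.card * S.card)) by
      rw [Real.sqrt_mul (by positivity), Real.sqrt_mul_self hS0'.le]]
    exact Real.sqrt_le_sqrt (by nlinarith)
  have h1 : p * S.card * T.card ≤ p * S.card * (K * S.card) := by gcongr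
  have h2 : lam * √((S.card : ℝ) * T.card) ≤ lam * (√K * S.card) := by gcongr
  nlinarith

end Expansion

section Linked

variable {V : Type*} {G : SimpleGraph V} {ι κ : Type*}

/-- Walks of length `L` from `x i` to `y i`, for all `i`, that together visit all of `A`. -/
def Linked (G : SimpleGraph V) (A : Finset V) (L : ℕ) (x y : ι → V) : Prop :=
  ∃ w : ∀ i, G.Walk (x i) (y i), (∀ i, (w i).length = L) ∧ ∀ v ∈ A, ∃ i, v ∈ (w i).support

lemma Linked.trans [DecidableEq V] {A B : Finset V} {L L' : ℕ} {x y z : ι → V}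
    (h : Linked G A L x y) (h' : Linked G B L' y z) : Linked G (A ∪ B) (L + L') x z := by
  obtain ⟨w, hw, hA⟩ := h
  obtain ⟨w', hw', hB⟩ := h'
  refine ⟨fun i => (w i).append (w' i), fun i => by rw [Walk.length_append, hw, hw'], ?_⟩
  intro v hv
  rcases Finset.mem_union.1 hv with hv | hv
  · obtain ⟨i, hi⟩ := hA v hv
    exact ⟨i, Walk.mem_support_append_iff _ _ |>.2 (Or.inl hi)⟩
  · obtain ⟨i, hi⟩ := hB v hv
    exact ⟨i, Walk.mem_support_append_iff _ _ |>.2 (Or.inr hi)⟩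

lemma Linked.comp {A : Finset V} {L : ℕ} {x y : ι → V} (h : Linked G A L x y) {f : κ → ι}
    (hf : Function.Surjective f) : Linked G A L (x ∘ f) (y ∘ f) := by
  obtain ⟨w, hw, hA⟩ := h
  refine ⟨fun i => w (f i), fun i => hw _, fun v hv => ?_⟩
  obtain ⟨i, hi⟩ := hA v hv
  obtain ⟨k, rfl⟩ := hf i
  exact ⟨k, hi⟩

lemma Linked.mono {A B : Finset V} {L : ℕ} {x y : ι → V} (h : Linked G A L x y) (hB : B ⊆ A) :
    Linked G B L x y := by
  obtain ⟨w, hw, hA⟩ := h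
  exact ⟨w, hw, fun v hv => hA v (hB hv)⟩

lemma Linked.refl (x : ι → V) : Linked G ∅ 0 x x :=
  ⟨fun _ => Walk.nil, fun _ => rfl, fun v hv => absurd hv (Finset.notMem_empty v)⟩

end Linked

section Matching

variable {V : Type*} [DecidableEq V] {G : SimpleGraph V} [DecidableRel G.Adj]

theorem exists_perfect_matching {ι : Type*} [Fintype ι] (a : ι → V) (ha : a.Injective)
    {B : Finset V} (hB : B.card = Fintype.card ι) (N₀ : ℕ)
    (hexp : ∀ S ⊆ Finset.univ.image a, S.card ≤ N₀ → S.card ≤ (nbrsIn G B S).card)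
    (hexp' : ∀ T ⊆ B, T.card ≤ N₀ → T.card ≤ (nbrsIn G (Finset.univ.image a) T).card)
    (hjoin : ∀ S T : Finset V, N₀ < S.card → N₀ < T.card → ∃ u ∈ S, ∃ w ∈ T, G.Adj u w) :
    ∃ a' : ι → V, a'.Injective ∧ Finset.univ.image a' = B ∧ Linked G B 1 a a' := by
  classical
  have hall : ∀ s : Finset ι, s.card ≤ (s.biUnion fun i => B.filter (G.Adj (a i))).card := by
    intro s
    have hs : s.biUnion (fun i => B.filter (G.Adj (a i))) = nbrsIn G B (s.image a) := by
      ext w; simp only [Finset.mem_biUnion, Finset.mem_filter, mem_nbrsIn, Finset.mem_image]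
      constructor
      · rintro ⟨i, hi, hw, hadj⟩; exact ⟨hw, a i, ⟨i, hi, rfl⟩, hadj⟩
      · rintro ⟨hw, _, ⟨i, hi, rfl⟩, hadj⟩; exact ⟨i, hi, hw, hadj⟩
    rw [hs, ← Finset.card_image_of_injective s ha]
    set S := s.image a with hS
    have hSsub : S ⊆ Finset.univ.image a := Finset.image_subset_image (Finset.subset_univ _)
    by_contra! hcon
    have hSbig : N₀ < S.card := by
      by_contra! hle
      exact absurd (hexp S hSsub hle) (by omega)
    set T := B \ nbrsIn G B S with hT
    have hno : ∀ u ∈ S, ∀ w ∈ T, ¬ G.Adj u w := by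
      intro u hu w hw hadj
      rw [hT, Finset.mem_sdiff] at hw
      exact hw.2 (mem_nbrsIn.2 ⟨hw.1, u, hu, hadj⟩)
    have hTcard : T.card = B.card - (nbrsIn G B S).card :=
      Finset.card_sdiff_of_subset (nbrsIn_subset _ _)
    have hScard : S.card ≤ Fintype.card ι := by
      rw [hS, Finset.card_image_of_injective _ ha]; exact Finset.card_le_univ _
    have hTsmall : T.card ≤ N₀ := by
      by_contra! hlt
      obtain ⟨u, hu, w, hw, hadj⟩ := hjoin S T hSbig hlt
      exact hno u hu w hw hadj
    have h1 := hexp' T Finset.sdiff_subset hTsmall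
    have h2 : nbrsIn G (Finset.univ.image a) T ⊆ Finset.univ.image a \ S := by
      intro u hu
      obtain ⟨hu1, w, hw, hadj⟩ := mem_nbrsIn.1 hu
      exact Finset.mem_sdiff.2 ⟨hu1, fun huS => hno u huS w hw hadj.symm⟩
    have h3 := Finset.card_le_card h2
    rw [Finset.card_sdiff_of_subset hSsub, Finset.card_image_of_injective _ ha,
      Finset.card_univ] at h3
    omega
  obtain ⟨f, hf, hmem⟩ := (Finset.all_card_le_biUnion_card_iff_exists_injective _).1 hall
  have himg : Finset.univ.image f = B := by
    refine Finset.eq_of_subset_of_card_le ?_ ?_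
    · intro w hw
      obtain ⟨i, _, rfl⟩ := Finset.mem_image.1 hw
      exact (Finset.mem_filter.1 (hmem i)).1
    · rw [hB, Finset.card_image_of_injective _ hf, Finset.card_univ]
  refine ⟨f, hf, himg, fun i => (Finset.mem_filter.1 (hmem i)).2.toWalk, fun i => by simp, ?_⟩
  intro v hv
  rw [← himg] at hv
  obtain ⟨i, _, rfl⟩ := Finset.mem_image.1 hv
  exact ⟨i, Walk.end_mem_support _⟩

end Matching

section Extendable

variable {V : Type*} [DecidableEq V] {G : SimpleGraph V} [DecidableRel G.Adj] {Q : Finset V}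
  {D M : ℕ} {W W' : Finset V} {c c' : V → ℕ}

/-- The vertices `W` of the reservoir `Q` have been used, and every vertex set `U` of size at most
`2 * M` still has room in `Q` for `c u` private new neighbours of each `u ∈ U`. Unused vertices of
the reservoir have the full budget `D`. -/
structure Extendable (G : SimpleGraph V) [DecidableRel G.Adj] (Q : Finset V) (D M : ℕ)
    (W : Finset V) (c : V → ℕ) : Prop where
  subset : W ⊆ Q
  le : ∀ z, c z ≤ D
  fresh : ∀ z ∈ Q, z ∉ W → c z = D
  expand : ∀ U : Finset V, U.card ≤ 2 * M → ∑ u ∈ U, c u ≤ (nbrsIn G Q U \ W).card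

/-- Every two sets of at least `M` vertices are joined by an edge. -/
def SetsJoined (G : SimpleGraph V) (M : ℕ) : Prop :=
  ∀ S T : Finset V, M ≤ S.card → M ≤ T.card → ∃ u ∈ S, ∃ w ∈ T, G.Adj u w

/-- Giving back the vertices of `R`, each of which is charged to its parent, keeps the state
extendable. -/
lemma Extendable.sdiff (h : Extendable G Q D M W c) {R : Finset V} (hR : R ⊆ W) {par : V → V}
    (hpar : ∀ w ∈ R, G.Adj (par w) w) (hle : ∀ z, c' z ≤ D)
    (hfresh : ∀ z ∈ Q, z ∉ W \ R → c' z = D)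
    (hc : ∀ z, c' z ≤ c z + (R.filter fun w => par w = z).card) :
    Extendable G Q D M (W \ R) c' where
  subset := Finset.sdiff_subset.trans h.subset
  le := hle
  fresh := hfresh
  expand U hU := by
    have h1 := Finset.sum_le_sum fun z (_ : z ∈ U) => hc z
    rw [Finset.sum_add_distrib] at h1
    have h2 : ∑ z ∈ U, (R.filter fun w => par w = z).card =
        (R.filter fun w => par w ∈ U).card := by
      rw [Finset.card_eq_sum_card_fiberwise (f := par) (s := R.filter fun w => par w ∈ U) (t := U)
        (fun w hw => (Finset.mem_filter.1 hw).2)]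
      refine Finset.sum_congr rfl fun z hz => ?_
      rw [Finset.filter_filter]
      congr 1
      refine Finset.filter_congr fun w _ => ?_
      constructor
      · rintro rfl; exact ⟨hz, rfl⟩
      · exact And.right
    have h3 : (nbrsIn G Q U \ W) ∪ R.filter (fun w => par w ∈ U) ⊆ nbrsIn G Q U \ (W \ R) := by
      intro v hv
      rcases Finset.mem_union.1 hv with hv | hv
      · exact Finset.sdiff_subset_sdiff le_rfl Finset.sdiff_subset hv
      · obtain ⟨hv1, hv2⟩ := Finset.mem_filter.1 hv
        exact Finset.mem_sdiff.2 ⟨mem_nbrsIn.2 ⟨h.subset (hR hv1), par v, hv2, hpar v hv1⟩,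
          fun h' => (Finset.mem_sdiff.1 h').2 hv1⟩
    have h4 : Disjoint (nbrsIn G Q U \ W) (R.filter fun w => par w ∈ U) := by
      rw [Finset.disjoint_left]
      intro v hv hv'
      exact (Finset.mem_sdiff.1 hv).2 (hR (Finset.mem_filter.1 hv').1)
    have h5 := Finset.card_le_card h3
    rw [Finset.card_union_of_disjoint h4] at h5
    have h6 := h.expand U hU
    omega

lemma card_nbrsIn_sdiff_union_add_inter_le (U U' : Finset V) :
    (nbrsIn G Q (U ∪ U') \ W).card + (nbrsIn G Q (U ∩ U') \ W).card ≤
    (nbrsIn G Q U \ W).card + (nbrsIn G Q U' \ W).card := by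
  have h1 : nbrsIn G Q (U ∪ U') \ W = (nbrsIn G Q U \ W) ∪ (nbrsIn G Q U' \ W) := by
    ext w; simp only [Finset.mem_sdiff, mem_nbrsIn, Finset.mem_union]
    constructor
    · rintro ⟨⟨h1, u, h2 | h2, h3⟩, h4⟩
      · exact Or.inl ⟨⟨h1, u, h2, h3⟩, h4⟩
      · exact Or.inr ⟨⟨h1, u, h2, h3⟩, h4⟩
    · rintro (⟨⟨h1, u, h2, h3⟩, h4⟩ | ⟨⟨h1, u, h2, h3⟩, h4⟩)
      · exact ⟨⟨h1, u, Or.inl h2, h3⟩, h4⟩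
      · exact ⟨⟨h1, u, Or.inr h2, h3⟩, h4⟩
  have h2 : nbrsIn G Q (U ∩ U') \ W ⊆ (nbrsIn G Q U \ W) ∩ (nbrsIn G Q U' \ W) := by
    intro w; simp only [Finset.mem_sdiff, mem_nbrsIn, Finset.mem_inter]
    rintro ⟨⟨h1, u, ⟨h2, h2'⟩, h3⟩, h4⟩
    exact ⟨⟨⟨h1, u, h2, h3⟩, h4⟩, ⟨⟨h1, u, h2', h3⟩, h4⟩⟩
  have h5 := Finset.card_union_add_card_inter (nbrsIn G Q U \ W) (nbrsIn G Q U' \ W)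
  have h7 := Finset.card_le_card h2
  rw [h1]
  omega

/-- The Friedman–Pippenger step: a vertex with positive budget can be given a new leaf. -/
theorem Extendable.exists_leaf (h : Extendable G Q D M W c) (hjoin : SetsJoined G M)
    (hroom : W.card + (2 * D + 1) * M ≤ Q.card) {u : V} (hu : u ∈ W ∨ u ∉ Q) (hcu : 0 < c u) :
    ∃ w ∈ Q, w ∉ W ∧ G.Adj u w ∧
      Extendable G Q D M (insert w W) (Function.update c u (c u - 1)) := by
  by_contra! hcon
  set f : Finset V → ℕ := fun U => (nbrsIn G Q U \ W).card with hf
  have hlarge : ∀ U : Finset V, U.card ≤ 2 * M → f U = ∑ z ∈ U, c z → U.card < M := by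
    intro U hU heq
    by_contra! hMU
    have h1 : (Q \ nbrsIn G Q U).card < M := by
      by_contra! h2
      obtain ⟨x, hx, w, hw, hadj⟩ := hjoin U _ hMU h2
      rw [Finset.mem_sdiff] at hw
      exact hw.2 (mem_nbrsIn.2 ⟨hw.1, x, hx, hadj⟩)
    have h2 := Finset.card_sdiff_of_subset (nbrsIn_subset (G := G) Q U)
    have h3 := Finset.le_card_sdiff W (nbrsIn G Q U)
    have h4 : D * U.card ≤ D * (2 * M) := Nat.mul_le_mul_left _ hU
    have h5 : ∑ z ∈ U, c z ≤ D * U.card := by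
      rw [mul_comm]; exact Finset.sum_le_card_nsmul _ _ _ fun z _ => h.le z
    have h6 := Finset.card_le_card (nbrsIn_subset (G := G) Q U)
    have h7 : (2 * D + 1) * M = D * (2 * M) + M := by ring
    simp only [hf] at heq
    omega
  have htight : ∀ w ∈ (Q.filter (G.Adj u)) \ W, ∃ U : Finset V, U.card ≤ 2 * M ∧
      f U = ∑ z ∈ U, c z ∧ u ∉ U ∧ w ∈ nbrsIn G Q U := by
    intro w hw
    simp only [Finset.mem_sdiff, Finset.mem_filter] at hw
    obtain ⟨⟨hwQ, hadj⟩, hwW⟩ := hw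
    have hnot := hcon w hwQ hwW hadj
    have : ∃ U : Finset V, U.card ≤ 2 * M ∧ (nbrsIn G Q U \ insert w W).card <
        ∑ z ∈ U, Function.update c u (c u - 1) z := by
      by_contra! hall
      refine hnot ⟨Finset.insert_subset hwQ h.subset, ?_, ?_, hall⟩
      · intro z
        by_cases hz : z = u
        · subst hz; rw [Function.update_self]; exact (Nat.sub_le _ _).trans (h.le z)
        · rw [Function.update_of_ne hz]; exact h.le z
      · intro z hz hzW
        rw [Finset.mem_insert, not_or] at hzW
        have hzu : z ≠ u := by
          rintro rfl
          rcases hu with hu | hu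
          · exact hzW.2 hu
          · exact hu hz
        rw [Function.update_of_ne hzu]
        exact h.fresh z hz hzW.2
    obtain ⟨U, hU, hlt⟩ := this
    have hexp := h.expand U hU
    have hins : nbrsIn G Q U \ insert w W = (nbrsIn G Q U \ W).erase w := by
      rw [Finset.sdiff_insert]
    rw [hins] at hlt
    have hpred := Finset.pred_card_le_card_erase (s := nbrsIn G Q U \ W) (a := w)
    have hsum : (∑ z ∈ U, Function.update c u (c u - 1) z) + (if u ∈ U then 1 else 0) =
        ∑ z ∈ U, c z := by
      by_cases huU : u ∈ U
      · rw [if_pos huU, Finset.sum_update_of_mem huU, ← Finset.add_sum_erase U c huU,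
          Finset.sdiff_singleton_eq_erase]
        omega
      · rw [if_neg huU, Finset.sum_update_of_notMem huU, add_zero]
    by_cases hmem : w ∈ nbrsIn G Q U \ W
    · have hce := Finset.card_erase_of_mem hmem
      have hpos := Finset.card_pos.2 ⟨w, hmem⟩
      have huU : u ∉ U := by
        intro huU; rw [if_pos huU] at hsum; omega
      rw [if_neg huU] at hsum
      exact ⟨U, hU, by simp only [hf]; omega, huU, (Finset.mem_sdiff.1 hmem).1⟩
    · rw [Finset.erase_eq_of_notMem hmem] at hlt
      split_ifs at hsum <;> omega
  have hunion : ∀ C ⊆ (Q.filter (G.Adj u)) \ W, ∃ U : Finset V, U.card ≤ 2 * M ∧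
      f U = ∑ z ∈ U, c z ∧ u ∉ U ∧ C ⊆ nbrsIn G Q U := by
    intro C
    induction C using Finset.induction_on with
    | empty => intro _; exact ⟨∅, by simp, by simp [hf, nbrsIn], by simp, by simp⟩
    | insert w C hw ih =>
      intro hsub
      obtain ⟨U, hU, hUt, huU, hCU⟩ := ih ((Finset.subset_insert _ _).trans hsub)
      obtain ⟨U', hU', hUt', huU', hwU'⟩ := htight w (hsub (Finset.mem_insert_self _ _))
      have h1 := hlarge U hU hUt
      have h2 := hlarge U' hU' hUt'
      have h3 := Finset.card_union_le U U'
      have h4 := h.expand (U ∪ U') (by omega)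
      have h5 := h.expand (U ∩ U') ((Finset.card_le_card Finset.inter_subset_left).trans hU)
      have h6 := card_nbrsIn_sdiff_union_add_inter_le (G := G) (Q := Q) (W := W) U U'
      have h8 := Finset.sum_union_inter (s₁ := U) (s₂ := U') (f := c)
      simp only [hf] at hUt hUt'
      refine ⟨U ∪ U', by omega, by simp only [hf]; omega, ?_, ?_⟩
      · simp [huU, huU']
      · intro v hv
        rcases Finset.mem_insert.1 hv with rfl | hv
        · obtain ⟨a, x, hx, b⟩ := mem_nbrsIn.1 hwU'
          exact mem_nbrsIn.2 ⟨a, x, Finset.mem_union_right _ hx, b⟩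
        · obtain ⟨a, x, hx, b⟩ := mem_nbrsIn.1 (hCU hv)
          exact mem_nbrsIn.2 ⟨a, x, Finset.mem_union_left _ hx, b⟩
  obtain ⟨U, hU, hUt, huU, hCU⟩ := hunion _ (Finset.Subset.refl _)
  have h1 := hlarge U hU hUt
  have h2 := h.expand (insert u U) (by rw [Finset.card_insert_of_notMem huU]; omega)
  rw [Finset.sum_insert huU] at h2
  have h3 : nbrsIn G Q (insert u U) \ W ⊆ nbrsIn G Q U \ W := by
    intro v hv
    obtain ⟨hv1, hvW⟩ := Finset.mem_sdiff.1 hv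
    obtain ⟨hvQ, x, hx, hadj⟩ := mem_nbrsIn.1 hv1
    refine Finset.mem_sdiff.2 ⟨?_, hvW⟩
    rcases Finset.mem_insert.1 hx with rfl | hx
    · exact hCU (Finset.mem_sdiff.2 ⟨Finset.mem_filter.2 ⟨hvQ, hadj⟩, hvW⟩)
    · exact mem_nbrsIn.2 ⟨hvQ, x, hx, hadj⟩
  have h6 := Finset.card_le_card h3
  simp only [hf] at hUt
  omega

end Extendable

section Tree

variable {V : Type*} [DecidableEq V] {G : SimpleGraph V} [DecidableRel G.Adj] {Q : Finset V}
  {D M : ℕ} {W : Finset V} {c : V → ℕ}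

/-- A vertex which is outside the reservoir or has already been used. -/
def Placed (Q W : Finset V) (z : V) : Prop := z ∈ W ∨ z ∉ Q

omit [DecidableEq V] in
lemma Placed.mono {W' : Finset V} {z : V} (h : Placed Q W z) (hW : W ⊆ W') : Placed Q W' z :=
  h.imp_left fun h => hW h

lemma Extendable.exists_children (h : Extendable G Q D M W c) (hjoin : SetsJoined G M)
    (F : Finset V) (hF : ∀ u ∈ F, Placed Q W u) (hc : ∀ u ∈ F, 2 ≤ c u)
    (hroom : W.card + 2 * F.card + (2 * D + 1) * M ≤ Q.card) :
    ∃ (T : Finset V) (par : V → V), T ⊆ Q ∧ Disjoint W T ∧ T.card = 2 * F.card ∧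
      (∀ w ∈ T, par w ∈ F ∧ G.Adj (par w) w) ∧
      (∀ u ∈ F, (T.filter fun w => par w = u).card = 2) ∧
      Extendable G Q D M (W ∪ T) fun z => if z ∈ F then c z - 2 else c z := by
  induction F using Finset.induction_on with
  | empty => exact ⟨∅, id, by simp, by simp, by simp, by simp, by simp, by simpa using h⟩
  | insert u F hu ih =>
    rw [Finset.card_insert_of_notMem hu] at hroom
    obtain ⟨T, par, hTQ, hWT, hTc, hpar, hch, hext⟩ := ih
      (fun v hv => hF v (Finset.mem_insert_of_mem hv))
      (fun v hv => hc v (Finset.mem_insert_of_mem hv)) (by omega)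
    have hcard : (W ∪ T).card = W.card + T.card := Finset.card_union_of_disjoint hWT
    have hup : Placed Q (W ∪ T) u := (hF u (Finset.mem_insert_self _ _)).mono Finset.subset_union_left
    have hcu := hc u (Finset.mem_insert_self _ _)
    obtain ⟨a, haQ, haW, hua, hext1⟩ := hext.exists_leaf hjoin (u := u) (by omega) hup
      (by rw [if_neg hu]; omega)
    obtain ⟨b, hbQ, hbW, hub, hext2⟩ := hext1.exists_leaf hjoin (u := u)
      (by rw [Finset.card_insert_of_notMem haW]; omega) (hup.mono (Finset.subset_insert _ _))
      (by rw [Function.update_self, if_neg hu]; omega)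
    simp only [Finset.mem_insert, Finset.mem_union, not_or] at haW hbW
    have hne : ∀ w ∈ T, w ≠ a ∧ w ≠ b := fun w hw =>
      ⟨fun h => haW.2 (h ▸ hw), fun h => hbW.2.2 (h ▸ hw)⟩
    have hparT : ∀ w ∈ T, (if w = a ∨ w = b then u else par w) = par w := fun w hw =>
      if_neg (by simp [hne w hw])
    refine ⟨insert b (insert a T), fun w => if w = a ∨ w = b then u else par w, ?_, ?_, ?_, ?_, ?_, ?_⟩
    · exact Finset.insert_subset hbQ (Finset.insert_subset haQ hTQ)
    · simp [hWT, haW.1, hbW.2.1]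
    · rw [Finset.card_insert_of_notMem (by simp [hbW.1, hbW.2.2]),
        Finset.card_insert_of_notMem haW.2, Finset.card_insert_of_notMem hu]
      omega
    · intro w hw
      simp only [Finset.mem_insert] at hw
      rcases hw with rfl | rfl | hw
      · simp [hub]
      · simp [hua]
      · beta_reduce; rw [hparT w hw]
        exact ⟨Finset.mem_insert_of_mem (hpar w hw).1, (hpar w hw).2⟩
    · intro v hv
      by_cases hvu : v = u
      · subst hvu
        have : (insert b (insert a T)).filter (fun w => (if w = a ∨ w = b then v else par w) = v) =
            {b, a} := by
          ext w
          simp only [Finset.mem_filter, Finset.mem_insert, Finset.mem_singleton]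
          constructor
          · rintro ⟨rfl | rfl | hw, h2⟩
            · simp
            · simp
            · rw [hparT w hw] at h2
              exact absurd (h2 ▸ (hpar w hw).1) hu
          · rintro (rfl | rfl) <;> simp
        rw [this, Finset.card_pair hbW.1]
      · have hvF := (Finset.mem_insert.1 hv).resolve_left hvu
        rw [← hch v hvF]
        congr 1
        ext w
        simp only [Finset.mem_filter, Finset.mem_insert]
        constructor
        · rintro ⟨rfl | rfl | hw, h2⟩
          · simp at h2; exact absurd h2.symm hvu
          · simp at h2; exact absurd h2.symm hvu
          · rw [hparT w hw] at h2; exact ⟨hw, h2⟩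
        · rintro ⟨hw, h2⟩
          rw [hparT w hw]; exact ⟨Or.inr (Or.inr hw), h2⟩
    · convert hext2 using 1
      · rw [Finset.union_insert, Finset.union_insert]
      · ext z
        rw [Function.update_idem]
        by_cases hz : z = u
        · subst hz; simp [hu]; omega
        · simp [Finset.mem_insert, hz]

/-- Growing a binary tree of depth `j` below the vertex `p`. -/
lemma Extendable.exists_tree (h : Extendable G Q D M W c) (hjoin : SetsJoined G M) (hD : 2 ≤ D)
    {p : V} (hp : Placed Q W p) (hcp : 2 ≤ c p) (j : ℕ)
    (hroom : W.card + 2 ^ (j + 1) + (2 * D + 1) * M ≤ Q.card) :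
    ∃ (T F : Finset V) (par : V → V) (c' : V → ℕ), T ⊆ Q ∧ Disjoint W T ∧ T.card + 2 = 2 ^ (j + 1) ∧
      F.card = 2 ^ j ∧ Extendable G Q D M (W ∪ T) c' ∧
      (∀ w ∈ T, G.Adj (par w) w ∧ (par w ∈ T ∨ par w = p)) ∧
      (∀ u ∈ T, c' u + (T.filter fun w => par w = u).card = D ∧ D ≤ c' u + 2) ∧
      (∀ z, z ∉ T → z ≠ p → c' z = c z) ∧
      (c' p + (T.filter fun w => par w = p).card = c p ∧ c p ≤ c' p + 2) ∧
      ∀ z ∈ F, (z ∈ T ∨ z = p) ∧ 2 ≤ c' z ∧ (∀ w ∈ T, par w ≠ z) ∧ ∃ K ⊆ T, K.card = j ∧ (z ∈ K ∨ z = p) ∧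
        (∀ w ∈ K, par w ∈ K ∨ par w = p) ∧
        ∃ w : G.Walk p z, w.length = j ∧ ∀ v ∈ K, v ∈ w.support := by
  induction j with
  | zero =>
    refine ⟨∅, {p}, id, c, by simp, by simp, by simp, by simp, by simpa using h, by simp, by simp,
      by simp, by simp, ?_⟩
    intro z hz
    obtain rfl := Finset.mem_singleton.1 hz
    exact ⟨Or.inr rfl, hcp, by simp, ∅, by simp, by simp, by simp, by simp, Walk.nil, rfl, by simp⟩
  | succ j ih =>
    have hpow : 2 ^ (j + 1 + 1) = 2 ^ (j + 1) + 2 ^ (j + 1) := by ring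
    have hpow' : 2 ^ (j + 1) = 2 * 2 ^ j := by ring
    obtain ⟨T, F, par, c', hTQ, hWT, hTc, hFc, hext, hpar, hch, hold, hcp', hF⟩ := ih (by omega)
    have hpT : p ∉ T := by
      rcases hp with hp | hp
      · exact Finset.disjoint_left.1 hWT hp
      · exact fun h => hp (hTQ h)
    have hcard : (W ∪ T).card = W.card + T.card := Finset.card_union_of_disjoint hWT
    have hpl : ∀ u, u ∈ T ∨ u = p → Placed Q (W ∪ T) u := by
      rintro u (hu | rfl)
      · exact Or.inl (Finset.mem_union_right _ hu)
      · exact hp.mono Finset.subset_union_left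
    obtain ⟨N, parN, hNQ, hWN, hNc, hparN, hchN, hextN⟩ := hext.exists_children hjoin F
      (fun u hu => hpl u (hF u hu).1) (fun u hu => (hF u hu).2.1) (by omega)
    rw [Finset.disjoint_union_left] at hWN
    have hTN : ∀ w ∈ T, w ∉ N := fun w hw => Finset.disjoint_left.1 hWN.2 hw
    have hplN : ∀ u, u ∈ T ∨ u = p → u ∉ N := by
      rintro u (hu | rfl)
      · exact hTN u hu
      · rcases hp with hp | hp
        · exact Finset.disjoint_left.1 hWN.1 hp
        · exact fun h => hp (hNQ h)
    have hsplit : ∀ u, ((T ∪ N).filter fun w => (if w ∈ N then parN w else par w) = u).card =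
        (T.filter fun w => par w = u).card + (N.filter fun w => parN w = u).card := by
      intro u
      rw [Finset.filter_union, Finset.card_union_of_disjoint]
      · congr 2
        · exact Finset.filter_congr fun w hw => by rw [if_neg (hTN w hw)]
        · exact Finset.filter_congr fun w hw => by rw [if_pos hw]
      · exact Finset.disjoint_filter_filter hWN.2
    have hzeroN : ∀ u, u ∉ F → (N.filter fun w => parN w = u).card = 0 := by
      intro u hu
      rw [Finset.card_eq_zero, Finset.filter_eq_empty_iff]
      rintro w hw rfl
      exact hu (hparN w hw).1
    have hzeroT : ∀ u ∈ F, (T.filter fun w => par w = u).card = 0 := by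
      intro u hu
      rw [Finset.card_eq_zero, Finset.filter_eq_empty_iff]
      exact fun w hw => (hF u hu).2.2.1 w hw
    have hNF : ∀ u ∈ N, u ∉ F := fun u hu huF => hplN u (hF u huF).1 hu
    have hNfresh : ∀ u ∈ N, c' u = D := fun u hu => hext.fresh u (hNQ hu) (by
      rw [Finset.mem_union, not_or]
      exact ⟨fun h => Finset.disjoint_left.1 hWN.1 h hu, fun h => hTN u h hu⟩)
    refine ⟨T ∪ N, N, fun w => if w ∈ N then parN w else par w, fun z => if z ∈ F then c' z - 2 else c' z,
      Finset.union_subset hTQ hNQ, Finset.disjoint_union_right.2 ⟨hWT, hWN.1⟩, ?_, by omega, ?_,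
      ?_, ?_, ?_, ?_, ?_⟩
    · rw [Finset.card_union_of_disjoint hWN.2]; omega
    · rwa [← Finset.union_assoc]
    · intro w hw
      simp only
      by_cases hwN : w ∈ N
      · rw [if_pos hwN]
        refine ⟨(hparN w hwN).2, ?_⟩
        exact (hF _ (hparN w hwN).1).1.imp_left (Finset.mem_union_left _)
      · rw [if_neg hwN]
        have hwT := (Finset.mem_union.1 hw).resolve_right hwN
        exact ⟨(hpar w hwT).1, (hpar w hwT).2.imp_left (Finset.mem_union_left _)⟩
    · intro u hu
      rw [hsplit]
      simp only
      rcases Finset.mem_union.1 hu with hu | hu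
      · have h1 := hch u hu
        by_cases huF : u ∈ F
        · rw [if_pos huF, hchN u huF]
          have h2 := (hF u huF).2.1
          have h3 := hzeroT u huF
          omega
        · rw [if_neg huF, hzeroN u huF]
          omega
      · rw [if_neg (hNF u hu), hzeroN u (hNF u hu), hNfresh u hu]
        have : (T.filter fun w => par w = u).card = 0 := by
          rw [Finset.card_eq_zero, Finset.filter_eq_empty_iff]
          rintro w hw rfl
          exact hplN _ (hpar w hw).2 hu
        omega
    · intro z hz hzp
      rw [Finset.mem_union, not_or] at hz
      beta_reduce; rw [if_neg, hold z hz.1 hzp]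
      intro hzF
      rcases (hF z hzF).1 with h1 | h1
      · exact hz.1 h1
      · exact hzp h1
    · rw [hsplit]
      simp only
      by_cases hpF : p ∈ F
      · rw [if_pos hpF, hchN p hpF]
        have h2 := (hF p hpF).2.1
        have h3 := hzeroT p hpF
        omega
      · rw [if_neg hpF, hzeroN p hpF]
        omega
    · intro z hz
      have hf := (hparN z hz).1
      obtain ⟨-, -, -, K, hKT, hKc, hzK, hKp, w, hw, hwK⟩ := hF _ hf
      refine ⟨Or.inl (Finset.mem_union_right _ hz), ?_, ?_, insert z K, ?_, ?_,
        Or.inl (Finset.mem_insert_self _ _), ?_, ?_⟩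
      · simp only; rw [if_neg (hNF z hz), hNfresh z hz]; exact hD
      · intro v hv hvz
        beta_reduce at hvz
        by_cases hvN : v ∈ N
        · rw [if_pos hvN] at hvz
          exact hNF z hz (hvz ▸ (hparN v hvN).1)
        · rw [if_neg hvN] at hvz
          exact hplN z (hvz ▸ (hpar v ((Finset.mem_union.1 hv).resolve_right hvN)).2) hz
      · exact Finset.insert_subset (Finset.mem_union_right _ hz)
          (hKT.trans Finset.subset_union_left)
      · rw [Finset.card_insert_of_notMem fun h => hTN z (hKT h) hz, hKc]
      · intro v hv
        rcases Finset.mem_insert.1 hv with rfl | hv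
        · beta_reduce; rw [if_pos hz]
          exact hzK.imp_left Finset.mem_insert_of_mem
        · beta_reduce; rw [if_neg (hTN v (hKT hv))]
          exact (hKp v hv).imp_left (Finset.mem_insert_of_mem)
      · refine ⟨w.concat (hparN z hz).2, by rw [Walk.length_concat, hw], ?_⟩
        intro v hv
        rw [Walk.support_concat]
        rcases Finset.mem_insert.1 hv with rfl | hv
        · simp
        · simp [hwK v hv]

end Tree

section Connect

variable {V : Type*} [DecidableEq V] {G : SimpleGraph V} [DecidableRel G.Adj] {Q : Finset V}
  {D M h : ℕ} {W : Finset V} {c : V → ℕ}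

/-- The number of reservoir vertices that are kept free for growing trees of depth `h`. -/
def spareRoom (D M h : ℕ) : ℕ := 4 * 2 ^ h + (2 * D + 1) * M

/-- Two placed vertices can be joined through the reservoir by a path of length `2 * h + 1`. -/
lemma Extendable.exists_short_path (hW : Extendable G Q D M W c) (hjoin : SetsJoined G M)
    (hD : 2 ≤ D) (hM : M ≤ 2 ^ h) (hroom : W.card + spareRoom D M h ≤ Q.card) {p q : V}
    (hp : Placed Q W p) (hq : Placed Q W q) (hpq : p ≠ q) (hcp : 2 ≤ c p) (hcq : 2 ≤ c q) :
    ∃ (K : Finset V) (c' : V → ℕ), Disjoint W K ∧ Extendable G Q D M (W ∪ K) c' ∧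
      K.card = 2 * h ∧ (∃ w : G.Walk p q, w.length = 2 * h + 1 ∧ ∀ v ∈ K, v ∈ w.support) ∧
      (∀ z ∈ K, D ≤ c' z + 2) ∧ (∀ z, z ∉ K → c z ≤ c' z + 2) ∧
      ∀ z, z ∉ K → z ≠ p → z ≠ q → c z ≤ c' z := by
  have hpow : 2 ^ (h + 1) = 2 * 2 ^ h := by ring
  rw [spareRoom] at hroom
  obtain ⟨T₁, F₁, par₁, c₁, hTQ₁, hWT₁, hTc₁, hFc₁, hext₁, hpar₁, hch₁, hold₁, hcp₁, hF₁⟩ :=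
    hW.exists_tree hjoin hD hp hcp h (by omega)
  have hqT₁ : q ∉ T₁ := by
    rcases hq with hq | hq
    · exact Finset.disjoint_left.1 hWT₁ hq
    · exact fun h => hq (hTQ₁ h)
  have hpT₁ : p ∉ T₁ := by
    rcases hp with hp | hp
    · exact Finset.disjoint_left.1 hWT₁ hp
    · exact fun h => hp (hTQ₁ h)
  have hcard : (W ∪ T₁).card = W.card + T₁.card := Finset.card_union_of_disjoint hWT₁
  obtain ⟨T₂, F₂, par₂, c₂, hTQ₂, hWT₂, hTc₂, hFc₂, hext₂, hpar₂, hch₂, hold₂, hcp₂, hF₂⟩ :=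
    hext₁.exists_tree hjoin hD (hq.mono Finset.subset_union_left)
      (by rw [hold₁ q hqT₁ hpq.symm]; exact hcq) h (by omega)
  rw [Finset.disjoint_union_left] at hWT₂
  have hqT₂ : q ∉ T₂ := by
    rcases hq with hq | hq
    · exact Finset.disjoint_left.1 hWT₂.1 hq
    · exact fun h => hq (hTQ₂ h)
  have hpT₂ : p ∉ T₂ := by
    rcases hp with hp | hp
    · exact Finset.disjoint_left.1 hWT₂.1 hp
    · exact fun h => hp (hTQ₂ h)
  have hT : ∀ z ∈ T₁, z ∉ T₂ := fun z hz => Finset.disjoint_left.1 hWT₂.2 hz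
  obtain ⟨z₁, hz₁, z₂, hz₂, hadj⟩ := hjoin F₁ F₂ (by omega) (by omega)
  obtain ⟨-, -, -, K₁, hKT₁, hKc₁, -, hKp₁, w₁, hw₁, hwK₁⟩ := hF₁ z₁ hz₁
  obtain ⟨-, -, -, K₂, hKT₂, hKc₂, -, hKp₂, w₂, hw₂, hwK₂⟩ := hF₂ z₂ hz₂
  have hKT : K₁ ∪ K₂ ⊆ T₁ ∪ T₂ := Finset.union_subset_union hKT₁ hKT₂
  have hWT : Disjoint W (T₁ ∪ T₂) := Finset.disjoint_union_right.2 ⟨hWT₁, hWT₂.1⟩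
  set R := (T₁ ∪ T₂) \ (K₁ ∪ K₂) with hR
  set K := K₁ ∪ K₂ with hK
  have hWR : (W ∪ T₁ ∪ T₂) \ R = W ∪ K := by
    ext v
    have h1 : v ∈ K → v ∈ T₁ ∪ T₂ := fun h => hKT h
    have h2 : v ∈ W → v ∉ T₁ ∪ T₂ := fun h => Finset.disjoint_left.1 hWT h
    simp only [hR, Finset.mem_sdiff, Finset.mem_union] at h1 h2 ⊢
    tauto
  have hext := hext₂.sdiff (R := R) (par := fun w => if w ∈ T₁ then par₁ w else par₂ w)
    (c' := fun z => if z ∈ W ∪ K ∨ z ∉ Q then c₂ z else D)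
    (Finset.sdiff_subset.trans (by rw [Finset.union_assoc]; exact Finset.subset_union_right)) ?_ ?_ ?_ ?_
  · rw [hWR] at hext
    have hval : ∀ z, z ∉ K → c z ≤ c₂ z + 2 ∧ (z ≠ p → z ≠ q → z ∉ T₁ → z ∉ T₂ → c z ≤ c₂ z) ∨
        z ∈ T₁ ∨ z ∈ T₂ := by
      intro z hz
      by_cases h1 : z ∈ T₁
      · exact Or.inr (Or.inl h1)
      by_cases h2 : z ∈ T₂
      · exact Or.inr (Or.inr h2)
      left
      have a1 := hold₁ z h1
      have a2 := hold₂ z h2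
      by_cases hzp : z = p
      · subst hzp
        have := a2 hpq
        exact ⟨by omega, fun h => absurd rfl h⟩
      · have := a1 hzp
        by_cases hzq : z = q
        · subst hzq
          exact ⟨by omega, fun _ h => absurd rfl h⟩
        · have := a2 hzq
          exact ⟨by omega, fun _ _ _ _ => by omega⟩
    refine ⟨K, _, hWT.mono_right hKT, hext, ?_, ⟨w₁.append (w₂.reverse.cons hadj), ?_, ?_⟩, ?_, ?_, ?_⟩
    · rw [Finset.card_union_of_disjoint, hKc₁, hKc₂]
      · omega
      · exact Finset.disjoint_of_subset_left hKT₁ (Finset.disjoint_of_subset_right hKT₂ hWT₂.2)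
    · rw [Walk.length_append, Walk.length_cons, Walk.length_reverse]; omega
    · intro v hv
      rw [Walk.mem_support_append_iff, Walk.support_cons, Walk.support_reverse]
      rcases Finset.mem_union.1 hv with hv | hv
      · exact Or.inl (hwK₁ v hv)
      · exact Or.inr (by simp [hwK₂ v hv])
    · intro z hz
      rw [if_pos (Or.inl (Finset.mem_union_right _ hz))]
      rcases Finset.mem_union.1 hz with hz | hz
      · have h1 := hKT₁ hz
        rw [hold₂ z (hT z h1) (fun h => hqT₁ (h ▸ h1))]
        exact (hch₁ z h1).2
      · exact (hch₂ z (hKT₂ hz)).2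
    · intro z hz
      have h3 := hW.le z
      split_ifs with h1
      · rcases hval z hz with h2 | h2
        · exact h2.1
        · have h4 : z ∈ T₁ ∪ T₂ := Finset.mem_union.2 h2
          rcases h1 with h1 | h1
          · rw [Finset.mem_union] at h1
            exact absurd h4 (Finset.disjoint_left.1 hWT (h1.resolve_right hz))
          · exact absurd (Finset.union_subset hTQ₁ hTQ₂ h4) h1
      · omega
    · intro z hz hzp hzq
      have h3 := hW.le z
      split_ifs with h1
      · have h5 : z ∉ T₁ ∪ T₂ := by
          intro h4
          rcases h1 with h1 | h1
          · rw [Finset.mem_union] at h1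
            exact absurd h4 (Finset.disjoint_left.1 hWT (h1.resolve_right hz))
          · exact absurd (Finset.union_subset hTQ₁ hTQ₂ h4) h1
        rw [Finset.mem_union, not_or] at h5
        rcases hval z hz with h2 | h2
        · exact h2.2 hzp hzq h5.1 h5.2
        · exact absurd h2 (not_or.2 h5)
      · omega
  · intro w hw
    have hw' := (Finset.mem_sdiff.1 hw).1
    split_ifs with h1
    · exact (hpar₁ w h1).1
    · exact (hpar₂ w ((Finset.mem_union.1 hw').resolve_left h1)).1
  · intro z
    split_ifs
    · exact hext₂.le z
    · exact le_rfl
  · intro z hz hzW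
    rw [hWR] at hzW
    exact if_neg (not_or.2 ⟨hzW, not_not.2 hz⟩)
  · intro z
    split_ifs with h1
    · exact Nat.le_add_right _ _
    · rw [not_or, not_not, Finset.mem_union, not_or] at h1
      obtain ⟨⟨hzW, hzK⟩, hzQ⟩ := h1
      by_cases hz1 : z ∈ T₁
      · have h2 := (hch₁ z hz1).1
        rw [hold₂ z (hT z hz1) (fun h => hqT₁ (h ▸ hz1)), ← h2]
        refine Nat.add_le_add_left (Finset.card_le_card ?_) _
        intro w hw
        obtain ⟨hwT, hwz⟩ := Finset.mem_filter.1 hw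
        refine Finset.mem_filter.2 ⟨Finset.mem_sdiff.2 ⟨Finset.mem_union_left _ hwT, ?_⟩, ?_⟩
        · intro hwK
          rcases Finset.mem_union.1 hwK with hwK | hwK
          · rcases hKp₁ w hwK with h3 | h3
            · exact hzK (Finset.mem_union_left _ (hwz ▸ h3))
            · exact hpT₁ (h3 ▸ hwz ▸ hz1)
          · exact hT w hwT (hKT₂ hwK)
        · rw [if_pos hwT]; exact hwz
      by_cases hz2 : z ∈ T₂
      · have h2 := (hch₂ z hz2).1
        rw [← h2]
        refine Nat.add_le_add_left (Finset.card_le_card ?_) _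
        intro w hw
        obtain ⟨hwT, hwz⟩ := Finset.mem_filter.1 hw
        have hwT₁ : w ∉ T₁ := fun h => hT w h hwT
        refine Finset.mem_filter.2 ⟨Finset.mem_sdiff.2 ⟨Finset.mem_union_right _ hwT, ?_⟩, ?_⟩
        · intro hwK
          rcases Finset.mem_union.1 hwK with hwK | hwK
          · exact hwT₁ (hKT₁ hwK)
          · rcases hKp₂ w hwK with h3 | h3
            · exact hzK (Finset.mem_union_right _ (hwz ▸ h3))
            · exact hqT₂ (h3 ▸ hwz ▸ hz2)
        · rw [if_neg hwT₁]; exact hwz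
      · rw [hext₂.fresh z hzQ (by simp [hzW, hz1, hz2])]
        exact Nat.le_add_right _ _

/-- A placed vertex is the start of a path of length `j` through the reservoir. -/
lemma Extendable.exists_path_from (hW : Extendable G Q D M W c) (hjoin : SetsJoined G M)
    (hD : 1 ≤ D) {p : V} (hp : Placed Q W p) (hcp : 1 ≤ c p) (j : ℕ)
    (hroom : W.card + j + (2 * D + 1) * M ≤ Q.card) :
    ∃ (K : Finset V) (c' : V → ℕ) (p' : V), Disjoint W K ∧ Extendable G Q D M (W ∪ K) c' ∧
      K.card = j ∧ (∃ w : G.Walk p p', w.length = j ∧ ∀ v ∈ K, v ∈ w.support) ∧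
      (∀ z ∈ K, D ≤ c' z + 1) ∧ (p' ∈ K ∧ c' p' = D ∧ c p ≤ c' p + 1 ∨ p' = p ∧ c' p = c p) ∧
      ∀ z, z ∉ K → z ≠ p → c z ≤ c' z := by
  induction j with
  | zero =>
    exact ⟨∅, c, p, by simp, by simpa using hW, by simp, ⟨Walk.nil, rfl, by simp⟩, by simp,
      Or.inr ⟨rfl, rfl⟩, fun _ _ _ => le_rfl⟩
  | succ j ih =>
    obtain ⟨K, c', p', hWK, hext, hKc, ⟨w, hw, hwK⟩, hK, hp', hold⟩ := ih (by omega)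
    have hcard : (W ∪ K).card = W.card + K.card := Finset.card_union_of_disjoint hWK
    have hpl' : Placed Q (W ∪ K) p' := by
      rcases hp' with hp' | hp'
      · exact Or.inl (Finset.mem_union_right _ hp'.1)
      · rw [hp'.1]; exact hp.mono Finset.subset_union_left
    have hpK : p ∉ K := by
      rcases hp with hp | hp
      · exact Finset.disjoint_left.1 hWK hp
      · exact fun h => hp (hext.subset (Finset.mem_union_right _ h))
    have hcp' : 0 < c' p' := by
      rcases hp' with hp' | hp'
      · omega
      · rw [hp'.1, hp'.2]; exact hcp
    obtain ⟨a, haQ, haW, hadj, hext'⟩ := hext.exists_leaf hjoin (by omega) hpl' hcp'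
    have hac := hext.fresh a haQ haW
    rw [Finset.mem_union, not_or] at haW
    have hap' : a ≠ p' := hadj.ne'
    refine ⟨insert a K, _, a, ?_, by rwa [Finset.union_insert], ?_, ⟨w.concat hadj, ?_, ?_⟩, ?_, ?_, ?_⟩
    · simp [hWK, haW.1]
    · rw [Finset.card_insert_of_notMem haW.2, hKc]
    · rw [Walk.length_concat, hw]
    · intro v hv
      rw [Walk.support_concat]
      rcases Finset.mem_insert.1 hv with rfl | hv
      · simp
      · simp [hwK v hv]
    · intro z hz
      rcases Finset.mem_insert.1 hz with rfl | hz
      · rw [Function.update_of_ne hap']; omega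
      · by_cases hzp : z = p'
        · subst hzp
          rw [Function.update_self]
          rcases hp' with hp' | hp'
          · omega
          · exact absurd (hp'.1 ▸ hz) hpK
        · rw [Function.update_of_ne hzp]; exact hK z hz
    · refine Or.inl ⟨Finset.mem_insert_self _ _, by rw [Function.update_of_ne hap', hac], ?_⟩
      by_cases hpp : p = p'
      · subst hpp
        rw [Function.update_self]
        rcases hp' with hp' | hp'
        · exact absurd hp'.1 hpK
        · omega
      · rw [Function.update_of_ne hpp]
        rcases hp' with hp' | hp'
        · exact hp'.2.2
        · exact absurd hp'.1.symm hpp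
    · intro z hz hzp
      rw [Finset.mem_insert, not_or] at hz
      have hzp' : z ≠ p' := by
        rintro rfl
        rcases hp' with hp' | hp'
        · exact hz.2 hp'.1
        · exact hzp hp'.1
      rw [Function.update_of_ne hzp']
      exact hold z hz.2 hzp

/-- Two placed vertices can be joined through the reservoir by a path of any length that is at
least `2 * h + 1`. -/
lemma Extendable.exists_path (hW : Extendable G Q D M W c) (hjoin : SetsJoined G M)
    (hD : 2 ≤ D) (hM : M ≤ 2 ^ h) {p q : V} (hp : Placed Q W p) (hq : Placed Q W q) (hpq : p ≠ q)
    (hcp : 2 ≤ c p) (hcq : 2 ≤ c q) {l : ℕ} (hl : 2 * h + 1 ≤ l)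
    (hroom : W.card + l + spareRoom D M h ≤ Q.card) :
    ∃ (K : Finset V) (c' : V → ℕ), Disjoint W K ∧ Extendable G Q D M (W ∪ K) c' ∧
      K.card + 1 = l ∧ (∃ w : G.Walk p q, w.length = l ∧ ∀ v ∈ K, v ∈ w.support) ∧
      (∀ z ∈ K, D ≤ c' z + 2) ∧ (∀ z, z ∉ K → c z ≤ c' z + 2) ∧
      ∀ z, z ∉ K → z ≠ p → z ≠ q → c z ≤ c' z := by
  have hroom' := hroom
  rw [spareRoom] at hroom'
  obtain ⟨K, c', p', hWK, hext, hKc, ⟨w, hw, hwK⟩, hK, hp', hold⟩ :=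
    hW.exists_path_from hjoin (by omega) hp (by omega) (l - (2 * h + 1)) (by omega)
  have hcard : (W ∪ K).card = W.card + K.card := Finset.card_union_of_disjoint hWK
  have hnot : ∀ z, Placed Q W z → z ∉ K := by
    rintro z (hz | hz)
    · exact Finset.disjoint_left.1 hWK hz
    · exact fun h => hz (hext.subset (Finset.mem_union_right _ h))
  have hpK := hnot p hp
  have hqK := hnot q hq
  have hpl' : Placed Q (W ∪ K) p' := by
    rcases hp' with hp' | hp'
    · exact Or.inl (Finset.mem_union_right _ hp'.1)
    · rw [hp'.1]; exact hp.mono Finset.subset_union_left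
  have hne : p' ≠ q := by
    rintro rfl
    rcases hp' with hp' | hp'
    · exact hqK hp'.1
    · exact hpq hp'.1.symm
  have hcp' : 2 ≤ c' p' := by
    rcases hp' with hp' | hp'
    · omega
    · rw [hp'.1, hp'.2]; exact hcp
  obtain ⟨K', c'', hWK', hext', hKc', ⟨w', hw', hwK'⟩, hK', hold2, hold'⟩ :=
    hext.exists_short_path hjoin hD hM (by omega) hpl' (hq.mono Finset.subset_union_left) hne hcp'
      (hcq.trans (hold q hqK hpq.symm))
  rw [Finset.disjoint_union_left] at hWK'
  refine ⟨K ∪ K', c'', Finset.disjoint_union_right.2 ⟨hWK, hWK'.1⟩, by rwa [← Finset.union_assoc],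
    ?_, ⟨w.append w', ?_, ?_⟩, ?_, ?_, ?_⟩
  · rw [Finset.card_union_of_disjoint hWK'.2]; omega
  · rw [Walk.length_append]; omega
  · intro v hv
    rw [Walk.mem_support_append_iff]
    exact (Finset.mem_union.1 hv).imp (hwK v) (hwK' v)
  · intro z hz
    rcases Finset.mem_union.1 hz with hz | hz
    · have hzK' := Finset.disjoint_left.1 hWK'.2 hz
      by_cases hzp : z = p'
      · subst hzp
        rcases hp' with hp' | hp'
        · have := hold2 z hzK'; omega
        · exact absurd (hp'.1 ▸ hz) hpK
      · have h1 := hold' z hzK' hzp (fun h => hqK (h ▸ hz))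
        have h2 := hK z hz
        omega
    · exact hK' z hz
  · intro z hz
    rw [Finset.mem_union, not_or] at hz
    have h1 := hold2 z hz.2
    by_cases hzp : z = p
    · subst hzp
      rcases hp' with hp' | hp'
      · have h2 := hold' z hz.2 (fun h => hz.1 (h ▸ hp'.1)) hpq
        omega
      · omega
    · have h2 := hold z hz.1 hzp
      omega
  · intro z hz hzp hzq
    rw [Finset.mem_union, not_or] at hz
    have hzp' : z ≠ p' := by
      rintro rfl
      rcases hp' with hp' | hp'
      · exact hz.1 hp'.1
      · exact hzp hp'.1
    exact (hold z hz.1 hzp).trans (hold' z hz.2 hzp' hzq)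

/-- A family of disjoint pairs can be joined through the reservoir by paths of prescribed
lengths. -/
lemma Extendable.exists_paths {ι : Type*} (hW : Extendable G Q D M W c)
    (hjoin : SetsJoined G M) (hD : 2 ≤ D) (hM : M ≤ 2 ^ h) (p q : ι → V) (I : Finset ι)
    (hpq : ∀ i j, p i ≠ q j) (hpi : p.Injective) (hqi : q.Injective)
    (hp : ∀ i, Placed Q W (p i)) (hq : ∀ i, Placed Q W (q i)) (hcp : ∀ i, 2 ≤ c (p i))
    (hcq : ∀ i, 2 ≤ c (q i)) (l : ι → ℕ) (hl : ∀ i, 2 * h + 1 ≤ l i)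
    (hroom : W.card + ∑ i ∈ I, l i + spareRoom D M h ≤ Q.card) :
    ∃ (K : Finset V) (c' : V → ℕ), Disjoint W K ∧ Extendable G Q D M (W ∪ K) c' ∧
      K.card + I.card = ∑ i ∈ I, l i ∧
      (∃ w : ∀ i ∈ I, G.Walk (p i) (q i), (∀ i hi, (w i hi).length = l i) ∧
        ∀ v ∈ K, ∃ i hi, v ∈ (w i hi).support) ∧
      (∀ z ∈ K, D ≤ c' z + 2) ∧ (∀ z, z ∉ K → c z ≤ c' z + 2) ∧
      ∀ z, z ∉ K → (∀ i ∈ I, z ≠ p i) → (∀ i ∈ I, z ≠ q i) → c z ≤ c' z := by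
  classical
  induction I using Finset.induction_on with
  | empty =>
    exact ⟨∅, c, by simp, by simpa using hW, by simp,
      ⟨fun i hi => absurd hi (Finset.notMem_empty i), fun i hi => absurd hi (Finset.notMem_empty i),
        by simp⟩, by simp, fun z _ => by omega, fun _ _ _ _ => le_rfl⟩
  | insert a I ha ih =>
    rw [Finset.sum_insert ha] at hroom ⊢
    obtain ⟨K, c', hWK, hext, hKc, ⟨w, hw, hwK⟩, hK, hold2, hold⟩ := ih (by omega)
    have hcard : (W ∪ K).card = W.card + K.card := Finset.card_union_of_disjoint hWK
    have hnot : ∀ z, Placed Q W z → z ∉ K := by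
      rintro z (hz | hz)
      · exact Finset.disjoint_left.1 hWK hz
      · exact fun h => hz (hext.subset (Finset.mem_union_right _ h))
    have hpK := hnot _ (hp a)
    have hqK := hnot _ (hq a)
    have hneI : ∀ i ∈ I, a ≠ i := fun i hi h => ha (h ▸ hi)
    obtain ⟨K', c'', hWK', hext', hKc', ⟨w', hw', hwK'⟩, hK', hold2', hold'⟩ :=
      hext.exists_path hjoin hD hM ((hp a).mono Finset.subset_union_left)
        ((hq a).mono Finset.subset_union_left) (hpq a a)
        ((hcp a).trans (hold _ hpK (fun i hi h => hneI i hi (hpi h)) fun i _ => hpq a i))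
        ((hcq a).trans (hold _ hqK (fun i _ => (hpq i a).symm) fun i hi h => hneI i hi (hqi h)))
        (hl a) (by omega)
    rw [Finset.disjoint_union_left] at hWK'
    refine ⟨K ∪ K', c'', Finset.disjoint_union_right.2 ⟨hWK, hWK'.1⟩, by rwa [← Finset.union_assoc],
      ?_, ⟨fun i hi => if hia : i = a then w'.copy (hia ▸ rfl) (hia ▸ rfl) else
        w i ((Finset.mem_insert.1 hi).resolve_left hia), ?_, ?_⟩, ?_, ?_, ?_⟩
    · rw [Finset.card_union_of_disjoint hWK'.2, Finset.card_insert_of_notMem ha]; omega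
    · intro i hi
      beta_reduce
      split_ifs with hia
      · subst hia; rw [Walk.length_copy, hw']
      · exact hw i _
    · intro v hv
      rcases Finset.mem_union.1 hv with hv | hv
      · obtain ⟨i, hi, hiv⟩ := hwK v hv
        refine ⟨i, Finset.mem_insert_of_mem hi, ?_⟩
        beta_reduce
        rw [dif_neg (hneI i hi).symm]
        exact hiv
      · refine ⟨a, Finset.mem_insert_self _ _, ?_⟩
        beta_reduce
        rw [dif_pos rfl, Walk.support_copy]
        exact hwK' v hv
    · intro z hz
      rcases Finset.mem_union.1 hz with hz | hz
      · have hzK' := Finset.disjoint_left.1 hWK'.2 hz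
        exact (hK z hz).trans (Nat.add_le_add_right
          (hold' z hzK' (fun h => hpK (h ▸ hz)) (fun h => hqK (h ▸ hz))) 2)
      · exact hK' z hz
    · intro z hz
      rw [Finset.mem_union, not_or] at hz
      by_cases hzp : z = p a
      · have h1 := hold z hz.1 (fun i hi h => hneI i hi (hpi (hzp ▸ h)))
          (fun i _ h => hpq a i (hzp ▸ h))
        exact h1.trans (hold2' z hz.2)
      by_cases hzq : z = q a
      · have h1 := hold z hz.1 (fun i _ h => hpq i a (h.symm.trans hzq))
          (fun i hi h => hneI i hi (hqi (hzq ▸ h)))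
        exact h1.trans (hold2' z hz.2)
      · exact (hold2 z hz.1).trans (Nat.add_le_add_right (hold' z hz.2 hzp hzq) 2)
    · intro z hz hzp hzq
      rw [Finset.mem_union, not_or] at hz
      exact (hold z hz.1 (fun i hi => hzp i (Finset.mem_insert_of_mem hi))
        (fun i hi => hzq i (Finset.mem_insert_of_mem hi))).trans
        (hold' z hz.2 (hzp a (Finset.mem_insert_self _ _)) (hzq a (Finset.mem_insert_self _ _)))

end Connect

section Switch

variable {V : Type*} [DecidableEq V] {G : SimpleGraph V}

lemma Walk.isPath_of_card {p q : V} {w : G.Walk p q} {K : Finset V} (hK : ∀ v ∈ K, v ∈ w.support)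
    (hl : w.length = K.card + 1) (hp : p ∉ K) (hq : q ∉ K) (hpq : p ≠ q) :
    w.IsPath ∧ ∀ v ∈ w.support, v ∈ K ∨ v = p ∨ v = q := by
  have hcard : (insert p (insert q K)).card = K.card + 2 := by
    rw [Finset.card_insert_of_notMem (by simp [hp, hpq]), Finset.card_insert_of_notMem hq]
  have hsub : insert p (insert q K) ⊆ w.support.toFinset := by
    intro v hv
    simp only [Finset.mem_insert] at hv
    rw [List.mem_toFinset]
    rcases hv with rfl | rfl | hv
    · exact w.start_mem_support
    · exact w.end_mem_support
    · exact hK v hv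
  have hlen := w.length_support
  have h1 := Finset.card_le_card hsub
  have h2 := w.support.toFinset_card_le
  constructor
  · rw [Walk.isPath_def]
    exact List.dedup_eq_self.1 ((List.dedup_sublist _).eq_of_length_le (by
      rw [← List.card_toFinset]; omega))
  · intro v hv
    have h3 := Finset.eq_of_subset_of_card_le hsub (by omega)
    have : v ∈ insert p (insert q K) := by rw [h3]; exact List.mem_toFinset.2 hv
    simp only [Finset.mem_insert] at this
    tauto

omit [DecidableEq V] in
/-- In a ladder with rungs of length `s`, one can zigzag from the bottom to either end of the top
rung along all the rungs. -/
lemma exists_zigzag (A B : ℕ → V) {x : V} {s k : ℕ} (hA : G.Adj x (A 0)) (hB : G.Adj x (B 0))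
    (hA' : ∀ i, i + 1 < k → G.Adj (A i) (A (i + 1)))
    (hB' : ∀ i, i + 1 < k → G.Adj (B i) (B (i + 1)))
    (R : ∀ i < k, G.Walk (A i) (B i)) (hR : ∀ i hi, (R i hi).length = s) (i : ℕ) (hi : i < k) :
    (∃ w : G.Walk x (A i), w.length = (i + 1) * (s + 1) ∧
      ∀ j hj, j ≤ i → ∀ v ∈ (R j hj).support, v ∈ w.support) ∧
    ∃ w : G.Walk x (B i), w.length = (i + 1) * (s + 1) ∧
      ∀ j hj, j ≤ i → ∀ v ∈ (R j hj).support, v ∈ w.support := by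
  induction i with
  | zero =>
    refine ⟨⟨(R 0 hi).reverse.cons hB, ?_, ?_⟩, ⟨(R 0 hi).cons hA, ?_, ?_⟩⟩
    · rw [Walk.length_cons, Walk.length_reverse, hR]; ring
    · intro j hj hj0 v hv
      obtain rfl := Nat.le_zero.1 hj0
      simp [hv]
    · rw [Walk.length_cons, hR]; ring
    · intro j hj hj0 v hv
      obtain rfl := Nat.le_zero.1 hj0
      simp [hv]
  | succ i ih =>
    obtain ⟨⟨wA, hwA, hwA'⟩, wB, hwB, hwB'⟩ := ih (by omega)
    refine ⟨⟨wB.append ((R (i + 1) hi).reverse.cons (hB' i hi)), ?_, ?_⟩,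
      ⟨wA.append ((R (i + 1) hi).cons (hA' i hi)), ?_, ?_⟩⟩
    · rw [Walk.length_append, Walk.length_cons, Walk.length_reverse, hR, hwB]; ring
    · intro j hj hji v hv
      rw [Walk.mem_support_append_iff]
      rcases Nat.lt_or_ge i j with h | h
      · obtain rfl : j = i + 1 := by omega
        right; simp [hv]
      · exact Or.inl (hwB' j hj h v hv)
    · rw [Walk.length_append, Walk.length_cons, hR, hwA]; ring
    · intro j hj hji v hv
      rw [Walk.mem_support_append_iff]
      rcases Nat.lt_or_ge i j with h | h
      · obtain rfl : j = i + 1 := by omega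
        right; simp [hv]
      · exact Or.inl (hwA' j hj h v hv)

variable [DecidableRel G.Adj] {Q : Finset V} {D M h : ℕ}

/-- From every extendable state with `room` spare vertices and every family `x` of entrances with
enough budget, one can build a network with exits `y` which for each permutation in `Pm` links the
entrances to the correspondingly permuted exits by paths of length `L` using every vertex of the
network. -/
def Routable (G : SimpleGraph V) [DecidableRel G.Adj] (Q : Finset V) (D M room : ℕ) (ι : Type)
    [Fintype ι] (L : ℕ) (Pm : Set (Equiv.Perm ι)) : Prop :=
  ∀ (W : Finset V) (c : V → ℕ) (x : ι → V), Extendable G Q D M W c →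
    W.card + Fintype.card ι * L + room ≤ Q.card → x.Injective → (∀ i, Placed Q W (x i)) →
    (∀ i, 4 ≤ c (x i)) → ∃ (K : Finset V) (c' : V → ℕ) (y : ι → V), Disjoint W K ∧
      Extendable G Q D M (W ∪ K) c' ∧ K.card = Fintype.card ι * L ∧ y.Injective ∧
      (∀ i, y i ∈ K ∨ ∃ j, y i = x j) ∧ (∀ i, 4 ≤ c' (y i)) ∧
      (∀ z, z ∉ K → (∀ i, z ≠ x i) → c z ≤ c' z) ∧ ∀ σ ∈ Pm, Linked G K L x (y ∘ σ)

/-- The number of vertices of each path through a switch. -/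
def switchLength (h : ℕ) : ℕ := h * (2 * h + 2) + 1

theorem routable_bool (hjoin : SetsJoined G M) (hD : 10 ≤ D) (hM : M ≤ 2 ^ h) (hh : 1 ≤ h) :
    Routable G Q D M (spareRoom D M h + 1) Bool (switchLength h) Set.univ := by
  intro W c x hW hroom hxi hxp hxc
  have hroom0 := hroom
  rw [Fintype.card_bool, switchLength] at hroom
  have hpoly : 2 * (h * (2 * h + 2) + 1) =
      (2 * h + 3) + (h * (2 * h + 1) - h) + (h * (2 * h + 2) - 1) := by
    have : h * (2 * h + 2) = h * (2 * h + 1) + h := by ring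
    have : h ≤ h * (2 * h + 1) := Nat.le_mul_of_pos_right _ (by omega)
    omega
  have hle1 : h ≤ h * (2 * h + 1) := Nat.le_mul_of_pos_right _ (by omega)
  have hle2 : 2 * h + 2 ≤ h * (2 * h + 2) := Nat.le_mul_of_pos_left _ (by omega)
  have hle3 : h * (2 * h + 2) = h * (2 * h + 1) + h := by ring
  have hxne : x true ≠ x false := fun h => by simpa using hxi h
  obtain ⟨a, haQ, haW, hadj, hext1⟩ := hW.exists_leaf hjoin (u := x false)
    (by have : spareRoom D M h = 4 * 2 ^ h + (2 * D + 1) * M := rfl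
        omega) (hxp false) (by have := hxc false; omega)
  have hca := hW.fresh a haQ haW
  have hax : a ≠ x false := hadj.ne'
  have hxnot : ∀ b, ∀ v ∈ Q, v ∉ W → v ≠ x b := by
    rintro b v hvQ hvW rfl
    rcases hxp b with h | h
    · exact hvW h
    · exact h hvQ
  have hplW1 : ∀ b, Placed Q (insert a W) (x b) := fun b => (hxp b).mono (Finset.subset_insert _ _)
  obtain ⟨K₁, c₂, hWK₁, hext2, hKc₁, ⟨w, hw, hwK₁⟩, hK₁, hlose₂, hold₂⟩ :=
    hext1.exists_path hjoin (by omega) hM (p := a) (q := x false) (l := 2 * h + 3)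
      (Or.inl (Finset.mem_insert_self _ _)) (hplW1 false) hax
      (by rw [Function.update_of_ne hax]; omega)
      (by rw [Function.update_self]; have := hxc false; omega) (by omega)
      (by rw [Finset.card_insert_of_notMem haW]; omega)
  have hK₁Q : K₁ ⊆ Q := Finset.subset_union_right.trans hext2.subset
  rw [Finset.disjoint_insert_left] at hWK₁
  have hK₁W : ∀ v ∈ K₁, v ∉ W := fun v hv hvW => Finset.disjoint_left.1 hWK₁.2 hvW hv
  have hxK₁ : ∀ b, x b ∉ K₁ := fun b hb => hxnot b _ (hK₁Q hb) (hK₁W _ hb) rfl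
  obtain ⟨hpath, hsupp⟩ := Walk.isPath_of_card hwK₁ (by omega) hWK₁.1 (hxK₁ false) hax
  have hinj : ∀ i j, i ≤ 2 * h + 3 → j ≤ 2 * h + 3 → w.getVert i = w.getVert j → i = j := by
    intro i j hi hj hij
    exact hpath.getVert_injOn (by simp; omega) (by simp; omega) hij
  have hcyc : ∀ i, i ≤ 2 * h + 2 → w.getVert i ∈ insert a K₁ := by
    intro i hi
    rcases hsupp _ (w.getVert_mem_support i) with h1 | h1 | h1
    · exact Finset.mem_insert_of_mem h1
    · exact Finset.mem_insert.2 (Or.inl h1)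
    · have := hinj i (2 * h + 3) (by omega) le_rfl (by rw [h1, ← hw, w.getVert_length])
      omega
  have hcycW : ∀ v ∈ insert a K₁, v ∈ Q ∧ v ∉ W := by
    intro v hv
    rcases Finset.mem_insert.1 hv with rfl | hv
    · exact ⟨haQ, haW⟩
    · exact ⟨hK₁Q hv, hK₁W v hv⟩
  have hcycx : ∀ i, i ≤ 2 * h + 2 → ∀ b, w.getVert i ≠ x b := fun i hi b =>
    hxnot b _ (hcycW _ (hcyc i hi)).1 (hcycW _ (hcyc i hi)).2
  have hcycc : ∀ i, i ≤ 2 * h + 2 → D ≤ c₂ (w.getVert i) + 2 := by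
    intro i hi
    rcases Finset.mem_insert.1 (hcyc i hi) with h1 | h1
    · rw [h1]
      have := hlose₂ a hWK₁.1
      rw [Function.update_of_ne hax] at this
      omega
    · exact hK₁ _ h1
  have hW2 : insert a W ∪ K₁ = W ∪ insert a K₁ := by
    rw [Finset.insert_union, Finset.union_insert]
  rw [hW2] at hext2
  have hW2c : (W ∪ insert a K₁).card = W.card + (2 * h + 3) := by
    rw [Finset.card_union_of_disjoint, Finset.card_insert_of_notMem hWK₁.1]
    · omega
    · exact Finset.disjoint_right.2 fun v hv => (hcycW v hv).2
  have hplcyc : ∀ i, i ≤ 2 * h + 2 → Placed Q (W ∪ insert a K₁) (w.getVert i) := fun i hi =>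
    Or.inl (Finset.mem_union_right _ (hcyc i hi))
  obtain ⟨K₂, c₃, hWK₂, hext3, hKc₂, ⟨R, hR, hRK₂⟩, -, -, hold₃⟩ :=
    hext2.exists_paths hjoin (by omega) hM (fun j : Fin h => w.getVert (2 * h + 2 - j))
      (fun j : Fin h => w.getVert j) Finset.univ
      (fun i j hij => by have := hinj _ _ (by omega) (by omega) hij; omega)
      (fun i j hij => by have := hinj _ _ (by omega) (by omega) hij; omega)
      (fun i j hij => by have := hinj _ _ (by omega) (by omega) hij; omega)
      (fun i => hplcyc _ (by omega)) (fun i => hplcyc _ (by omega))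
      (fun i => by have := hcycc (2 * h + 2 - i) (by omega); omega)
      (fun i => by have := hcycc i (by omega); omega)
      (fun _ => 2 * h + 1) (fun _ => le_rfl) (by
        rw [Finset.sum_const, Finset.card_univ, Fintype.card_fin, smul_eq_mul]; omega)
  rw [Finset.sum_const, Finset.card_univ, Fintype.card_fin, smul_eq_mul] at hKc₂
  have hK₂Q : K₂ ⊆ Q := Finset.subset_union_right.trans hext3.subset
  have hWK₂' := Finset.disjoint_union_left.1 hWK₂
  have hK₂W : ∀ v ∈ K₂, v ∉ W := fun v hv hvW => Finset.disjoint_left.1 hWK₂'.1 hvW hv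
  have hcycK₂ : ∀ i, i ≤ 2 * h + 2 → w.getVert i ∉ K₂ := fun i hi =>
    Finset.disjoint_left.1 hWK₂'.2 (hcyc i hi)
  have hxK₂ : ∀ b, x b ∉ K₂ := fun b hb => hxnot b _ (hK₂Q hb) (hK₂W _ hb) rfl
  have hW3c : (W ∪ insert a K₁ ∪ K₂).card = W.card + (2 * h + 3) + (h * (2 * h + 1) - h) := by
    rw [Finset.card_union_of_disjoint hWK₂]; omega
  have hmid : ∀ i, h ≤ i → i ≤ h + 2 → D ≤ c₃ (w.getVert i) + 2 := by
    intro i hi hi'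
    have h1 := hold₃ (w.getVert i) (hcycK₂ i (by omega))
      (fun j _ hij => by have := hinj _ _ (by omega) (by omega) hij; omega)
      (fun j _ hij => by have := hinj _ _ (by omega) (by omega) hij; omega)
    have h2 := hcycc i (by omega)
    omega
  obtain ⟨K₃, c₄, hWK₃, hext4, hKc₃, ⟨w', hw', hwK₃⟩, -, -, hold₄⟩ :=
    hext3.exists_path hjoin (by omega) hM (p := x true) (q := w.getVert (h + 1))
      (l := h * (2 * h + 2))
      ((hxp true).mono (Finset.subset_union_left.trans Finset.subset_union_left))
      ((hplcyc (h + 1) (by omega)).mono Finset.subset_union_left) (hcycx _ (by omega) _).symm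
      (by
        have h1 := hold₃ (x true) (hxK₂ true) (fun j _ => (hcycx _ (by omega) _).symm)
          (fun j _ => (hcycx _ (by omega) _).symm)
        have h2 := hold₂ (x true) (hxK₁ true) (hxnot true a haQ haW).symm hxne
        rw [Function.update_of_ne hxne] at h2
        have := hxc true
        omega)
      (by have := hmid (h + 1) (by omega) (by omega); omega) (by omega) (by omega)
  have hWK₃' := Finset.disjoint_union_left.1 hWK₃
  have hWK₃'' := Finset.disjoint_union_left.1 hWK₃'.1
  have hcycK₃ : ∀ i, i ≤ 2 * h + 2 → w.getVert i ∉ K₃ := fun i hi =>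
    Finset.disjoint_left.1 hWK₃''.2 (hcyc i hi)
  have hadjw : ∀ i, i < 2 * h + 3 → G.Adj (w.getVert i) (w.getVert (i + 1)) := fun i hi =>
    w.adj_getVert_succ (by omega)
  have hzig := exists_zigzag (fun i => w.getVert (2 * h + 2 - i)) (fun i => w.getVert i) (k := h)
    (x := x false) (s := 2 * h + 1)
    (by
      have := hadjw (2 * h + 2) (by omega)
      rw [show 2 * h + 2 + 1 = w.length by omega, w.getVert_length] at this
      exact this.symm) (by simpa using hadj)
    (fun i hi => by
      have := hadjw (2 * h + 2 - (i + 1)) (by omega)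
      rw [show 2 * h + 2 - (i + 1) + 1 = 2 * h + 2 - i by omega] at this
      exact this.symm) (fun i hi => hadjw i (by omega))
    (fun i hi => R ⟨i, hi⟩ (Finset.mem_univ _)) (fun i hi => hR _ _) (h - 1) (by omega)
  obtain ⟨⟨wA, hwA, hwA'⟩, wB, hwB, hwB'⟩ := hzig
  have hAadj : G.Adj (w.getVert (2 * h + 2 - (h - 1))) (w.getVert (h + 2)) := by
    have := hadjw (h + 2) (by omega)
    rw [show 2 * h + 2 - (h - 1) = h + 2 + 1 by omega]
    exact this.symm
  have hBadj : G.Adj (w.getVert (h - 1)) (w.getVert h) := by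
    have := hadjw (h - 1) (by omega)
    rwa [show h - 1 + 1 = h by omega] at this
  have hlenh : (h - 1 + 1) * (2 * h + 1 + 1) = h * (2 * h + 2) := by
    rw [show h - 1 + 1 = h by omega]
  set K := insert a K₁ ∪ K₂ ∪ K₃ with hKdef
  set y : Bool → V := fun b => if b then w.getVert (h + 2) else w.getVert h with hy
  have hcover : ∀ (u₁ : V) (w₁ : G.Walk (x false) u₁) (u₂ : V) (w₂ : G.Walk (x true) u₂),
      (∀ j hj, j ≤ h - 1 → ∀ v ∈ (R ⟨j, hj⟩ (Finset.mem_univ _)).support, v ∈ w₁.support) →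
      (∀ v ∈ w'.support, v ∈ w₂.support) →
      (∀ i, i = h ∨ i = h + 2 → w.getVert i ∈ w₁.support ∨ w.getVert i ∈ w₂.support) →
      ∀ v ∈ K, v ∈ w₁.support ∨ v ∈ w₂.support := by
    intro u₁ w₁ u₂ w₂ h1 h2 h3 v hv
    rcases Finset.mem_union.1 hv with hv | hv
    · rcases Finset.mem_union.1 hv with hv | hv
      · have hv' : v ∈ w.support := by
          rcases Finset.mem_insert.1 hv with rfl | hv
          · exact w.start_mem_support
          · exact hwK₁ v hv
        obtain ⟨i, hiv, hi⟩ := Walk.mem_support_iff_exists_getVert.1 hv'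
        subst hiv
        rw [hw] at hi
        have hi' : i ≠ 2 * h + 3 := by
          rintro rfl
          rw [← hw, w.getVert_length] at hv
          exact hxnot false _ (hcycW _ hv).1 (hcycW _ hv).2 rfl
        rcases Nat.lt_or_ge i h with hih | hih
        · exact Or.inl (h1 i hih (by omega) _ (Walk.end_mem_support _))
        by_cases hi1 : i = h + 1
        · subst hi1
          exact Or.inr (h2 _ w'.end_mem_support)
        by_cases hi2 : i = h ∨ i = h + 2
        · exact h3 i hi2
        · left
          refine h1 (2 * h + 2 - i) (by omega) (by omega) _ ?_
          have h4 := Walk.start_mem_support (R ⟨2 * h + 2 - i, by omega⟩ (Finset.mem_univ _))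
          have h5 : 2 * h + 2 - (2 * h + 2 - i) = i := by omega
          have h6 : w.getVert (2 * h + 2 - (2 * h + 2 - i)) = w.getVert i := by rw [h5]
          exact h6 ▸ h4
      · obtain ⟨j, hj, hjv⟩ := hRK₂ v hv
        exact Or.inl (h1 j j.2 (by omega) v hjv)
    · exact Or.inr (h2 v (hwK₃ v hv))
  refine ⟨K, c₄, y, ?_, ?_, ?_, ?_, ?_, ?_, ?_, ?_⟩
  · rw [hKdef, Finset.disjoint_union_right, Finset.disjoint_union_right]
    exact ⟨⟨Finset.disjoint_right.2 fun v hv => (hcycW v hv).2, hWK₂'.1⟩, hWK₃''.1⟩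
  · rwa [hKdef, ← Finset.union_assoc, ← Finset.union_assoc]
  · rw [hKdef, Finset.card_union_of_disjoint, Finset.card_union_of_disjoint hWK₂'.2,
      Finset.card_insert_of_notMem hWK₁.1, Fintype.card_bool, switchLength]
    · omega
    · exact Finset.disjoint_union_left.2 ⟨hWK₃''.2, hWK₃'.2⟩
  · intro b b' hbb
    cases b <;> cases b' <;> simp only [hy] at hbb ⊢ <;> simp at hbb
    · have := hinj _ _ (by omega) (by omega) hbb; omega
    · have := hinj _ _ (by omega) (by omega) hbb; omega
  · intro b
    left
    refine Finset.mem_union_left _ (Finset.mem_union_left _ ?_)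
    cases b
    · exact hcyc h (by omega)
    · exact hcyc (h + 2) (by omega)
  · have h1 : ∀ i, i = h ∨ i = h + 2 → 4 ≤ c₄ (w.getVert i) := by
      intro i hi
      have h1 := hmid i (by omega) (by omega)
      have h2 := hold₄ (w.getVert i) (hcycK₃ i (by omega)) (hcycx i (by omega) _)
        (fun hij => by have := hinj _ _ (by omega) (by omega) hij; omega)
      omega
    intro b
    cases b
    · exact h1 h (Or.inl rfl)
    · exact h1 (h + 2) (Or.inr rfl)
  · intro z hz hzx
    simp only [hKdef, Finset.mem_union, not_or] at hz
    have hzc : ∀ i, i ≤ 2 * h + 2 → z ≠ w.getVert i := by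
      rintro i hi rfl
      exact hz.1.1 (hcyc i hi)
    have hz' := hz.1.1
    rw [Finset.mem_insert, not_or] at hz'
    have h1 := hold₂ z hz'.2 hz'.1 (hzx false)
    rw [Function.update_of_ne (hzx false)] at h1
    have h2 := hold₃ z hz.1.2 (fun j _ => hzc _ (by omega)) (fun j _ => hzc _ (by omega))
    have h3 := hold₄ z hz.2 (hzx true) (hzc _ (by omega))
    omega
  · intro σ _
    have h11 : G.Adj (w.getVert (h + 1)) (w.getVert (h + 2)) := hadjw (h + 1) (by omega)
    have h10 : G.Adj (w.getVert (h + 1)) (w.getVert h) := (hadjw h (by omega)).symm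
    rcases Bool.eq_false_or_eq_true (σ false) with h0 | h0
    · have h0' : σ true = false := by
        rcases Bool.eq_false_or_eq_true (σ true) with h1 | h1
        · exact absurd (σ.injective (h1.trans h0.symm)) (by decide)
        · exact h1
      have hc := hcover _ (wA.concat hAadj) _ (w'.concat h10)
        (fun j hj hjh v hv => by rw [Walk.support_concat]; simp [hwA' j hj hjh v hv])
        (fun v hv => by rw [Walk.support_concat]; simp [hv])
        (by rintro i (rfl | rfl)
            · exact Or.inr (Walk.end_mem_support _)
            · exact Or.inl (Walk.end_mem_support _))
      refine ⟨fun b => match b with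
        | false => (wA.concat hAadj).copy rfl (by simp [hy, h0])
        | true => (w'.concat h10).copy rfl (by simp [hy, h0']), ?_, ?_⟩
      · rintro (_ | _)
        · simp only [Walk.length_copy, Walk.length_concat, switchLength]; omega
        · simp only [Walk.length_copy, Walk.length_concat, switchLength]; omega
      · intro v hv
        rcases hc v hv with h1 | h1
        · exact ⟨false, by rw [Walk.support_copy]; exact h1⟩
        · exact ⟨true, by rw [Walk.support_copy]; exact h1⟩
    · have h0' : σ true = true := by
        rcases Bool.eq_false_or_eq_true (σ true) with h1 | h1
        · exact h1
        · exact absurd (σ.injective (h1.trans h0.symm)) (by decide)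
      have hc := hcover _ (wB.concat hBadj) _ (w'.concat h11)
        (fun j hj hjh v hv => by rw [Walk.support_concat]; simp [hwB' j hj hjh v hv])
        (fun v hv => by rw [Walk.support_concat]; simp [hv])
        (by rintro i (rfl | rfl)
            · exact Or.inl (Walk.end_mem_support _)
            · exact Or.inr (Walk.end_mem_support _))
      refine ⟨fun b => match b with
        | false => (wB.concat hBadj).copy rfl (by simp [hy, h0])
        | true => (w'.concat h11).copy rfl (by simp [hy, h0']), ?_, ?_⟩
      · rintro (_ | _)
        · simp only [Walk.length_copy, Walk.length_concat, switchLength]; omega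
        · simp only [Walk.length_copy, Walk.length_concat, switchLength]; omega
      · intro v hv
        rcases hc v hv with h1 | h1
        · exact ⟨false, by rw [Walk.support_copy]; exact h1⟩
        · exact ⟨true, by rw [Walk.support_copy]; exact h1⟩

end Switch

section Network

open Equiv

/-- The decomposition of a permutation behind Beneš networks. -/
lemma exists_benes_decomposition {κ : Type*} [Fintype κ] (σ : Perm (κ × Bool)) :
    ∃ (f₁ f₂ : κ → Perm Bool) (g : Bool → Perm κ), ∀ k b,
      σ (k, b) = (g (f₁ k b) k, f₂ (g (f₁ k b) k) (f₁ k b)) := by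
  classical
  obtain ⟨a, ha, hat⟩ := (Finset.all_card_le_biUnion_card_iff_exists_injective
    (fun k : κ => ({(σ (k, false)).1, (σ (k, true)).1} : Finset κ))).1 (by
    intro S
    have h1 : (S ×ˢ (Finset.univ : Finset Bool)).card ≤ ((S.biUnion fun k : κ =>
        ({(σ (k, false)).1, (σ (k, true)).1} : Finset κ)) ×ˢ (Finset.univ : Finset Bool)).card := by
      refine Finset.card_le_card_of_injOn σ ?_ σ.injective.injOn
      rintro ⟨k, b⟩ hk
      have hk' : k ∈ S := by simpa using hk
      simp only [Finset.coe_product, Set.mem_prod, Finset.mem_coe, Finset.mem_biUnion,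
        Finset.mem_univ, and_true]
      exact ⟨k, hk', by cases b <;> simp⟩
    simp only [Finset.card_product, Finset.card_univ, Fintype.card_bool] at h1
    omega)
  have hβ : ∀ k, ∃ b, (σ (k, b)).1 = a k := by
    intro k
    have := hat k
    simp only [Finset.mem_insert, Finset.mem_singleton] at this
    rcases this with h | h
    · exact ⟨false, h.symm⟩
    · exact ⟨true, h.symm⟩
  choose β hβ using hβ
  have hg : ∀ b, Function.Bijective fun k => (σ (k, xor b (β k))).1 := by
    rintro (_ | _)
    · refine Finite.injective_iff_bijective.1 fun k k' h => ha ?_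
      simpa [hβ] using h
    · refine Finite.surjective_iff_bijective.1 fun k' => ?_
      obtain ⟨k, rfl⟩ := (Finite.injective_iff_bijective.1 ha).2 k'
      obtain ⟨⟨k₂, c⟩, hk₂⟩ := σ.surjective (a k, !(σ (k, β k)).2)
      refine ⟨k₂, ?_⟩
      by_cases hc : c = β k₂
      · subst hc
        have h1 := hβ k₂
        rw [hk₂] at h1
        obtain rfl := ha h1
        rw [hk₂] at hk₂
        simpa using congrArg Prod.snd hk₂
      · have : xor true (β k₂) = c := by
          cases c <;> cases h : β k₂ <;> simp_all
        simp only [this, hk₂]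
  let g : Bool → Perm κ := fun b => Equiv.ofBijective _ (hg b)
  have hgdef : ∀ b k, g b k = (σ (k, xor b (β k))).1 := fun b k => rfl
  have hf₂ : ∀ k', Function.Bijective fun b =>
      (σ ((g b).symm k', xor b (β ((g b).symm k')))).2 := by
    intro k'
    refine Finite.injective_iff_bijective.1 fun b b' h => ?_
    have h1 : σ ((g b).symm k', xor b (β ((g b).symm k'))) =
        σ ((g b').symm k', xor b' (β ((g b').symm k'))) := by
      refine Prod.ext ?_ h
      rw [← hgdef, ← hgdef, apply_symm_apply, apply_symm_apply]
    have h2 := σ.injective h1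
    rw [Prod.mk.injEq] at h2
    rw [h2.1] at h2
    simpa using h2.2
  refine ⟨fun k => ⟨fun b => xor b (β k), fun b => xor b (β k), fun b => by simp, fun b => by simp⟩,
    fun k' => Equiv.ofBijective _ (hf₂ k'), g, fun k b => ?_⟩
  simp only [coe_fn_mk, ofBijective_apply, symm_apply_apply]
  simp [hgdef]

variable {V : Type*} [DecidableEq V] {G : SimpleGraph V} [DecidableRel G.Adj] {Q : Finset V}
  {D M room : ℕ} {ι κ : Type} [Fintype ι] [Fintype κ] {L L' : ℕ}

lemma Routable.mono {P P' : Set (Perm ι)} (h : Routable G Q D M room ι L P) (hP : P' ⊆ P) :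
    Routable G Q D M room ι L P' := by
  intro W c x h1 h2 h3 h4 h5
  obtain ⟨K, c', y, a1, a2, a3, a4, a5, a6, a7, a8⟩ := h W c x h1 h2 h3 h4 h5
  exact ⟨K, c', y, a1, a2, a3, a4, a5, a6, a7, fun σ hσ => a8 σ (hP hσ)⟩

lemma routable_zero : Routable G Q D M room ι 0 {1} := by
  intro W c x h1 h2 h3 h4 h5
  refine ⟨∅, c, x, Finset.disjoint_empty_right _, by simpa using h1, by simp, h3,
    fun i => Or.inr ⟨i, rfl⟩, h5, fun z _ _ => le_rfl, ?_⟩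
  rintro _ rfl
  exact Linked.refl _

lemma Routable.comp {P P' : Set (Perm ι)} (h : Routable G Q D M room ι L P)
    (h' : Routable G Q D M room ι L' P') :
    Routable G Q D M room ι (L + L') {τ | ∃ σ ∈ P, ∃ σ' ∈ P', τ = σ' * σ} := by
  intro W c x h1 h2 h3 h4 h5
  rw [Nat.mul_add] at h2
  obtain ⟨K, c', y, a1, a2, a3, a4, a5, a6, a7, a8⟩ := h W c x h1 (by omega) h3 h4 h5
  have hy : ∀ i, Placed Q (W ∪ K) (y i) := by
    intro i
    rcases a5 i with h | ⟨j, h⟩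
    · exact Or.inl (Finset.mem_union_right _ h)
    · rw [h]
      exact (h4 j).mono Finset.subset_union_left
  obtain ⟨K', c'', y', b1, b2, b3, b4, b5, b6, b7, b8⟩ := h' (W ∪ K) c' y a2
    (by rw [Finset.card_union_of_disjoint a1]; omega) a4 hy a6
  have b1' := Finset.disjoint_union_left.1 b1
  refine ⟨K ∪ K', c'', y', Finset.disjoint_union_right.2 ⟨a1, b1'.1⟩, by rwa [← Finset.union_assoc],
    by rw [Finset.card_union_of_disjoint b1'.2, a3, b3, Nat.mul_add], b4, ?_, b6, ?_, ?_⟩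
  · intro i
    rcases b5 i with h | ⟨j, h⟩
    · exact Or.inl (Finset.mem_union_right _ h)
    · rcases a5 j with h' | ⟨k, h'⟩
      · exact Or.inl (Finset.mem_union_left _ (h ▸ h'))
      · exact Or.inr ⟨k, h.trans h'⟩
  · intro z hz hzx
    rw [Finset.mem_union, not_or] at hz
    refine (a7 z hz.1 hzx).trans (b7 z hz.2 fun i hi => ?_)
    rcases a5 i with h | ⟨j, h⟩
    · exact hz.1 (hi ▸ h)
    · exact hzx j (hi.trans h)
  · rintro _ ⟨σ, hσ, σ', hσ', rfl⟩
    exact (a8 σ hσ).trans ((b8 σ' hσ').comp σ.surjective)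

lemma Routable.relabel {P : Set (Perm ι)} (h : Routable G Q D M room ι L P) (e : ι ≃ κ) :
    Routable G Q D M room κ L {σ | e.permCongr.symm σ ∈ P} := by
  intro W c x h1 h2 h3 h4 h5
  rw [← Fintype.card_congr e] at h2 ⊢
  obtain ⟨K, c', y, a1, a2, a3, a4, a5, a6, a7, a8⟩ := h W c (x ∘ e) h1 h2 (h3.comp e.injective)
    (fun i => h4 _) (fun i => h5 _)
  refine ⟨K, c', y ∘ e.symm, a1, a2, a3, a4.comp e.symm.injective, ?_, fun i => a6 _, ?_, ?_⟩
  · intro i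
    rcases a5 (e.symm i) with h | ⟨j, h⟩
    · exact Or.inl h
    · exact Or.inr ⟨e j, h⟩
  · exact fun z hz hzx => a7 z hz fun i => hzx _
  · intro σ hσ
    have := (a8 _ hσ).comp e.symm.surjective
    convert this using 1
    · ext i; simp
    · ext i; simp

lemma Routable.family (h : Routable G Q D M room ι L Set.univ) :
    Routable G Q D M room (κ × ι) L {σ | ∃ f : κ → Perm ι, ∀ k i, σ (k, i) = (k, f k i)} := by
  classical
  intro W c x h1 h2 h3 h4 h5
  have key : ∀ I : Finset κ, ∃ (K : κ → Finset V) (c' : V → ℕ) (y : κ → ι → V),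
      (∀ k ∈ I, Disjoint W (K k)) ∧ Extendable G Q D M (W ∪ I.biUnion K) c' ∧
      (I.biUnion K).card = I.card * (Fintype.card ι * L) ∧
      (∀ k ∈ I, ∀ k' ∈ I, ∀ i i', y k i = y k' i' → k = k' ∧ i = i') ∧
      (∀ k ∈ I, ∀ i, y k i ∈ K k ∨ ∃ j, y k i = x (k, j)) ∧ (∀ k ∈ I, ∀ i, 4 ≤ c' (y k i)) ∧
      (∀ z, z ∉ I.biUnion K → (∀ k ∈ I, ∀ i, z ≠ x (k, i)) → c z ≤ c' z) ∧
      ∀ k ∈ I, ∀ σ : Perm ι, Linked G (K k) L (fun i => x (k, i)) (y k ∘ σ) := by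
    intro I
    induction I using Finset.induction_on with
    | empty =>
      exact ⟨fun _ => ∅, c, fun k i => x (k, i), by simp, by simpa using h1, by simp, by simp,
        by simp, by simp, fun _ _ _ => le_rfl, by simp⟩
    | insert k₀ I hk₀ ih =>
      obtain ⟨K, c', y, a1, a2, a3, a4, a5, a6, a7, a8⟩ := ih
      have hdisj : Disjoint W (I.biUnion K) := (Finset.disjoint_biUnion_right _ _ _).2 a1
      have hIc : I.card + 1 ≤ Fintype.card κ := by
        rw [← Finset.card_insert_of_notMem hk₀]
        exact Finset.card_le_univ _
      have hroom : (I.card + 1) * (Fintype.card ι * L) ≤ Fintype.card (κ × ι) * L := by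
        rw [Fintype.card_prod, mul_assoc]
        exact Nat.mul_le_mul_right _ hIc
      have hxW : ∀ k i A, Disjoint W A → A ⊆ Q → x (k, i) ∉ A := by
        intro k i A hWA hA hx
        rcases h4 (k, i) with h | h
        · exact Finset.disjoint_left.1 hWA h hx
        · exact h (hA hx)
      obtain ⟨K₀, c'', y₀, b1, b2, b3, b4, b5, b6, b7, b8⟩ := h (W ∪ I.biUnion K) c'
        (fun i => x (k₀, i)) a2
        (by rw [Finset.card_union_of_disjoint hdisj, a3]; rw [Nat.add_mul] at hroom; omega)
        (fun i i' hi => by simpa using h3 hi) (fun i => (h4 _).mono Finset.subset_union_left)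
        (fun i => (h5 _).trans (a7 _ (hxW _ _ _ hdisj (Finset.subset_union_right.trans a2.subset))
          fun k hk j hkj => hk₀ (by
            have := h3 hkj
            rw [Prod.mk.injEq] at this
            exact this.1 ▸ hk)))
      have b1' := Finset.disjoint_union_left.1 b1
      have hK₀Q : K₀ ⊆ Q := Finset.subset_union_right.trans b2.subset
      have hKeq : (insert k₀ I).biUnion (Function.update K k₀ K₀) = I.biUnion K ∪ K₀ := by
        rw [Finset.biUnion_insert, Function.update_self, Finset.union_comm]
        congr 1
        refine Finset.biUnion_congr rfl fun k hk => ?_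
        exact Function.update_of_ne (show k ≠ k₀ from fun h => hk₀ (h ▸ hk)) _ _
      have hne : ∀ k ∈ I, k ≠ k₀ := fun k hk h => hk₀ (h ▸ hk)
      have hyK₀ : ∀ k ∈ I, ∀ i, y k i ∉ K₀ ∧ ∀ i', y k i ≠ x (k₀, i') := by
        intro k hk i
        rcases a5 k hk i with h | ⟨j, h⟩
        · have hm : y k i ∈ I.biUnion K := Finset.mem_biUnion.2 ⟨k, hk, h⟩
          exact ⟨Finset.disjoint_left.1 b1'.2 hm, fun i' hi' =>
            hxW k₀ i' _ hdisj (Finset.subset_union_right.trans a2.subset) (hi' ▸ hm)⟩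
        · rw [h]
          refine ⟨hxW _ _ _ b1'.1 hK₀Q, fun i' hi' => hne k hk ?_⟩
          have := h3 hi'
          rw [Prod.mk.injEq] at this
          exact this.1
      have hcross : ∀ k ∈ I, ∀ i i', y k i ≠ y₀ i' := by
        intro k hk i i' hi
        rcases b5 i' with h | ⟨j, h⟩
        · exact (hyK₀ k hk i).1 (hi ▸ h)
        · exact (hyK₀ k hk i).2 j (hi.trans h)
      refine ⟨Function.update K k₀ K₀, c'', Function.update y k₀ y₀, ?_, ?_, ?_, ?_, ?_, ?_, ?_, ?_⟩
      · intro k hk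
        rcases Finset.mem_insert.1 hk with rfl | hk
        · rw [Function.update_self]; exact b1'.1
        · rw [Function.update_of_ne (hne k hk)]; exact a1 k hk
      · rw [hKeq, ← Finset.union_assoc]; exact b2
      · rw [hKeq, Finset.card_union_of_disjoint b1'.2, a3, b3, Finset.card_insert_of_notMem hk₀]
        ring
      · intro k hk k' hk' i i' hii
        rcases Finset.mem_insert.1 hk with rfl | h₁ <;> rcases Finset.mem_insert.1 hk' with rfl | h₂
        · rw [Function.update_self] at hii
          exact ⟨rfl, b4 hii⟩
        · rw [Function.update_self, Function.update_of_ne (hne k' h₂)] at hii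
          exact absurd hii.symm (hcross k' h₂ _ _)
        · rw [Function.update_self, Function.update_of_ne (hne k h₁)] at hii
          exact absurd hii (hcross k h₁ _ _)
        · rw [Function.update_of_ne (hne k h₁), Function.update_of_ne (hne k' h₂)] at hii
          exact a4 k h₁ k' h₂ i i' hii
      · intro k hk i
        rcases Finset.mem_insert.1 hk with rfl | hk
        · rw [Function.update_self, Function.update_self]; exact b5 i
        · rw [Function.update_of_ne (hne k hk), Function.update_of_ne (hne k hk)]; exact a5 k hk i
      · intro k hk i
        rcases Finset.mem_insert.1 hk with rfl | hk
        · rw [Function.update_self]; exact b6 i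
        · rw [Function.update_of_ne (hne k hk)]
          exact (a6 k hk i).trans (b7 _ (hyK₀ k hk i).1 (hyK₀ k hk i).2)
      · intro z hz hzx
        rw [hKeq, Finset.mem_union, not_or] at hz
        exact (a7 z hz.1 fun k hk => hzx k (Finset.mem_insert_of_mem hk)).trans
          (b7 z hz.2 (hzx k₀ (Finset.mem_insert_self _ _)))
      · intro k hk σ
        rcases Finset.mem_insert.1 hk with rfl | hk
        · rw [Function.update_self, Function.update_self]; exact b8 σ (Set.mem_univ _)
        · rw [Function.update_of_ne (hne k hk), Function.update_of_ne (hne k hk)]; exact a8 k hk σ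
  obtain ⟨K, c', y, a1, a2, a3, a4, a5, a6, a7, a8⟩ := key Finset.univ
  refine ⟨_, c', fun p => y p.1 p.2, (Finset.disjoint_biUnion_right _ _ _).2 a1, a2, ?_, ?_, ?_, ?_,
    ?_, ?_⟩
  · rw [a3, Fintype.card_prod, Finset.card_univ, mul_assoc]
  · rintro ⟨k, i⟩ ⟨k', i'⟩ hkk
    obtain ⟨rfl, rfl⟩ := a4 k (Finset.mem_univ _) k' (Finset.mem_univ _) i i' hkk
    rfl
  · rintro ⟨k, i⟩
    rcases a5 k (Finset.mem_univ _) i with h | ⟨j, h⟩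
    · exact Or.inl (Finset.mem_biUnion.2 ⟨k, Finset.mem_univ _, h⟩)
    · exact Or.inr ⟨_, h⟩
  · exact fun p => a6 _ (Finset.mem_univ _) _
  · exact fun z hz hzx => a7 z hz fun k _ i => hzx _
  · rintro σ ⟨f, hf⟩
    choose w hw hwK using fun k => a8 k (Finset.mem_univ _) (f k)
    refine ⟨fun p => (w p.1 p.2).copy rfl (by
      obtain ⟨k, i⟩ := p
      simp [hf]), fun p => by rw [Walk.length_copy]; exact hw _ _, fun v hv => ?_⟩
    obtain ⟨k, -, hv⟩ := Finset.mem_biUnion.1 hv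
    obtain ⟨i, hi⟩ := hwK k v hv
    exact ⟨(k, i), by rw [Walk.support_copy]; exact hi⟩

/-- One recursion step of the Beneš network. -/
lemma Routable.benes (h : Routable G Q D M room κ L Set.univ)
    (hs : Routable G Q D M room Bool L' Set.univ) :
    Routable G Q D M room (κ × Bool) (L' + L + L') Set.univ := by
  refine ((hs.family.comp (h.family.relabel (Equiv.prodComm Bool κ))).comp hs.family).mono ?_
  intro σ _
  obtain ⟨f₁, f₂, g, hfg⟩ := exists_benes_decomposition σ
  refine ⟨_, ⟨Equiv.prodShear (Equiv.refl _) f₁, ⟨f₁, fun k i => rfl⟩,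
    (Equiv.prodComm Bool κ).permCongr (Equiv.prodShear (Equiv.refl _) g), ⟨g, fun k i => ?_⟩, rfl⟩,
    Equiv.prodShear (Equiv.refl _) f₂, ⟨f₂, fun k i => rfl⟩, ?_⟩
  · simp
  · ext1 ⟨k, b⟩
    rw [hfg]
    simp

theorem routable_of_card_eq_two_pow (hs : Routable G Q D M room Bool L' Set.univ) (q : ℕ)
    (hι : Fintype.card ι = 2 ^ q) : Routable G Q D M room ι (2 * q * L') Set.univ := by
  induction q generalizing ι with
  | zero =>
    have : Subsingleton ι := Fintype.card_le_one_iff_subsingleton.1 (by simp [hι])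
    rw [show 2 * 0 * L' = 0 by simp]
    exact routable_zero.mono fun σ _ => Subsingleton.elim _ _
  | succ q ih =>
    have h := (ih (ι := Fin (2 ^ q)) (by simp)).benes hs
    rw [show 2 * (q + 1) * L' = L' + 2 * q * L' + L' by ring]
    exact (h.relabel (Fintype.equivOfCardEq (by simp [hι, pow_succ]))).mono fun σ _ => Set.mem_univ _

end Network

section Assembly

/-- The pairs of branch vertices of a subdivision of `K_t`. -/
abbrev BranchPair (t : ℕ) := {k : Fin t × Fin t // k.1 < k.2}

/-- Walks between all pairs of branch vertices that visit all vertices and have the smallest total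
length form a spanning subdivision. -/
theorem hasSpanningNearlyBalancedKSubdivision_of_card {V : Type*} [Fintype V] {G : SimpleGraph V}
    {t : ℕ} (b : Fin t → V) (w : ∀ k : BranchPair t, G.Walk (b k.1.1) (b k.1.2))
    (hcov : ∀ v, ∃ k, v ∈ (w k).support)
    (hcard : t + ∑ k, ((w k).length - 1) = Fintype.card V) {l : ℕ} (hl : 1 ≤ l)
    (hbal : ∀ k, l - 1 ≤ (w k).length ∧ (w k).length ≤ l + 1) :
    HasSpanningNearlyBalancedKSubdivision G t := by
  let f : (Fin t ⊕ Σ k, Fin ((w k).length - 1)) → V :=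
    Sum.elim b fun x => (w x.1).getVert (x.2 + 1)
  have he : ∀ k, ∀ i, i ≤ (w k).length → ∃ e, f e = (w k).getVert i ∧
      ((i = 0 ∧ e = Sum.inl k.1.1) ∨ (i = (w k).length ∧ e = Sum.inl k.1.2) ∨
        ∃ h : i - 1 < (w k).length - 1, 0 < i ∧ e = Sum.inr ⟨k, i - 1, h⟩) := by
    intro k i hi
    rcases Nat.eq_zero_or_pos i with rfl | hi0
    · exact ⟨Sum.inl k.1.1, by simp [f], Or.inl ⟨rfl, rfl⟩⟩
    rcases hi.eq_or_lt with rfl | hi1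
    · exact ⟨Sum.inl k.1.2, by simp [f], Or.inr (Or.inl ⟨rfl, rfl⟩)⟩
    · refine ⟨Sum.inr ⟨k, i - 1, by omega⟩, ?_, Or.inr (Or.inr ⟨_, hi0, rfl⟩)⟩
      simp only [f, Sum.elim_inr]
      rw [Nat.sub_add_cancel hi0]
  have hsurj : f.Surjective := by
    intro v
    obtain ⟨k, hk⟩ := hcov v
    obtain ⟨i, rfl, hi⟩ := Walk.mem_support_iff_exists_getVert.1 hk
    obtain ⟨e, he, -⟩ := he k i hi
    exact ⟨e, he⟩
  have hinj : f.Injective := by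
    refine ((Fintype.bijective_iff_surjective_and_card f).2 ⟨hsurj, ?_⟩).1
    rw [Fintype.card_sum, Fintype.card_sigma, Fintype.card_fin, ← hcard]
    simp
  have hb : b.Injective := fun i j hij => Sum.inl_injective (hinj (a₁ := .inl i) (a₂ := .inl j) hij)
  have hpath : ∀ k, (w k).IsPath := by
    intro k
    have hk : k.1.1 ≠ k.1.2 := k.2.ne
    have hgv : ∀ i j, i ≤ (w k).length → j ≤ (w k).length →
        (w k).getVert i = (w k).getVert j → i = j := by
      intro i j hi hj hij
      obtain ⟨e, he1, he2⟩ := he k i hi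
      obtain ⟨e', he1', he2'⟩ := he k j hj
      have hee : e = e' := hinj (by rw [he1, he1', hij])
      subst hee
      rcases he2 with ⟨h1, h2⟩ | ⟨h1, h2⟩ | ⟨h0, h1, h2⟩ <;>
        rcases he2' with ⟨h3, h4⟩ | ⟨h3, h4⟩ | ⟨h5, h3, h4⟩ <;> rw [h2] at h4 <;> simp at h4
      · omega
      · exact absurd h4 hk
      · exact absurd h4.symm hk
      · omega
      · omega
    rw [Walk.isPath_iff_injective_get_support]
    rintro ⟨i, hi⟩ ⟨j, hj⟩ hij
    rw [Walk.length_support] at hi hj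
    simp only [List.get_eq_getElem, Walk.support_getElem_eq_getVert] at hij
    exact Fin.ext (hgv i j (by omega) (by omega) hij)
  refine ⟨⟨b, hb⟩, fun i j h => w ⟨(i, j), h⟩, fun i j h => hpath _, ?_, ?_, ?_, l, hl,
    fun i j h => hbal _⟩
  · intro i j h k hki hkj hk
    obtain ⟨a, ha, hal⟩ := Walk.mem_support_iff_exists_getVert.1 hk
    obtain ⟨e, he1, he2⟩ := he _ a hal
    have hee : e = Sum.inl k := hinj (by rw [he1, ha]; rfl)
    subst hee
    rcases he2 with ⟨h1, h2⟩ | ⟨h1, h2⟩ | ⟨h0, h1, h2⟩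
    · exact hki (Sum.inl_injective h2)
    · exact hkj (Sum.inl_injective h2)
    · simp at h2
  · intro i j h i' j' h' hne v hv hv'
    obtain ⟨a, ha, hal⟩ := Walk.mem_support_iff_exists_getVert.1 hv
    obtain ⟨a', ha', hal'⟩ := Walk.mem_support_iff_exists_getVert.1 hv'
    obtain ⟨e, he1, he2⟩ := he _ a hal
    obtain ⟨e', he1', he2'⟩ := he _ a' hal'
    have hee : e = e' := hinj (by rw [he1, he1', ha, ha'])
    subst hee
    rcases he2 with ⟨h1, h2⟩ | ⟨h1, h2⟩ | ⟨h0, h1, h2⟩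
    · exact ⟨i, by rw [← ha, ← he1, h2]; rfl⟩
    · exact ⟨j, by rw [← ha, ← he1, h2]; rfl⟩
    · rcases he2' with ⟨h3, h4⟩ | ⟨h3, h4⟩ | ⟨h5, h3, h4⟩ <;> rw [h2] at h4 <;> simp at h4
      exact absurd h4.1 hne
  · intro v
    obtain ⟨k, hk⟩ := hcov v
    exact ⟨k.1.1, k.1.2, k.2, hk⟩

variable {V : Type*} {G : SimpleGraph V}

/-- The entrance of a trip: the exit of the previous trip, or `u k` for the first trip. -/
def tripStart {κ : Type*} {s : κ → ℕ} (u : κ → V) (J : (Σ k, Fin (s k)) → V) (x : Σ k, Fin (s k)) :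
    V :=
  if x.2.val = 0 then u x.1 else J ⟨x.1, x.2.val - 1, by omega⟩

lemma tripStart_injective {κ : Type*} {s : κ → ℕ} {u : κ → V} {J : (Σ k, Fin (s k)) → V}
    (hu : u.Injective) (hJ : J.Injective) (huJ : ∀ k x, u k ≠ J x) :
    (tripStart u J).Injective := by
  rintro ⟨k, i⟩ ⟨k', i'⟩ h
  simp only [tripStart] at h
  split_ifs at h with h1 h2 h2
  · obtain rfl := hu h
    obtain rfl : i = i' := Fin.ext (h1.trans h2.symm)
    rfl
  · exact absurd h (huJ _ _)
  · exact absurd h.symm (huJ _ _)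
  · have h3 := hJ h
    rw [Sigma.mk.injEq] at h3
    obtain ⟨rfl, h3⟩ := h3
    have h4 := congrArg Fin.val (eq_of_heq h3)
    simp only at h4
    obtain rfl : i = i' := Fin.ext (by omega)
    rfl

/-- The trips of `k` can be concatenated. -/
lemma exists_walk_of_trips {κ : Type*} {s : κ → ℕ} {u : κ → V} {J : (Σ k, Fin (s k)) → V} {T : ℕ}
    (w : ∀ x, G.Walk (tripStart u J x) (J x)) (hw : ∀ x, (w x).length = T) (k : κ) (i : ℕ)
    (hi : i < s k) : ∃ w' : G.Walk (u k) (J ⟨k, i, hi⟩), w'.length = (i + 1) * T ∧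
      ∀ j (hj : j < s k), j ≤ i → ∀ v ∈ (w ⟨k, j, hj⟩).support, v ∈ w'.support := by
  induction i with
  | zero =>
    refine ⟨(w ⟨k, 0, hi⟩).copy (by simp [tripStart]) rfl, by simp [hw], ?_⟩
    intro j hj hj0 v hv
    obtain rfl := Nat.le_zero.1 hj0
    rwa [Walk.support_copy]
  | succ i ih =>
    obtain ⟨w', hw', hw''⟩ := ih (by omega)
    refine ⟨w'.append ((w ⟨k, i + 1, hi⟩).copy (by simp [tripStart]) rfl), ?_, ?_⟩
    · rw [Walk.length_append, Walk.length_copy, hw, hw']; ring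
    · intro j hj hji v hv
      rw [Walk.mem_support_append_iff, Walk.support_copy]
      rcases Nat.lt_or_ge i j with h | h
      · obtain rfl : j = i + 1 := by omega
        exact Or.inr hv
      · exact Or.inl (hw'' j hj h v hv)

lemma Linked.union_image [DecidableEq V] {ι : Type*} [Fintype ι] {A : Finset V} {L : ℕ}
    {x y : ι → V} (h : Linked G A L x y) : Linked G (A ∪ Finset.univ.image y) L x y := by
  obtain ⟨w, hw, hA⟩ := h
  refine ⟨w, hw, fun v hv => ?_⟩
  rcases Finset.mem_union.1 hv with hv | hv
  · exact hA v hv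
  · obtain ⟨i, -, rfl⟩ := Finset.mem_image.1 hv
    exact ⟨i, Walk.end_mem_support _⟩

end Assembly

section Core

lemma exists_enumeration {V ι : Type*} [DecidableEq V] [Fintype ι] (A : Finset V)
    (h : A.card = Fintype.card ι) : ∃ f : ι → V, f.Injective ∧ Finset.univ.image f = A := by
  let e : ι ≃ A := Fintype.equivOfCardEq (by simp [h])
  refine ⟨fun i => e i, Subtype.val_injective.comp e.injective, ?_⟩
  ext v
  simp only [Finset.mem_image, Finset.mem_univ, true_and]
  exact ⟨fun ⟨i, hi⟩ => hi ▸ (e i).2, fun hv => ⟨e.symm ⟨v, hv⟩, by simp⟩⟩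

variable {V : Type*} [Fintype V] [DecidableEq V] {G : SimpleGraph V} [DecidableRel G.Adj]

/-- Assembly of the subdivision from a reservoir `Q`, vertex-disjoint stars, and the possibility of
covering any set `R` of the right size that contains `Z` by paths from `B` to `Y`. -/
theorem hasSpanningNearlyBalancedKSubdivision_of_reservoir {t q M h r T : ℕ} {Q B Y Z : Finset V}
    (ht : 2 ≤ t) (hjoin : SetsJoined G M) (hM : M ≤ 2 ^ h) (hh : 1 ≤ h)
    (hQ : Extendable G Q 10 M ∅ fun _ => 10) (b : Fin t → V) (leaf : Fin t × Fin t → V)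
    (hb : b.Injective) (hleaf : leaf.Injective) (hbleaf : ∀ i j, b i ≠ leaf j)
    (hadj : ∀ p, G.Adj (b p.1) (leaf p)) (hbA : ∀ i, b i ∉ Q ∪ B ∪ Y ∪ Z)
    (hleafA : ∀ p, leaf p ∉ Q ∪ B ∪ Y ∪ Z) (hQB : Disjoint Q B) (hQY : Disjoint Q Y)
    (hBY : Disjoint B Y) (hZ : Disjoint Z (Q ∪ B ∪ Y)) (hBc : B.card = 2 ^ q) (hYc : Y.card = 2 ^ q)
    (s e : BranchPair t → ℕ) (hs : ∀ k, 1 ≤ s k) (hsum : ∑ k, s k = 2 ^ q)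
    (he : ∀ k, 2 * h + 1 ≤ e k) (hT : T = 2 * q * switchLength h + (2 * h + 1) + (r + 1))
    (hroom : ∑ k, e k + 2 ^ q * (2 * q * switchLength h) + 2 ^ q * (2 * h + 1) +
      spareRoom 10 M h + 1 ≤ Q.card)
    (hcount : t + ∑ k, (1 + s k * T + e k) = Fintype.card V) {l : ℕ} (hl : 1 ≤ l)
    (hbal : ∀ k, l - 1 ≤ 2 + s k * T + e k ∧ 2 + s k * T + e k ≤ l + 1)
    (hchain : ∀ R : Finset V, Z ⊆ R → R.card = 2 ^ q * r → ∀ a : (Σ k, Fin (s k)) → V,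
      a.Injective → Finset.univ.image a = B → ∃ a' : (Σ k, Fin (s k)) → V, a'.Injective ∧
        Finset.univ.image a' = Y ∧ Linked G R (r + 1) a a') :
    HasSpanningNearlyBalancedKSubdivision G t := by
  set m := Fintype.card (BranchPair t) with hm
  have hTrc : Fintype.card (Σ k, Fin (s k)) = 2 ^ q := by
    rw [Fintype.card_sigma, ← hsum]; simp
  simp only [Finset.mem_union, not_or] at hbA hleafA
  let u : BranchPair t → V := fun k => leaf k.1
  let v : BranchPair t → V := fun k => leaf k.1.swap
  have hu : u.Injective := hleaf.comp Subtype.val_injective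
  have hv : v.Injective := hleaf.comp (Prod.swap_injective.comp Subtype.val_injective)
  have huv : ∀ k k', u k ≠ v k' := by
    rintro ⟨⟨i, j⟩, hij⟩ ⟨⟨i', j'⟩, hij'⟩ hk
    have := hleaf hk
    simp only [Prod.swap_prod_mk, Prod.mk.injEq] at this hij hij'
    obtain ⟨rfl, rfl⟩ := this
    exact absurd hij hij'.asymm
  obtain ⟨J, hJ, hJY⟩ := exists_enumeration (ι := Σ k, Fin (s k)) Y (by rw [hYc, hTrc])
  obtain ⟨β, hβ, hβB⟩ := exists_enumeration (ι := Σ k, Fin (s k)) B (by rw [hBc, hTrc])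
  have hJmem : ∀ x, J x ∈ Y := fun x => hJY ▸ Finset.mem_image_of_mem _ (Finset.mem_univ _)
  have hβmem : ∀ x, β x ∈ B := fun x => hβB ▸ Finset.mem_image_of_mem _ (Finset.mem_univ _)
  have hJQ : ∀ x, J x ∉ Q := fun x => Finset.disjoint_right.1 hQY (hJmem x)
  have hβQ : ∀ x, β x ∉ Q := fun x => Finset.disjoint_right.1 hQB (hβmem x)
  let last : BranchPair t → Σ k, Fin (s k) := fun k => ⟨k, s k - 1, by have := hs k; omega⟩
  have hlast : last.Injective := fun k k' h => congrArg Sigma.fst h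
  -- the final segments of the branching paths
  obtain ⟨K₁, c₁, -, hext₁, hKc₁, ⟨w₁, hw₁, hwK₁⟩, -, hc₁, hc₁'⟩ :=
    hQ.exists_paths hjoin (by omega) hM (J ∘ last) v Finset.univ
      (fun i j hij => (hleafA j.1.swap).1.2 (show v j ∈ Y by rw [← hij]; exact hJmem _)) (hJ.comp hlast) hv
      (fun i => Or.inr (hJQ _)) (fun i => Or.inr (hleafA _).1.1.1) (by simp) (by simp) e he
      (by simp; omega)
  rw [Finset.empty_union] at hext₁
  -- the network
  set x := tripStart u J with hx
  have hxcase : ∀ i, (∃ k, x i = u k) ∨ x i ∈ Y := by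
    intro i
    simp only [hx, tripStart]
    split_ifs
    · exact Or.inl ⟨_, rfl⟩
    · exact Or.inr (hJmem _)
  have hxi : x.Injective := tripStart_injective hu hJ fun k i h => (hleafA _).1.2 (h ▸ hJmem _)
  have hxQ : ∀ i, x i ∉ Q := by
    intro i
    rcases hxcase i with ⟨k, h⟩ | h
    · rw [h]; exact (hleafA _).1.1.1
    · exact Finset.disjoint_right.1 hQY h
  have hxβ : ∀ i j, β j ≠ x i := by
    intro i j hij
    rcases hxcase i with ⟨k, h⟩ | h
    · exact (hleafA k.1).1.1.2 (show u k ∈ B by rw [← h, ← hij]; exact hβmem _)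
    · exact Finset.disjoint_left.1 hBY (hβmem j) (hij ▸ h)
  rw [Finset.card_univ, ← hm] at hKc₁
  obtain ⟨K₂, c₂, y, hK₁₂, hext₂, hKc₂, hyi, hy, hyc, hc₂, hlink₂⟩ :=
    routable_of_card_eq_two_pow (routable_bool (Q := Q) hjoin (by omega) hM hh) q hTrc K₁ c₁ x
      hext₁ (by rw [hTrc]; omega) hxi (fun i => Or.inr (hxQ i))
      (fun i => by have := hc₁ (x i) (fun h => hxQ i (hext₁.subset h)); omega)
  rw [hTrc] at hKc₂
  have hK₂Q : K₂ ⊆ Q := Finset.subset_union_right.trans hext₂.subset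
  have hyQ : ∀ i, Placed Q (K₁ ∪ K₂) (y i) := by
    intro i
    rcases hy i with h | ⟨j, h⟩
    · exact Or.inl (Finset.mem_union_right _ h)
    · exact Or.inr (h ▸ hxQ j)
  -- the paths from the exits of the network to `B`
  obtain ⟨K₃, c₃, hK₁₂₃, hext₃, hKc₃, ⟨w₃, hw₃, hwK₃⟩, -, -, -⟩ :=
    hext₂.exists_paths hjoin (by omega) hM y β Finset.univ
      (fun i j hij => by
        rcases hy i with h | ⟨k, h⟩
        · exact hβQ j (hij ▸ hK₂Q h)
        · exact hxβ k j (hij.symm.trans h)) hyi hβ hyQ (fun i => Or.inr (hβQ _))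
      (fun i => (by omega : 2 ≤ 4).trans (hyc i))
      (fun i => by
        have h1 := hc₁' (β i) (fun h => hβQ i (hext₁.subset h))
          (fun j _ h => Finset.disjoint_left.1 hBY (hβmem i) (h ▸ hJmem _))
          (fun j _ h => (hleafA j.1.swap).1.1.2 (show v j ∈ B by rw [← h]; exact hβmem _))
        have h2 := hc₂ (β i) (fun h => hβQ i (hK₂Q h)) (fun j => hxβ j i)
        omega) (fun _ => 2 * h + 1) (fun _ => le_rfl)
      (by
        rw [Finset.card_union_of_disjoint hK₁₂, Finset.sum_const, Finset.card_univ, hTrc,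
          smul_eq_mul]
        omega)
  rw [Finset.sum_const, Finset.card_univ, hTrc, smul_eq_mul] at hKc₃
  set K := K₁ ∪ K₂ ∪ K₃ with hK
  have hKc : K.card = K₁.card + K₂.card + K₃.card := by
    rw [hK, Finset.card_union_of_disjoint hK₁₂₃, Finset.card_union_of_disjoint hK₁₂]
  have hKQ : K ⊆ Q := hext₃.subset
  -- the remaining vertices
  set S := Finset.univ.image b ∪ (Finset.univ.image u ∪ Finset.univ.image v) with hS
  have hScase : ∀ z ∈ S, (∃ i, z = b i) ∨ ∃ p, z = leaf p := by
    intro z hz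
    simp only [hS, Finset.mem_union, Finset.mem_image, Finset.mem_univ, true_and] at hz
    rcases hz with ⟨i, rfl⟩ | ⟨k, rfl⟩ | ⟨k, rfl⟩
    · exact Or.inl ⟨i, rfl⟩
    · exact Or.inr ⟨_, rfl⟩
    · exact Or.inr ⟨_, rfl⟩
  have hSA : ∀ z ∈ S, ((z ∉ Q ∧ z ∉ B) ∧ z ∉ Y) ∧ z ∉ Z := by
    intro z hz
    rcases hScase z hz with ⟨i, rfl⟩ | ⟨p, rfl⟩
    · exact hbA i
    · exact hleafA p
  have hSc : S.card = t + (m + m) := by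
    rw [hS, Finset.card_union_of_disjoint, Finset.card_union_of_disjoint,
      Finset.card_image_of_injective _ hb, Finset.card_image_of_injective _ hu,
      Finset.card_image_of_injective _ hv, Finset.card_univ, Finset.card_univ, Fintype.card_fin]
    · rw [Finset.disjoint_left]
      intro z hz hz'
      obtain ⟨k, -, rfl⟩ := Finset.mem_image.1 hz
      obtain ⟨k', -, hk'⟩ := Finset.mem_image.1 hz'
      exact huv k k' hk'.symm
    · rw [Finset.disjoint_left]
      intro z hz hz'
      obtain ⟨k, -, rfl⟩ := Finset.mem_image.1 hz
      rcases Finset.mem_union.1 hz' with hz' | hz'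
      · obtain ⟨k', -, hk'⟩ := Finset.mem_image.1 hz'
        exact hbleaf _ _ hk'.symm
      · obtain ⟨k', -, hk'⟩ := Finset.mem_image.1 hz'
        exact hbleaf _ _ hk'.symm
  set A := S ∪ K ∪ B ∪ Y with hA
  have hAc : A.card = t + (m + m) + K.card + 2 ^ q + 2 ^ q := by
    rw [hA, Finset.card_union_of_disjoint, Finset.card_union_of_disjoint,
      Finset.card_union_of_disjoint, hSc, hBc, hYc]
    · exact Finset.disjoint_left.2 fun z hz hz' => (hSA z hz).1.1.1 (hKQ hz')
    · rw [Finset.disjoint_union_left]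
      exact ⟨Finset.disjoint_left.2 fun z hz hz' => (hSA z hz).1.1.2 hz',
        Finset.disjoint_of_subset_left hKQ hQB⟩
    · rw [Finset.disjoint_union_left, Finset.disjoint_union_left]
      exact ⟨⟨Finset.disjoint_left.2 fun z hz hz' => (hSA z hz).1.2 hz',
        Finset.disjoint_of_subset_left hKQ hQY⟩, hBY⟩
  have hsumT : ∑ k, (1 + s k * T + e k) = m + 2 ^ q * T + ∑ k, e k := by
    rw [Finset.sum_add_distrib, Finset.sum_add_distrib, ← Finset.sum_mul, hsum, Finset.sum_const,
      Finset.card_univ, smul_eq_mul, mul_one]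
  obtain ⟨a', ha', ha'Y, hlink⟩ := hchain (Finset.univ \ A)
    (by
      intro z hz
      have h1 := Finset.disjoint_left.1 hZ hz
      simp only [Finset.mem_union, not_or] at h1
      simp only [hA, Finset.mem_sdiff, Finset.mem_univ, true_and, Finset.mem_union, not_or]
      exact ⟨⟨⟨fun h => (hSA z h).2 hz, fun h => h1.1.1 (hKQ h)⟩, h1.1.2⟩, h1.2⟩)
    (by
      rw [Finset.card_sdiff_of_subset (Finset.subset_univ _), Finset.card_univ, ← hcount, hsumT, hAc,
        hKc, hKc₂, hT]
      simp only [Nat.mul_add, mul_one] at hKc₃ ⊢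
      omega) β hβ hβB
  -- the permutation realised by the paths outside the reservoir is corrected by the network
  have hperm : ∃ π : Equiv.Perm (Σ k, Fin (s k)), ∀ i, a' i = J (π i) := by
    have h1 : ∀ i, ∃ j, J j = a' i := by
      intro i
      have : a' i ∈ Finset.univ.image J := by
        rw [hJY, ← ha'Y]
        exact Finset.mem_image_of_mem _ (Finset.mem_univ _)
      obtain ⟨j, -, hj⟩ := Finset.mem_image.1 this
      exact ⟨j, hj⟩
    choose π hπ using h1
    refine ⟨Equiv.ofBijective π (Finite.injective_iff_bijective.1 fun i j hij => ha' ?_),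
      fun i => (hπ i).symm⟩
    rw [← hπ, ← hπ, hij]
  obtain ⟨π, hπ⟩ := hperm
  have hlink₃ : Linked G (K₃ ∪ B) (2 * h + 1) y β := by
    rw [← hβB]
    refine Linked.union_image ⟨fun i => w₃ i (Finset.mem_univ _), fun i => hw₃ _ _, fun z hz => ?_⟩
    obtain ⟨i, hi, hz⟩ := hwK₃ z hz
    exact ⟨i, hz⟩
  have hlink₄ := (hlink₂ π⁻¹ (Set.mem_univ _)).trans ((hlink₃.trans hlink).comp (π⁻¹).surjective)
  rw [show a' ∘ ⇑(π⁻¹) = J by ext i; simp [hπ], ← add_assoc, ← hT] at hlink₄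
  obtain ⟨w, hw, hwA⟩ := hlink₄.union_image
  rw [hJY] at hwA
  choose w' hw' hww' using fun k => exists_walk_of_trips w hw k (s k - 1)
    (by have := hs k; omega)
  have hadj' : ∀ k : BranchPair t, G.Adj (v k) (b k.1.2) := fun k => (hadj k.1.swap).symm
  have hlen : ∀ k, (((w' k).append ((w₁ k (Finset.mem_univ _)).append (hadj' k).toWalk)).cons
      (hadj k.1)).length = 2 + s k * T + e k := by
    intro k
    have := hs k
    have h2 : s k - 1 + 1 = s k := by omega
    rw [Walk.length_cons, Walk.length_append, Walk.length_append, hw', hw₁, h2]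
    simp only [Walk.length_cons, Walk.length_nil]
    ring
  refine hasSpanningNearlyBalancedKSubdivision_of_card b
    (fun k => ((w' k).append ((w₁ k (Finset.mem_univ _)).append (hadj' k).toWalk)).cons (hadj k.1))
    ?_ ?_ hl ?_
  · intro z
    have hwcov : ∀ i, z ∈ (w i).support → ∃ k, z ∈ (w' k).support := fun i hi =>
      ⟨i.1, hww' i.1 i.2 i.2.2 (by have := i.2.2; omega) z hi⟩
    have hsupp : ∀ k, z ∈ (((w' k).append ((w₁ k (Finset.mem_univ _)).append
        (hadj' k).toWalk)).cons (hadj k.1)).support ↔ z = b k.1.1 ∨ z ∈ (w' k).support ∨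
          z ∈ (w₁ k (Finset.mem_univ _)).support ∨ z ∈ (hadj' k).toWalk.support := by
      intro k
      rw [Walk.support_cons, List.mem_cons, Walk.mem_support_append_iff,
        Walk.mem_support_append_iff]
    simp only [hsupp]
    by_cases hzA : z ∈ A
    · simp only [hA, hS, hK, Finset.mem_union, Finset.mem_image, Finset.mem_univ, true_and] at hzA
      rcases hzA with (((⟨i, rfl⟩ | ⟨k, rfl⟩ | ⟨k, rfl⟩) | ((hz | hz) | hz)) | hz) | hz
      · by_cases hi : i = ⟨0, by omega⟩
        · exact ⟨⟨(i, ⟨1, by omega⟩), by subst hi; simp⟩, Or.inl rfl⟩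
        · refine ⟨⟨(⟨0, by omega⟩, i), ?_⟩, Or.inr (Or.inr (Or.inr (Walk.end_mem_support _)))⟩
          exact Fin.lt_def.2 (Nat.pos_of_ne_zero fun h => hi (Fin.ext h))
      · exact ⟨k, Or.inr (Or.inl (Walk.start_mem_support _))⟩
      · exact ⟨k, Or.inr (Or.inr (Or.inl (Walk.end_mem_support _)))⟩
      · obtain ⟨k, hk, hz⟩ := hwK₁ z hz
        exact ⟨k, Or.inr (Or.inr (Or.inl hz))⟩
      · obtain ⟨i, hi⟩ := hwA z (by simp [hz])
        obtain ⟨k, hk⟩ := hwcov i hi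
        exact ⟨k, Or.inr (Or.inl hk)⟩
      · obtain ⟨i, hi⟩ := hwA z (by simp [hz])
        obtain ⟨k, hk⟩ := hwcov i hi
        exact ⟨k, Or.inr (Or.inl hk)⟩
      · obtain ⟨i, hi⟩ := hwA z (by simp [hz])
        obtain ⟨k, hk⟩ := hwcov i hi
        exact ⟨k, Or.inr (Or.inl hk)⟩
      · obtain ⟨i, hi⟩ := hwA z (by simp [hz])
        obtain ⟨k, hk⟩ := hwcov i hi
        exact ⟨k, Or.inr (Or.inl hk)⟩
    · obtain ⟨i, hi⟩ := hwA z (by simp [hzA])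
      obtain ⟨k, hk⟩ := hwcov i hi
      exact ⟨k, Or.inr (Or.inl hk)⟩
  · rw [← hcount]
    congr 1
    refine Finset.sum_congr rfl fun k _ => ?_
    rw [hlen]
    omega
  · intro k
    rw [hlen]
    exact hbal k

end Core

section Balanced

lemma exists_balanced_sum {κ : Type*} [Fintype κ] (N : ℕ) (hκ : 0 < Fintype.card κ) :
    ∃ s : κ → ℕ, (∀ k, N / Fintype.card κ ≤ s k ∧ s k ≤ N / Fintype.card κ + 1) ∧ ∑ k, s k = N := by
  set m := Fintype.card κ with hm
  refine ⟨fun k => N / m + if (Fintype.equivFin κ k : ℕ) < N % m then 1 else 0, fun k => ?_, ?_⟩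
  · dsimp only
    split_ifs <;> omega
  · rw [(Fintype.equivFin κ).sum_comp (fun i : Fin m => N / m + if (i : ℕ) < N % m then 1 else 0),
      Finset.sum_add_distrib, Finset.sum_const, Finset.card_univ, Fintype.card_fin, smul_eq_mul,
      Fin.sum_univ_eq_sum_range (fun i => if i < N % m then 1 else 0), ← Finset.card_filter]
    have : (Finset.range m).filter (· < N % m) = Finset.range (N % m) := by
      ext i
      have := Nat.mod_lt N hκ
      simp only [Finset.mem_filter, Finset.mem_range]
      omega
    rw [this, Finset.card_range]
    exact Nat.div_add_mod N m

end Balanced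

section Parts

variable {V : Type*} {G : SimpleGraph V} [DecidableRel G.Adj] {p lam δ : ℝ}

/-- Every vertex has at least `δ` neighbours in `A`. -/
def Rich (G : SimpleGraph V) [DecidableRel G.Adj] (δ : ℝ) (A : Finset V) : Prop :=
  ∀ v, δ ≤ ((A.filter (G.Adj v)).card : ℝ)

lemma Rich.mono {A : Finset V} {δ' : ℝ} (h : Rich G δ A) (hδ : δ' ≤ δ) : Rich G δ' A :=
  fun v => hδ.trans (h v)

lemma Rich.subset {A B : Finset V} (h : Rich G δ A) (hAB : A ⊆ B) : Rich G δ B := fun v =>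
  (h v).trans (by exact_mod_cast Finset.card_le_card (Finset.filter_subset_filter _ hAB))

lemma Jumbled.setsJoined (hJ : Jumbled G p lam) (hp : 0 < p) {M : ℕ} (hM : 1 ≤ M)
    (h : lam ≤ p * (M - 1)) : SetsJoined G M := by
  intro S T hS hT
  have hM' : (1 : ℝ) ≤ M := by exact_mod_cast hM
  have hS' : (M : ℝ) ≤ S.card := by exact_mod_cast hS
  have hT' : (M : ℝ) ≤ T.card := by exact_mod_cast hT
  exact hJ.exists_adj_of_lt_card (by linarith) hp h (by linarith) (by linarith)

lemma Jumbled.exists_large_degree (hJ : Jumbled G p lam) {X : Finset V} (hX : X.Nonempty) {t : ℕ}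
    (h : (t : ℝ) ≤ p * X.card - lam) : ∃ v ∈ X, t ≤ (X.filter (G.Adj v)).card := by
  by_contra! hcon
  have h1 := (abs_le.1 (hJ X X)).1
  have h2 : ∑ u ∈ X, ((X.filter (G.Adj u)).card : ℝ) < ∑ u ∈ X, (t : ℝ) :=
    Finset.sum_lt_sum_of_nonempty hX fun u hu => by exact_mod_cast hcon u hu
  have hX0 : (0 : ℝ) < X.card := by exact_mod_cast hX.card_pos
  rw [Real.sqrt_mul_self hX0.le] at h1
  rw [Finset.sum_const, nsmul_eq_mul] at h2
  nlinarith

variable [DecidableEq V]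

lemma Rich.biUnion {κ : Type*} [DecidableEq κ] {I : Finset κ} {P : κ → Finset V}
    (h : ∀ i ∈ I, Rich G δ (P i)) (hP : ∀ i j, i ≠ j → Disjoint (P i) (P j)) :
    Rich G (I.card * δ) (I.biUnion P) := by
  intro v
  rw [Finset.filter_biUnion, Finset.card_biUnion]
  · push_cast
    rw [← nsmul_eq_mul]
    exact Finset.card_nsmul_le_sum _ _ _ fun i hi => h i hi v
  · intro i _ j _ hij
    exact Finset.disjoint_filter_filter (hP i j hij)

lemma Jumbled.exists_linked_of_rich [Fintype V] (hJ : Jumbled G p lam) (hp : 0 < p) (hlam : 0 ≤ lam)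
    (hδ : 2 * lam + p < δ) {ι : Type*} [Fintype ι] (a : ι → V) (ha : a.Injective) {B : Finset V}
    (hB : B.card = Fintype.card ι) (hA : Rich G δ (Finset.univ.image a)) (hBr : Rich G δ B) :
    ∃ a' : ι → V, a'.Injective ∧ Finset.univ.image a' = B ∧ Linked G B 1 a a' := by
  have h1 : lam ≤ p * ⌈lam / p⌉₊ := by
    rw [← div_le_iff₀' hp]
    exact Nat.le_ceil _
  have h2 : p * ⌈lam / p⌉₊ < lam + p := by
    have := Nat.ceil_lt_add_one (div_nonneg hlam hp.le)
    calc p * (⌈lam / p⌉₊ : ℝ) < p * (lam / p + 1) := by gcongr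
      _ = lam + p := by field_simp
  have hexp : ∀ X : Finset V, Rich G δ X → ∀ S : Finset V, S.card ≤ ⌈lam / p⌉₊ →
      S.card ≤ (nbrsIn G X S).card := by
    intro X hX S hS
    have h3 : p * S.card ≤ p * ⌈lam / p⌉₊ := by gcongr
    have := hJ.mul_card_le_card_nbrsIn (S := S) (X := X) hp.le hlam (K := 1) (fun u _ => hX u)
      (by simp; linarith)
    simpa using this
  refine exists_perfect_matching a ha hB ⌈lam / p⌉₊ (fun S _ => hexp B hBr S)
    (fun T _ => hexp _ hA T) fun S T hS hT => ?_
  exact hJ.exists_adj_of_lt_card (Nat.cast_nonneg _) hp h1 (by exact_mod_cast hS)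
    (by exact_mod_cast hT)

lemma Jumbled.exists_linked_chain [Fintype V] (hJ : Jumbled G p lam) (hp : 0 < p) (hlam : 0 ≤ lam)
    (hδ : 2 * lam + p < δ) {ι : Type*} [Fintype ι] {Y : Finset V} (hY : Y.card = Fintype.card ι)
    (hYr : Rich G δ Y) {r : ℕ} (P : Fin r → Finset V) (hP : ∀ i, (P i).card = Fintype.card ι)
    (hPr : ∀ i, Rich G δ (P i)) (a : ι → V) (ha : a.Injective)
    (har : Rich G δ (Finset.univ.image a)) :
    ∃ a' : ι → V, a'.Injective ∧ Finset.univ.image a' = Y ∧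
      Linked G (Finset.univ.biUnion P) (r + 1) a a' := by
  induction r generalizing a with
  | zero =>
    obtain ⟨a', h1, h2, h3⟩ := hJ.exists_linked_of_rich hp hlam hδ a ha hY har hYr
    exact ⟨a', h1, h2, h3.mono (by simp)⟩
  | succ r ih =>
    obtain ⟨a₁, h1, h2, h3⟩ := hJ.exists_linked_of_rich hp hlam hδ a ha (hP 0) har (hPr 0)
    obtain ⟨a', h4, h5, h6⟩ := ih (fun i => P i.succ) (fun i => hP _) (fun i => hPr _) a₁ h1
      (h2 ▸ hPr 0)
    refine ⟨a', h4, h5, ?_⟩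
    have := h3.trans h6
    rw [add_comm 1 (r + 1)] at this
    refine this.mono fun v hv => ?_
    obtain ⟨i, -, hi⟩ := Finset.mem_biUnion.1 hv
    rw [Finset.mem_union, Finset.mem_biUnion]
    induction i using Fin.cases with
    | zero => exact Or.inl hi
    | succ i => exact Or.inr ⟨i, Finset.mem_univ _, hi⟩

/-- A set of `N * r` vertices in which every vertex has many neighbours can be covered by disjoint
paths between any two rich sets of size `N`. -/
theorem Jumbled.exists_linked_cover [Fintype V] (hJ : Jumbled G p lam) (hp : 0 < p) (hlam : 0 ≤ lam)
    (hδ : 2 * lam + p < δ) {ι : Type*} [Fintype ι] {Y R : Finset V} (hY : Y.card = Fintype.card ι)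
    (hYr : Rich G δ Y) {r : ℕ} (hR : R.card = Fintype.card ι * r)
    (hRr : Rich G (4 * (r + 1) * δ) R) (hbig : (Fintype.card V : ℝ) * r < Real.exp δ)
    (a : ι → V) (ha : a.Injective) (har : Rich G δ (Finset.univ.image a)) :
    ∃ a' : ι → V, a'.Injective ∧ Finset.univ.image a' = Y ∧ Linked G R (r + 1) a a' := by
  have h4 : (4 * ((r : ℝ) + 1) * δ) / (4 * (r + 1)) = δ := by field_simp
  obtain ⟨P, hPR, hPc, hPd, hPr⟩ := exists_degree_preserving_parts G R hR.ge
    (hR.le.trans (Nat.mul_le_mul_left _ (Nat.le_succ r))) _ hRr (by rwa [h4])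
  rw [h4] at hPr
  obtain ⟨a', h1, h2, h3⟩ := hJ.exists_linked_chain hp hlam hδ hY hYr P hPc (fun i v => hPr v i) a ha
    har
  refine ⟨a', h1, h2, ?_⟩
  have : Finset.univ.biUnion P = R := by
    refine Finset.eq_of_subset_of_card_le (Finset.biUnion_subset.2 fun i _ => hPR i) ?_
    rw [Finset.card_biUnion fun i _ j _ hij => hPd i j hij]
    simp [hPc, hR, mul_comm]
  rwa [this] at h3

lemma Jumbled.extendable (hJ : Jumbled G p lam) (hp : 0 ≤ p) (hlam : 0 ≤ lam) {Q : Finset V}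
    {D M : ℕ} (hQ : Rich G δ Q) (hδ : p * (2 * D * M) + lam * √D < δ) :
    Extendable G Q D M ∅ fun _ => D := by
  refine ⟨Finset.empty_subset _, fun _ => le_rfl, fun _ _ _ => rfl, fun U hU => ?_⟩
  rw [Finset.sum_const, smul_eq_mul, Finset.sdiff_empty, mul_comm]
  refine hJ.mul_card_le_card_nbrsIn hp hlam (fun u _ => hQ u) (lt_of_le_of_lt ?_ hδ)
  have : (U.card : ℝ) ≤ 2 * M := by exact_mod_cast hU
  have : (D : ℝ) * U.card ≤ 2 * D * M := by nlinarith [Nat.cast_nonneg (α := ℝ) D]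
  gcongr

/-- Vertex-disjoint stars can be found greedily. -/
theorem exists_disjoint_stars {X : Finset V} {t : ℕ}
    (hX : ∀ X' ⊆ X, X.card ≤ X'.card + t * (t + 1) → ∃ v ∈ X', t ≤ (X'.filter (G.Adj v)).card) :
    ∃ (b : Fin t → V) (leaf : Fin t × Fin t → V), b.Injective ∧ leaf.Injective ∧
      (∀ i j, b i ≠ leaf j) ∧ (∀ x, G.Adj (b x.1) (leaf x)) ∧ (∀ i, b i ∈ X) ∧ ∀ x, leaf x ∈ X := by
  have key : ∀ k, k ≤ t → ∃ (b : ℕ → V) (S : ℕ → Finset V), (∀ i < k, (S i).card = t) ∧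
      (∀ i < k, insert (b i) (S i) ⊆ X) ∧ (∀ i < k, ∀ w ∈ S i, G.Adj (b i) w) ∧
      ∀ i < k, ∀ j < k, i ≠ j → Disjoint (insert (b i) (S i)) (insert (b j) (S j)) := by
    intro k
    induction k with
    | zero =>
      intro _
      rcases X.eq_empty_or_nonempty with rfl | ⟨x, hx⟩
      · obtain ⟨v, hv, -⟩ := hX ∅ (Finset.Subset.refl _) (by simp)
        exact absurd hv (Finset.notMem_empty v)
      · exact ⟨fun _ => x, fun _ => ∅, by simp, by simp, by simp, by simp⟩
    | succ k ih =>
      intro hk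
      obtain ⟨b, S, h1, h2, h3, h4⟩ := ih (by omega)
      set U := (Finset.range k).biUnion fun i => insert (b i) (S i) with hU
      have hUc : U.card ≤ t * (t + 1) := by
        calc U.card ≤ (Finset.range k).card * (t + 1) := by
              refine Finset.card_biUnion_le_card_mul _ _ _ fun i hi => ?_
              rw [← h1 i (Finset.mem_range.1 hi)]
              exact Finset.card_insert_le _ _
          _ ≤ t * (t + 1) := by
              rw [Finset.card_range]
              exact Nat.mul_le_mul_right _ (by omega)
      obtain ⟨v, hv, hvt⟩ := hX (X \ U) Finset.sdiff_subset
        (by have := Finset.le_card_sdiff U X; omega)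
      obtain ⟨S', hS', hS'c⟩ := Finset.exists_subset_card_eq hvt
      have hS'U : insert v S' ⊆ X \ U :=
        Finset.insert_subset hv (hS'.trans (Finset.filter_subset _ _))
      have hdisj : ∀ i < k, Disjoint (insert (b i) (S i)) (insert v S') := by
        intro i hi
        refine Finset.disjoint_left.2 fun z hz hz' => (Finset.mem_sdiff.1 (hS'U hz')).2 ?_
        exact Finset.mem_biUnion.2 ⟨i, Finset.mem_range.2 hi, hz⟩
      have hcase : ∀ i < k + 1, (i < k ∧ Function.update b k v i = b i ∧
          Function.update S k S' i = S i) ∨ (i = k ∧ Function.update b k v i = v ∧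
            Function.update S k S' i = S') := by
        intro i hi
        by_cases hik : i = k
        · subst hik
          right
          simp
        · left
          exact ⟨by omega, Function.update_of_ne hik _ _, Function.update_of_ne hik _ _⟩
      refine ⟨Function.update b k v, Function.update S k S', ?_, ?_, ?_, ?_⟩
      · intro i hi
        rcases hcase i hi with ⟨h, -, e⟩ | ⟨h, -, e⟩ <;> rw [e]
        · exact h1 i h
        · exact hS'c
      · intro i hi
        rcases hcase i hi with ⟨h, e, e'⟩ | ⟨h, e, e'⟩ <;> rw [e, e']
        · exact h2 i h
        · exact hS'U.trans Finset.sdiff_subset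
      · intro i hi
        rcases hcase i hi with ⟨h, e, e'⟩ | ⟨h, e, e'⟩ <;> rw [e, e']
        · exact h3 i h
        · exact fun w hw => (Finset.mem_filter.1 (hS' hw)).2
      · intro i hi j hj hij
        rcases hcase i hi with ⟨h, e, e'⟩ | ⟨h, e, e'⟩ <;>
          rcases hcase j hj with ⟨h', f, f'⟩ | ⟨h', f, f'⟩ <;> rw [e, e', f, f']
        · exact h4 i h j h' hij
        · exact hdisj i h
        · exact (hdisj j h').symm
        · omega
  obtain ⟨b, S, h1, h2, h3, h4⟩ := key t le_rfl
  choose f hf hfS using fun i : Fin t => exists_enumeration (ι := Fin t) (S i) (by simp [h1])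
  have hfm : ∀ i j : Fin t, f i j ∈ S i := fun i j =>
    hfS i ▸ Finset.mem_image_of_mem _ (Finset.mem_univ _)
  have hsame : ∀ (i j : Fin t) z, z ∈ insert (b i) (S i) → z ∈ insert (b j) (S j) → i = j := by
    intro i j z hi hj
    by_contra hij
    exact Finset.disjoint_left.1 (h4 i i.2 j j.2 fun h => hij (Fin.ext h)) hi hj
  refine ⟨fun i : Fin t => b i, fun x => f x.1 x.2, ?_, ?_, ?_, fun x => h3 _ x.1.2 _ (hfm _ _),
    fun i : Fin t => h2 i i.2 (Finset.mem_insert_self _ _),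
    fun x => h2 _ x.1.2 (Finset.mem_insert_of_mem (hfm _ _))⟩
  · intro i j hij
    exact hsame i j (b i) (Finset.mem_insert_self _ _)
      (by rw [show b i = b j from hij]; exact Finset.mem_insert_self _ _)
  · rintro ⟨i, j⟩ ⟨i', j'⟩ hij
    have hij' : f i j = f i' j' := hij
    obtain rfl := hsame i i' (f i j) (Finset.mem_insert_of_mem (hfm _ _))
      (by rw [hij']; exact Finset.mem_insert_of_mem (hfm _ _))
    rw [hf i hij']
  · rintro i ⟨j, k⟩ hij
    have hij' : b i = f j k := hij
    obtain rfl := hsame i j (b i) (Finset.mem_insert_self _ _)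
      (by rw [hij']; exact Finset.mem_insert_of_mem (hfm _ _))
    exact (h3 i i.2 _ (hfm i k)).ne hij'

end Parts

section Parameters

/-- The lengths of the pieces of the branching paths. -/
lemma exists_path_parameters {κ : Type*} [Fintype κ] {n t N h : ℕ} (hκ : 0 < Fintype.card κ)
    (hN : 1000 * Fintype.card κ ≤ N) (hNn : 1000 * N ≤ n) (ht : 1000 * t ≤ n)
    (hh : 1000 * (Fintype.card κ * (2 * h + 2)) ≤ n) :
    ∃ (s e : κ → ℕ) (T l : ℕ), (∀ k, 1 ≤ s k) ∧ ∑ k, s k = N ∧ (∀ k, 2 * h + 1 ≤ e k) ∧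
      t + ∑ k, (1 + s k * T + e k) = n ∧ 1 ≤ l ∧
      (∀ k, l - 1 ≤ 2 + s k * T + e k ∧ 2 + s k * T + e k ≤ l + 1) ∧ 100 * ∑ k, e k ≤ n ∧
      99 * n ≤ 100 * (N * T) ∧ N * T ≤ n := by
  obtain ⟨s, hs, hsum⟩ := exists_balanced_sum N hκ
  obtain ⟨x, hx, hxsum⟩ := exists_balanced_sum (n - t) hκ
  set m := Fintype.card κ with hm
  set P := N / m with hP
  set l' := (n - t) / m with hl'
  have hP1 : 1000 ≤ P := (Nat.le_div_iff_mul_le hκ).2 hN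
  have hl2 : 2 * h + 2 ≤ l' := (Nat.le_div_iff_mul_le hκ).2 (by rw [mul_comm]; omega)
  set T := (l' - (2 * h + 2)) / (P + 1) with hT
  have hT1 : (P + 1) * T ≤ l' - (2 * h + 2) := Nat.mul_div_le _ _
  have hT2 : l' - (2 * h + 2) < (P + 1) * (T + 1) := Nat.lt_mul_div_succ _ (by omega)
  have hl3 : n - t < m * (l' + 1) := Nat.lt_mul_div_succ _ hκ
  have hPm : m * P ≤ N := Nat.mul_div_le _ _
  have hsT : ∀ k, s k * T ≤ (P + 1) * T := fun k => Nat.mul_le_mul_right _ (hs k).2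
  have hsx : ∀ k, 1 + s k * T + (x k - 1 - s k * T) = x k := by
    intro k
    have := hsT k
    have := (hx k).1
    omega
  have hsum' : ∑ k, (1 + s k * T + (x k - 1 - s k * T)) = n - t := by
    rw [← hxsum]
    exact Finset.sum_congr rfl fun k _ => hsx k
  have hsum'' := hsum'
  rw [Finset.sum_add_distrib, Finset.sum_add_distrib, ← Finset.sum_mul, hsum, Finset.sum_const,
    Finset.card_univ, smul_eq_mul, mul_one, ← hm] at hsum''
  have hNT : 99 * n ≤ 100 * (N * T) := by
    have h1 : m * (l' - (2 * h + 2) + 1) ≤ m * ((P + 1) * (T + 1)) := Nat.mul_le_mul_left _ hT2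
    have h2 : m * (l' + 1) = m * (l' - (2 * h + 2) + 1) + m * (2 * h + 2) := by
      rw [← Nat.mul_add]; congr 1; omega
    have h3 : 1000 * (m * ((P + 1) * (T + 1))) ≤ 1001 * (N * (T + 1)) := by
      calc 1000 * (m * ((P + 1) * (T + 1))) = (1000 * (m * P) + 1000 * m) * (T + 1) := by ring
        _ ≤ (1000 * N + N) * (T + 1) := Nat.mul_le_mul_right _ (by omega)
        _ = 1001 * (N * (T + 1)) := by ring
    have h4 : N * (T + 1) = N * T + N := by ring
    omega
  refine ⟨s, fun k => x k - 1 - s k * T, T, l' + 1, fun k => ?_, hsum, fun k => ?_, ?_, by omega,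
    fun k => ?_, ?_, hNT, ?_⟩
  · have := (hs k).1; omega
  · have := hsT k
    have := (hx k).1
    dsimp only
    omega
  · rw [hsum']; omega
  · have := hsx k
    have := hx k
    dsimp only
    omega
  · dsimp only; omega
  · omega

end Parameters

section Scales

lemma exists_scales {n Λ : ℕ} (hΛ : 100 ≤ Λ) (hn : 10 ^ 7 * Λ ^ 4 ≤ n) (hn2 : n < 2 ^ (Λ + 1)) :
    ∃ q h M s g : ℕ, 1 ≤ h ∧ M ≤ 2 ^ h ∧ 2 ^ h ≤ 2 * M ∧ 10 ^ 4 * M ≤ n ∧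
      n ≤ 10 ^ 4 * (M + 1) ∧ 2 ^ q * (1000 * Λ ^ 3) ≤ n ∧ n < 2 ^ q * (2000 * Λ ^ 3) ∧
      2 ^ q * s ≤ n ∧ n < 2 ^ q * (s + 1) ∧ s + 1 ≤ 2000 * Λ ^ 3 ∧ 2 + 3 * g ≤ s ∧
      s + 1 ≤ 5 * g ∧ 2 * q * switchLength h + (2 * h + 2) ≤ 6 * Λ ^ 3 := by
  have hc : 100 * Λ ^ 2 ≤ Λ ^ 3 := by
    rw [pow_succ' Λ 2]; exact Nat.mul_le_mul_right _ hΛ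
  have hc2 : 100 * Λ ≤ Λ ^ 2 := by
    rw [pow_two]; exact Nat.mul_le_mul_right _ hΛ
  have hc3 : 100 * Λ ^ 3 ≤ Λ ^ 4 := by
    rw [pow_succ' Λ 3]; exact Nat.mul_le_mul_right _ hΛ
  set c := Λ ^ 3 with hcdef
  have hdiv : n / (1000 * c) ≠ 0 := by
    rw [Nat.div_ne_zero_iff]
    omega
  set q := Nat.log 2 (n / (1000 * c)) with hq
  have hq1 : 2 ^ q * (1000 * c) ≤ n :=
    (Nat.le_div_iff_mul_le (by omega)).1 (Nat.pow_log_le_self 2 hdiv)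
  have hq2 : n < 2 ^ q * (2000 * c) := by
    have := (Nat.div_lt_iff_lt_mul (by omega)).1 (Nat.lt_pow_succ_log_self one_lt_two
      (n / (1000 * c)))
    rw [← hq, pow_succ] at this
    calc n < 2 ^ q * 2 * (1000 * c) := this
      _ = 2 ^ q * (2000 * c) := by ring
  have hqn : 2 ^ q ≤ n := le_trans (Nat.le_mul_of_pos_right _ (by omega)) hq1
  have hqΛ : q ≤ Λ := by
    have := (Nat.pow_lt_pow_iff_right one_lt_two).1 (hqn.trans_lt hn2)
    omega
  set M := n / 10 ^ 4 with hM
  have hM1 : 2 ≤ M := by omega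
  set h := Nat.clog 2 M with hh
  have hh1 : 1 ≤ h := Nat.clog_pos one_lt_two hM1
  have hh2 : M ≤ 2 ^ h := Nat.le_pow_clog one_lt_two M
  have hh3 : 2 ^ h ≤ 2 * M := by
    have := Nat.pow_pred_clog_lt_self one_lt_two (x := M) (by omega)
    rw [← hh] at this
    calc 2 ^ h = 2 * 2 ^ (h - 1) := by rw [← pow_succ']; congr 1; omega
      _ ≤ 2 * M := Nat.mul_le_mul_left _ (by simpa using this.le)
  have hhΛ : h ≤ Λ := by
    have := (Nat.pow_lt_pow_iff_right one_lt_two).1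
      ((hh3.trans (by omega : 2 * M ≤ n)).trans_lt hn2)
    omega
  set s := n / 2 ^ q with hs
  have hqpos : 0 < 2 ^ q := by positivity
  have hs1 : 2 ^ q * s ≤ n := Nat.mul_div_le _ _
  have hs2 : n < 2 ^ q * (s + 1) := Nat.lt_mul_div_succ _ hqpos
  have hs3 : s < 2000 * c := (Nat.div_lt_iff_lt_mul hqpos).2 (by rwa [mul_comm])
  have hs4 : 1000 * c ≤ s := (Nat.le_div_iff_mul_le hqpos).2 (by rwa [mul_comm])
  refine ⟨q, h, M, s, s / 4, hh1, hh2, hh3, Nat.mul_div_le _ _, by omega, hq1, hq2, hs1, hs2, hs3,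
    by omega, by omega, ?_⟩
  have h1 : switchLength h ≤ 2 * Λ ^ 2 + 2 * Λ + 1 := by
    calc switchLength h ≤ Λ * (2 * Λ + 2) + 1 := by rw [switchLength]; gcongr
      _ = 2 * Λ ^ 2 + 2 * Λ + 1 := by ring
  have h2 : 2 * q * switchLength h ≤ 5 * c := by
    calc 2 * q * switchLength h ≤ 2 * Λ * (2 * Λ ^ 2 + 2 * Λ + 1) := by gcongr
      _ = 4 * c + 4 * Λ ^ 2 + 2 * Λ := by rw [hcdef]; ring
      _ ≤ 5 * c := by omega
  omega

end Scales

section Partition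

variable {V : Type*} [Fintype V] [DecidableEq V] {G : SimpleGraph V} [DecidableRel G.Adj]

/-- Degree-preserving partitions into equal parts, indexed by natural numbers. -/
lemma exists_rich_parts {N s d : ℕ} (hdeg : ∀ v, d ≤ G.degree v) (hlo : N * s ≤ Fintype.card V)
    (hhi : Fintype.card V ≤ N * (s + 1))
    (hbig : (Fintype.card V : ℝ) * s < Real.exp (d / (4 * (s + 1)))) :
    ∃ P : ℕ → Finset V, (∀ j < s, (P j).card = N) ∧ (∀ i j, i ≠ j → Disjoint (P i) (P j)) ∧
      ∀ j < s, Rich G (d / (4 * (s + 1))) (P j) := by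
  obtain ⟨P, -, h1, h2, h3⟩ := exists_degree_preserving_parts G Finset.univ (N := N) (s := s) hlo hhi
    d (fun v => by
      rw [← neighborFinset_eq_filter, card_neighborFinset_eq_degree]
      exact_mod_cast hdeg v) hbig
  refine ⟨fun j => if h : j < s then P ⟨j, h⟩ else ∅, fun j hj => ?_, fun i j hij => ?_,
    fun j hj v => ?_⟩
  · simpa [hj] using h1 ⟨j, hj⟩
  · dsimp only
    split_ifs
    · exact h2 _ _ (by simpa using hij)
    all_goals simp
  · simpa [hj] using h3 v ⟨j, hj⟩

end Partition

section SubdivisionParameters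

/-- All integer parameters of the construction. -/
lemma exists_subdivision_parameters {n t Λ : ℕ} (hΛ : 100 ≤ Λ) (hn : 10 ^ 7 * Λ ^ 4 ≤ n)
    (hn2 : n < 2 ^ (Λ + 1)) (ht : 2 ≤ t) (htn : 2 * 10 ^ 6 * t ^ 2 * Λ ^ 3 ≤ n) :
    ∃ (q h M s g r T l : ℕ) (S e : BranchPair t → ℕ), 1 ≤ h ∧ M ≤ 2 ^ h ∧ 10 ^ 4 * M ≤ n ∧
      n ≤ 10 ^ 4 * (M + 1) ∧ 2 ^ q * s ≤ n ∧ n < 2 ^ q * (s + 1) ∧ s + 1 ≤ 2000 * Λ ^ 3 ∧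
      2 + 3 * g ≤ s ∧ s + 1 ≤ 5 * g ∧ n < 5 * (g * 2 ^ q) ∧ r + 1 ≤ s ∧ (∀ k, 1 ≤ S k) ∧
      ∑ k, S k = 2 ^ q ∧ (∀ k, 2 * h + 1 ≤ e k) ∧
      T = 2 * q * switchLength h + (2 * h + 1) + (r + 1) ∧
      ∑ k, e k + 2 ^ q * (2 * q * switchLength h) + 2 ^ q * (2 * h + 1) + spareRoom 10 M h + 1 ≤
        g * 2 ^ q ∧
      t + ∑ k, (1 + S k * T + e k) = n ∧ 1 ≤ l ∧
      ∀ k, l - 1 ≤ 2 + S k * T + e k ∧ 2 + S k * T + e k ≤ l + 1 := by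
  obtain ⟨q, h, M, s, g, hh, hM, hM2, hMn, hnM, hqn, hnq, hsn, hns, hs, hg, hg5, hL⟩ :=
    exists_scales hΛ hn hn2
  generalize hN : 2 ^ q = N at *
  have hc : 10 ^ 6 ≤ Λ ^ 3 := by
    calc 10 ^ 6 = 100 ^ 3 := by norm_num
      _ ≤ Λ ^ 3 := by gcongr
  have htN : 1000 * t ^ 2 ≤ N := by
    by_contra! hcon
    have := hnq.trans_le (Nat.mul_le_mul_right (2000 * Λ ^ 3) hcon.le)
    nlinarith
  have hκ : 0 < Fintype.card (BranchPair t) :=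
    Fintype.card_pos_iff.2 ⟨⟨⟨⟨0, by omega⟩, ⟨1, by omega⟩⟩, by simp⟩⟩
  have hκ2 : Fintype.card (BranchPair t) ≤ t ^ 2 := by
    refine (Fintype.card_subtype_le _).trans ?_
    simp [pow_two]
  have hNL : N * (2 * q * switchLength h + (2 * h + 2)) * 1000 ≤ 6 * n := by
    calc _ ≤ N * (6 * Λ ^ 3) * 1000 := by gcongr
      _ = 6 * (N * (1000 * Λ ^ 3)) := by ring
      _ ≤ 6 * n := by gcongr
  have hNL' : N * (2 * q * switchLength h + (2 * h + 2)) =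
      N * (2 * q * switchLength h) + N * (2 * h + 1) + N := by ring
  have hNn : 1000 * N ≤ n := by
    refine le_trans ?_ hqn
    nlinarith
  obtain ⟨S, e, T, l, hS, hSsum, he, hcount, hl, hbal, hesum, hT1, hT2⟩ :=
    exists_path_parameters (n := n) (t := t) (N := N) (h := h) hκ (by omega) hNn
      (by nlinarith) (by
        calc 1000 * (Fintype.card (BranchPair t) * (2 * h + 2))
            = 1000 * Fintype.card (BranchPair t) * (2 * h + 2) := by ring
          _ ≤ N * (2 * h + 2) := Nat.mul_le_mul_right _ (by omega)
          _ ≤ N * (2 * q * switchLength h + (2 * h + 2)) := Nat.mul_le_mul_left _ (by omega)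
          _ ≤ n := by omega)
  have hLT : 2 * q * switchLength h + (2 * h + 2) ≤ T := by
    by_contra! hcon
    have := Nat.mul_le_mul_left N hcon.le
    omega
  have hTs : T < s + 1 := by
    by_contra! hcon
    have := Nat.mul_le_mul_left N hcon
    omega
  obtain ⟨r, hr⟩ : ∃ r, T = 2 * q * switchLength h + (2 * h + 1) + (r + 1) :=
    ⟨T - (2 * q * switchLength h + (2 * h + 2)), by omega⟩
  have hrs : r + 1 ≤ s := by omega
  have hgN : n < 5 * (g * N) := by
    calc n < N * (s + 1) := hns
      _ ≤ N * (5 * g) := Nat.mul_le_mul_left _ hg5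
      _ = 5 * (g * N) := by ring
  refine ⟨q, h, M, s, g, r, T, l, S, e, hh, hM, hMn, hnM, hN ▸ hsn, hN ▸ hns, hs, hg, hg5, hN ▸ hgN,
    hrs, hS, hN ▸ hSsum, he, hr, ?_, hcount, hl, hbal⟩
  rw [hN, spareRoom]
  omega

end SubdivisionParameters

section Estimates

lemma exists_richness {n d s g r Λ : ℕ} {lam : ℝ} (hlam : 0 < lam) (hdn : d < n) (hΛ : 100 ≤ Λ)
    (hn2 : n < 2 ^ (Λ + 1)) (hlamd : 10 ^ 7 * (Λ : ℝ) ^ 3 * lam ≤ d) (hd : 10 ^ 7 * Λ ^ 4 ≤ d)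
    (hsn : s ≤ n) (hs : s + 1 ≤ 2000 * Λ ^ 3) (hg5 : s + 1 ≤ 5 * g) (hrs : r + 1 ≤ s) :
    ∃ δ : ℝ, 2 * lam + (d : ℝ) / n < δ ∧ δ ≤ d / (4 * ((s : ℝ) + 1)) ∧
      (n : ℝ) * s < Real.exp δ ∧ (d : ℝ) / 20 ≤ g * (d / (4 * ((s : ℝ) + 1))) ∧
      4 * ((r : ℝ) + 1) * δ ≤ d / 20 := by
  have hn0 : (0 : ℝ) < n := by exact_mod_cast (by omega : 0 < n)
  have hd0 : (0 : ℝ) < d := by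
    have : 0 < Λ := by omega
    exact_mod_cast lt_of_lt_of_le (by positivity) hd
  have hs' : (s : ℝ) + 1 ≤ 2000 * (Λ : ℝ) ^ 3 := by exact_mod_cast hs
  have hd' : (10 : ℝ) ^ 7 * (Λ : ℝ) ^ 4 ≤ d := by exact_mod_cast hd
  have hΛ' : (100 : ℝ) ≤ Λ := by exact_mod_cast hΛ
  have hdn' : (d : ℝ) < n := by exact_mod_cast hdn
  have hs0 : (0 : ℝ) < 4 * ((s : ℝ) + 1) := by positivity
  have hp1 : (d : ℝ) / n ≤ 1 := (div_le_one hn0).2 hdn'.le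
  set δ : ℝ := d / (160000 * (Λ : ℝ) ^ 3) with hδ
  have hc0 : (0 : ℝ) < 160000 * (Λ : ℝ) ^ 3 := by positivity
  have hδΛ : 62 * (Λ : ℝ) ≤ δ := by
    rw [hδ, le_div_iff₀ hc0]
    calc 62 * (Λ : ℝ) * (160000 * (Λ : ℝ) ^ 3) = 9920000 * (Λ : ℝ) ^ 4 := by ring
      _ ≤ 10 ^ 7 * (Λ : ℝ) ^ 4 := by
        have : 0 < (Λ : ℝ) ^ 4 := by positivity
        nlinarith
      _ ≤ d := hd'
  have hδlam : 60 * lam ≤ δ := by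
    rw [hδ, le_div_iff₀ hc0]
    refine le_trans ?_ hlamd
    have : 0 < (Λ : ℝ) ^ 3 * lam := by positivity
    nlinarith
  set δ₀ : ℝ := d / (4 * ((s : ℝ) + 1)) with hδ₀
  have hδδ₀ : δ ≤ δ₀ := by
    rw [hδ, hδ₀]
    exact div_le_div_of_nonneg_left hd0.le hs0 (by linarith)
  have hexp : (n : ℝ) * s < Real.exp δ := by
    have h1 : (n : ℝ) < Real.exp (2 * Λ) := by
      calc (n : ℝ) < 2 ^ (Λ + 1) := by exact_mod_cast hn2
        _ ≤ Real.exp 1 ^ (Λ + 1) := by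
          have := Real.add_one_le_exp (1 : ℝ)
          gcongr
          linarith
        _ = Real.exp (Λ + 1) := by rw [← Real.exp_nat_mul]; push_cast; simp
        _ ≤ Real.exp (2 * Λ) := Real.exp_le_exp.2 (by linarith)
    have h2 : (s : ℝ) ≤ n := by exact_mod_cast hsn
    calc (n : ℝ) * s ≤ n * n := by gcongr
      _ < Real.exp (2 * Λ) * Real.exp (2 * Λ) := by gcongr
      _ = Real.exp (4 * Λ) := by rw [← Real.exp_add]; congr 1; ring
      _ ≤ Real.exp δ := Real.exp_le_exp.2 (by linarith)
  have hgδ : (d : ℝ) / 20 ≤ g * δ₀ := by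
    have : (s : ℝ) + 1 ≤ 5 * g := by exact_mod_cast hg5
    rw [hδ₀, mul_div_assoc', div_le_div_iff₀ (by norm_num) hs0]
    nlinarith
  have hrδ : 4 * ((r : ℝ) + 1) * δ ≤ d / 20 := by
    have h1 : (r : ℝ) + 1 ≤ 2000 * (Λ : ℝ) ^ 3 := by
      have : (r : ℝ) + 1 ≤ s := by exact_mod_cast hrs
      linarith
    rw [hδ, mul_div_assoc', div_le_div_iff₀ hc0 (by norm_num)]
    nlinarith
  exact ⟨δ, by linarith, hδδ₀, hexp, hgδ, hrδ⟩

lemma reservoir_estimates {n M : ℕ} {d lam : ℝ} (hd : 0 < d) (hn : 10 ^ 9 ≤ n) (hlam : 0 < lam)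
    (hlamd : 10 ^ 13 * lam ≤ d) (hMn : 10 ^ 4 * M ≤ n) (hnM : n ≤ 10 ^ 4 * (M + 1)) :
    1 ≤ M ∧ lam ≤ d / n * (M - 1) ∧ d / n * (2 * 10 * M) + lam * √10 < d / 20 := by
  have hMn' : (10 : ℝ) ^ 4 * M ≤ n := by exact_mod_cast hMn
  have hnM' : (n : ℝ) ≤ 10 ^ 4 * (M + 1) := by exact_mod_cast hnM
  have hn9 : (10 : ℝ) ^ 9 ≤ n := by exact_mod_cast hn
  have hn0 : (0 : ℝ) < n := by linarith
  refine ⟨by omega, ?_, ?_⟩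
  · calc lam ≤ d / (2 * 10 ^ 4) := by linarith
      _ = d / n * (n / (2 * 10 ^ 4)) := by field_simp
      _ ≤ d / n * (M - 1) := by
        gcongr
        linarith
  · have h1 : d / n * (2 * 10 * M) ≤ d / 500 := by
      calc d / n * (2 * 10 * M) = d / n * (10 ^ 4 * M) / 500 := by ring
        _ ≤ d / n * n / 500 := by gcongr
        _ = d / 500 := by field_simp
    have h2 : √10 ≤ (4 : ℝ) := by
      rw [Real.sqrt_le_left (by norm_num)]
      norm_num
    have h3 : lam * √10 ≤ lam * 4 := by gcongr
    linarith

end Estimates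

section Main

variable {V : Type*} [Fintype V] [DecidableEq V] {G : SimpleGraph V} [DecidableRel G.Adj]

theorem Jumbled.hasSpanningNearlyBalancedKSubdivision {d t Λ : ℕ} {lam : ℝ}
    (hreg : G.IsRegularOfDegree d) (hJ : Jumbled G ((d : ℝ) / Fintype.card V) lam) (hlam : 0 < lam)
    (hΛ : 100 ≤ Λ) (hn2 : Fintype.card V < 2 ^ (Λ + 1)) (hlamd : 10 ^ 7 * (Λ : ℝ) ^ 3 * lam ≤ d)
    (hd : 10 ^ 7 * Λ ^ 4 ≤ d) (ht : 2 ≤ t) (htd : 100 * t ≤ d)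
    (htn : 2 * 10 ^ 6 * t ^ 2 * Λ ^ 3 ≤ Fintype.card V) :
    HasSpanningNearlyBalancedKSubdivision G t := by
  set n := Fintype.card V with hn
  have hV : Nonempty V := Fintype.card_pos_iff.1 (lt_of_lt_of_le (by positivity) htn)
  have hdn : d < n := by
    obtain ⟨v⟩ := hV
    exact (hreg v) ▸ G.degree_lt_card_verts v
  obtain ⟨q, h, M, s, g, r, T, l, S, e, hh, hM, hMn, hnM, hsn, hns, hs, hg, hg5, hgN, hrs, hS, hSsum,
    he, hr, hroom, hcount, hl, hbal⟩ :=
    exists_subdivision_parameters hΛ (hd.trans hdn.le) hn2 ht htn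
  obtain ⟨δ, hδlam, hδδ₀, hexp, hgδ, hrδ⟩ := exists_richness hlam hdn hΛ hn2 hlamd hd
    (le_trans (Nat.le_mul_of_pos_left _ (by positivity)) hsn) hs hg5 hrs
  have hn0 : (0 : ℝ) < n := by exact_mod_cast (by omega : 0 < n)
  have hd0 : (0 : ℝ) < d := by
    have : 0 < Λ := by omega
    exact_mod_cast lt_of_lt_of_le (by positivity) hd
  have hp0 : 0 < (d : ℝ) / n := div_pos hd0 hn0
  have hΛ' : (100 : ℝ) ≤ Λ := by exact_mod_cast hΛ
  have hn9 : 10 ^ 9 ≤ n := by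
    refine le_trans ?_ (hd.trans hdn.le)
    calc 10 ^ 9 = 10 ^ 7 * 100 := by norm_num
      _ ≤ 10 ^ 7 * Λ ^ 4 := Nat.mul_le_mul_left _ (hΛ.trans (Nat.le_self_pow (by norm_num) _))
  have hlamd' : 10 ^ 13 * lam ≤ d := by
    refine le_trans ?_ hlamd
    have : (100 : ℝ) ^ 3 ≤ (Λ : ℝ) ^ 3 := by gcongr
    nlinarith
  -- the partition
  obtain ⟨P, hPc, hPd, hPr⟩ := exists_rich_parts (N := 2 ^ q) (s := s) (fun v => (hreg v).ge) hsn hns.le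
    (hexp.trans_le (Real.exp_le_exp.2 hδδ₀))
  have hdisj : ∀ I J : Finset ℕ, Disjoint I J → Disjoint (I.biUnion P) (J.biUnion P) := by
    intro I J hIJ
    rw [Finset.disjoint_biUnion_left]
    intro i hi
    rw [Finset.disjoint_biUnion_right]
    exact fun j hj => hPd i j (Finset.disjoint_iff_ne.1 hIJ i hi j hj)
  have hcard : ∀ a, a + g ≤ s → ((Finset.Ico a (a + g)).biUnion P).card = g * 2 ^ q := by
    intro a ha
    rw [Finset.card_biUnion fun i _ j _ hij => hPd i j hij, Finset.sum_congr rfl fun i hi =>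
      hPc i (by rw [Finset.mem_Ico] at hi; omega)]
    simp
  have hrich : ∀ a, a + g ≤ s → Rich G (d / 20) ((Finset.Ico a (a + g)).biUnion P) := by
    intro a ha
    have := Rich.biUnion (I := Finset.Ico a (a + g))
      (fun i hi => hPr i (by rw [Finset.mem_Ico] at hi; omega)) hPd
    rw [Nat.card_Ico, Nat.add_sub_cancel_left] at this
    exact this.mono hgδ
  set Q := (Finset.Ico 2 (2 + g)).biUnion P with hQ
  set X := (Finset.Ico (2 + g) (2 + g + g)).biUnion P with hX
  set Z := (Finset.Ico (2 + 2 * g) (2 + 2 * g + g)).biUnion P with hZ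
  have hQc : Q.card = g * 2 ^ q := hcard 2 (by omega)
  have hXc : X.card = g * 2 ^ q := hcard _ (by omega)
  have hB : ∀ j, P j = ({j} : Finset ℕ).biUnion P := fun j => (Finset.singleton_biUnion).symm
  have hQB : Disjoint Q (P 0) := by
    rw [hB 0]; exact hdisj _ _ (by simp)
  have hQY : Disjoint Q (P 1) := by
    rw [hB 1]; exact hdisj _ _ (by simp)
  have hZB : Disjoint Z (P 0) := by
    rw [hB 0]; exact hdisj _ _ (by simp)
  have hZY : Disjoint Z (P 1) := by
    rw [hB 1]; exact hdisj _ _ (by simp; omega)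
  have hXB : Disjoint X (P 0) := by
    rw [hB 0]; exact hdisj _ _ (by simp)
  have hXY : Disjoint X (P 1) := by
    rw [hB 1]; exact hdisj _ _ (by simp; omega)
  have hZQ : Disjoint Z Q := hdisj _ _ (Finset.disjoint_left.2 fun i => by
    rw [Finset.mem_Ico, Finset.mem_Ico]; omega)
  have hXQ : Disjoint X Q := hdisj _ _ (Finset.disjoint_left.2 fun i => by
    rw [Finset.mem_Ico, Finset.mem_Ico]; omega)
  have hXZ : Disjoint X Z := hdisj _ _ (Finset.disjoint_left.2 fun i => by
    rw [Finset.mem_Ico, Finset.mem_Ico]; omega)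
  have hXA : ∀ x ∈ X, x ∉ Q ∪ P 0 ∪ P 1 ∪ Z := fun x hx => Finset.disjoint_left.1
    (Finset.disjoint_union_right.2 ⟨Finset.disjoint_union_right.2
      ⟨Finset.disjoint_union_right.2 ⟨hXQ, hXB⟩, hXY⟩, hXZ⟩) hx
  -- the stars
  obtain ⟨b, leaf, hb, hleaf, hbleaf, hadj, hbX, hleafX⟩ :=
    exists_disjoint_stars (G := G) (X := X) (t := t) fun X' _ hX' => by
      have h1 : n ≤ 10 * X'.card := by
        have : t * (t + 1) * 10 ≤ n := by
          refine le_trans ?_ htn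
          have : 1 ≤ Λ ^ 3 := Nat.one_le_pow _ _ (by omega)
          calc t * (t + 1) * 10 ≤ t * (t + t) * 10 := by gcongr; omega
            _ = 20 * t ^ 2 * 1 := by ring
            _ ≤ 2 * 10 ^ 6 * t ^ 2 * Λ ^ 3 := by gcongr; norm_num
        omega
      refine hJ.exists_large_degree (Finset.card_pos.1 (by omega)) ?_
      have h2 : (n : ℝ) ≤ 10 * X'.card := by exact_mod_cast h1
      have h3 : (d : ℝ) / 10 ≤ d / n * X'.card := by
        rw [div_mul_eq_mul_div, div_le_div_iff₀ (by norm_num) hn0]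
        calc (d : ℝ) * n ≤ d * (10 * X'.card) := by gcongr
          _ = d * X'.card * 10 := by ring
      have h4 : 100 * (t : ℝ) ≤ d := by exact_mod_cast htd
      linarith
  -- the reservoir
  obtain ⟨hM1, hjoin', hext'⟩ := reservoir_estimates hd0 hn9 hlam hlamd' hMn hnM
  have hjoin : SetsJoined G M := hJ.setsJoined hp0 hM1 hjoin'
  have hext : Extendable G Q 10 M ∅ fun _ => 10 :=
    hJ.extendable hp0.le hlam.le (hrich 2 (by omega)) (by simpa using hext')
  refine hasSpanningNearlyBalancedKSubdivision_of_reservoir (q := q) (M := M) (h := h) (r := r)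
    (T := T) (Q := Q) (B := P 0) (Y := P 1) (Z := Z) ht hjoin hM hh hext b leaf hb hleaf hbleaf hadj
    (fun i => hXA _ (hbX i)) (fun x => hXA _ (hleafX x)) hQB hQY (hPd 0 1 (by norm_num))
    (Finset.disjoint_union_right.2 ⟨Finset.disjoint_union_right.2 ⟨hZQ, hZB⟩, hZY⟩)
    (hPc 0 (by omega)) (hPc 1 (by omega)) S e hS hSsum he hr ?_ hcount hl hbal ?_
  · rwa [hQc]
  · intro R hZR hRc a ha haB
    have hcι : Fintype.card (Σ k, Fin (S k)) = 2 ^ q := by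
      rw [Fintype.card_sigma, ← hSsum]; simp
    refine hJ.exists_linked_cover hp0 hlam.le hδlam
      (by rw [hcι]; exact hPc 1 (by omega)) ((hPr 1 (by omega)).mono hδδ₀) (by rw [hcι, hRc])
      (((hrich _ (by omega)).subset hZR).mono hrδ) (lt_of_le_of_lt ?_ hexp) a ha ?_
    · have : (r : ℝ) ≤ s := by exact_mod_cast (by omega : r ≤ s)
      gcongr
    · rw [haB]
      exact (hPr 0 (by omega)).mono hδδ₀

end Main

section Bounds

lemma mul_pow_four_le_two_pow {Λ : ℕ} (hΛ : 100 ≤ Λ) : 2 * 10 ^ 7 * Λ ^ 4 ≤ 2 ^ Λ := by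
  induction Λ, hΛ using Nat.le_induction with
  | base => norm_num
  | succ k hk ih =>
    have h : (k + 1) ^ 4 ≤ 2 * k ^ 4 := by
      have h1 : (100 * (k + 1)) ^ 4 ≤ (101 * k) ^ 4 := Nat.pow_le_pow_left (by omega) 4
      rw [mul_pow, mul_pow] at h1
      omega
    rw [pow_succ 2]
    omega

variable {V : Type*} [Fintype V] {G : SimpleGraph V} [DecidableRel G.Adj]

/-- Sparse regular pseudorandom graphs have `d ≤ 4λ²`. -/
lemma Jumbled.degree_le {d : ℕ} {lam : ℝ} [Nonempty V] (hreg : G.IsRegularOfDegree d)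
    (hJ : Jumbled G ((d : ℝ) / Fintype.card V) lam) (hd0 : 0 < d) (hd : 2 * d ≤ Fintype.card V) :
    (d : ℝ) ≤ 4 * lam ^ 2 := by
  obtain ⟨v⟩ := ‹Nonempty V›
  have hn : (0 : ℝ) < Fintype.card V := by exact_mod_cast (by omega : 0 < Fintype.card V)
  have hd0' : (0 : ℝ) < d := by exact_mod_cast hd0
  have hd' : 2 * (d : ℝ) ≤ Fintype.card V := by exact_mod_cast hd
  have hc : (Finset.univ.filter (G.Adj v)).card = d := by
    rw [← neighborFinset_eq_filter, card_neighborFinset_eq_degree, hreg v]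
  have h := (abs_le.1 (hJ {v} (Finset.univ.filter (G.Adj v)))).2
  rw [Finset.sum_singleton, Finset.filter_filter, Finset.card_singleton, Nat.cast_one, mul_one,
    one_mul] at h
  simp only [and_self, hc] at h
  have h1 : (d : ℝ) / Fintype.card V * d ≤ d / 2 := by
    rw [div_mul_eq_mul_div, div_le_div_iff₀ hn (by norm_num)]
    nlinarith
  have h2 : √(d : ℝ) * √d = d := Real.mul_self_sqrt hd0'.le
  have h3 : 0 < √(d : ℝ) := Real.sqrt_pos.2 hd0'
  have h4 : √(d : ℝ) ≤ 2 * lam := by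
    by_contra! hcon
    nlinarith
  nlinarith

end Bounds

/-- Theorem 1.2: there are constants `C > 0` and `c ∈ (0,1]` such that, whenever
`d/λ ≥ C log³ n`, every `(n,d,λ)`-graph contains a spanning nearly-balanced
subdivision of `K_t` for all `2 ≤ t ≤ min{cd, c√(n/log³ n)}`. -/
theorem spanning_nearly_balanced_clique_subdivision_in_pseudorandom :
    ∃ C : ℝ, 0 < C ∧ ∃ c : ℝ, 0 < c ∧ c ≤ 1 ∧
      ∀ (n d : ℕ) (lam : ℝ), 0 < lam →
        ∀ (V : Type) [Fintype V] [DecidableEq V] (G : SimpleGraph V) [DecidableRel G.Adj],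
          IsNDLGraph n d lam G → C * (Real.log n) ^ 3 ≤ (d : ℝ) / lam →
          ∀ t : ℕ, 2 ≤ t → (t : ℝ) ≤ c * d →
            (t : ℝ) ≤ c * Real.sqrt ((n : ℝ) / (Real.log n) ^ 3) →
            HasSpanningNearlyBalancedKSubdivision G t := by
  refine ⟨10 ^ 9, by norm_num, 1 / 10 ^ 20, by norm_num, by norm_num, ?_⟩
  intro n d lam hlam V _ _ G _ hG hdlam t ht htd htn
  have ht' : (2 : ℝ) ≤ t := by exact_mod_cast ht
  have hn2 : 2 ≤ n := by
    by_contra! hcon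
    have : Real.log n = 0 := by interval_cases n <;> simp
    rw [this] at htn
    norm_num at htn
    omega
  have hn2' : (2 : ℝ) ≤ n := by exact_mod_cast hn2
  set x := Real.log n with hx
  have hx2 : (0.69 : ℝ) ≤ x := by
    have := Real.log_two_gt_d9
    have := Real.log_le_log (by norm_num) hn2'
    linarith
  have hx3 : (0.3 : ℝ) ≤ x ^ 3 := by
    calc (0.3 : ℝ) ≤ 0.69 ^ 3 := by norm_num
      _ ≤ x ^ 3 := by gcongr
  have hx0 : 0 < x ^ 3 := by linarith
  rw [le_div_iff₀ hlam] at hdlam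
  have hlamd : lam < d := by nlinarith
  have htx : (10 : ℝ) ^ 40 * ((t : ℝ) ^ 2 * x ^ 3) ≤ n := by
    have h1 : (10 : ℝ) ^ 20 * t ≤ √(n / x ^ 3) := by linarith
    rw [Real.le_sqrt (by positivity) (by positivity), le_div_iff₀ hx0] at h1
    calc (10 : ℝ) ^ 40 * ((t : ℝ) ^ 2 * x ^ 3) = (10 ^ 20 * (t : ℝ)) ^ 2 * x ^ 3 := by ring
      _ ≤ (n : ℝ) := h1
  have hn40 : (10 : ℝ) ^ 40 ≤ n := by
    refine le_trans ?_ htx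
    have : (4 : ℝ) ≤ t ^ 2 := by nlinarith
    nlinarith
  set Λ := Nat.log 2 n with hΛ
  have hΛn : 2 ^ Λ ≤ n := Nat.pow_log_le_self 2 (by omega)
  have hΛ100 : 100 ≤ Λ := by
    refine Nat.le_log_of_pow_le one_lt_two ?_
    have : (2 : ℝ) ^ 100 ≤ n := le_trans (by norm_num) hn40
    exact_mod_cast this
  have hΛ100' : (100 : ℝ) ≤ Λ := by exact_mod_cast hΛ100
  have hΛx : (Λ : ℝ) ≤ 3 / 2 * x := by
    have h1 : (Λ : ℝ) * Real.log 2 ≤ x := by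
      rw [← Real.log_pow]
      exact Real.log_le_log (by positivity) (by exact_mod_cast hΛn)
    have := Real.log_two_gt_d9
    nlinarith
  have hΛ3 : (Λ : ℝ) ^ 3 ≤ 4 * x ^ 3 := by
    calc (Λ : ℝ) ^ 3 ≤ (3 / 2 * x) ^ 3 := by gcongr
      _ ≤ 4 * x ^ 3 := by nlinarith
  have hJ := hG.jumbled hlamd hlam
  obtain ⟨rfl, hreg, -⟩ := hG
  have hV : Nonempty V := Fintype.card_pos_iff.1 (by omega)
  have hd0 : (0 : ℝ) < d := hlam.trans hlamd
  refine hJ.hasSpanningNearlyBalancedKSubdivision hreg hlam hΛ100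
    (Nat.lt_pow_succ_log_self one_lt_two _) ?_ ?_ ht ?_ ?_
  · calc 10 ^ 7 * (Λ : ℝ) ^ 3 * lam ≤ 10 ^ 7 * (4 * x ^ 3) * lam := by gcongr
      _ ≤ 10 ^ 9 * x ^ 3 * lam := by
        have : 0 < x ^ 3 * lam := by positivity
        nlinarith
      _ ≤ d := hdlam
  · have hpow := mul_pow_four_le_two_pow hΛ100
    rcases le_or_gt (2 * d) (Fintype.card V) with hd | hd
    · have h1 := hJ.degree_le hreg (by exact_mod_cast hd0) hd
      have hx66 : 1 ≤ x := by linarith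
      have h2 : (10 ^ 9 * x ^ 3) ^ 2 * d ≤ 4 * (d : ℝ) ^ 2 := by
        calc (10 ^ 9 * x ^ 3) ^ 2 * d ≤ (10 ^ 9 * x ^ 3) ^ 2 * (4 * lam ^ 2) := by gcongr
          _ = 4 * (10 ^ 9 * x ^ 3 * lam) ^ 2 := by ring
          _ ≤ 4 * (d : ℝ) ^ 2 := by gcongr
      have h3 : (10 ^ 9 * x ^ 3) ^ 2 ≤ 4 * (d : ℝ) := by
        refine le_of_mul_le_mul_right ?_ hd0
        linarith
      have h4 : (10 : ℝ) ^ 7 * (Λ : ℝ) ^ 4 ≤ d := by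
        have h5 : x ^ 4 ≤ x ^ 6 := pow_le_pow_right₀ hx66 (by norm_num)
        have h6 : (Λ : ℝ) ^ 4 ≤ 6 * x ^ 4 := by
          calc (Λ : ℝ) ^ 4 ≤ (3 / 2 * x) ^ 4 := by gcongr
            _ = 81 / 16 * x ^ 4 := by ring
            _ ≤ 6 * x ^ 4 := by
              have : 0 ≤ x ^ 4 := by positivity
              linarith
        have h7 : (10 ^ 9 * x ^ 3) ^ 2 = 10 ^ 18 * x ^ 6 := by ring
        have h8 : 0 ≤ x ^ 4 := by positivity
        linarith
      exact_mod_cast h4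
    · omega
  · have : 100 * (t : ℝ) ≤ d := by linarith
    exact_mod_cast this
  · have : 2 * 10 ^ 6 * (t : ℝ) ^ 2 * (Λ : ℝ) ^ 3 ≤ Fintype.card V := by
      calc 2 * 10 ^ 6 * (t : ℝ) ^ 2 * (Λ : ℝ) ^ 3 ≤ 2 * 10 ^ 6 * (t : ℝ) ^ 2 * (4 * x ^ 3) := by gcongr
        _ ≤ 10 ^ 40 * (t ^ 2 * x ^ 3) := by
          have : 0 ≤ (t : ℝ) ^ 2 * x ^ 3 := by positivity
          nlinarith
        _ ≤ _ := htx
    exact_mod_cast this
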